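/- Suppose f₁, f₂ : ℝ → ℝ are real-analytic and T-periodic for some T > 0, f₁(t) < f₂(t) for all t, and g ≥ 0. Then every trajectory of the Fermi–Ulam model in the external field has bounded velocity: sup_n vₙ < ∞. -/

import Mathlib

open Filter Topology

/-- A trajectory of the Fermi–Ulam model in an external field with downward
acceleration `g`, lower plate `f₁` and upper plate `f₂`: `t n` are the collision
times with the lower plate, `v n > 0` the velocities just after those collisions,
`tt n` the collision times with the upper plate and `vv n < 0` the velocities
just after those collisions. -/
def IsFUTrajectory (g : ℝ) (f₁ f₂ : ℝ → ℝ) (t v tt vv : ℕ → ℝ) : Prop :=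
  ∀ n : ℕ,
    0 < v n ∧ vv n < 0 ∧
    t n < tt n ∧ tt n < t (n + 1) ∧
    f₂ (tt n) - f₁ (t n) = v n * (tt n - t n) - g / 2 * (tt n - t n) ^ 2 ∧
    (∀ s : ℝ, t n < s →
      f₂ s - f₁ (t n) = v n * (s - t n) - g / 2 * (s - t n) ^ 2 → tt n ≤ s) ∧
    vv n = -(v n) + g * (tt n - t n) + 2 * deriv f₂ (tt n) ∧
    f₂ (tt n) - f₁ (t (n + 1)) =
      -(vv n) * (t (n + 1) - tt n) + g / 2 * (t (n + 1) - tt n) ^ 2 ∧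
    (∀ s : ℝ, tt n < s →
      f₂ (tt n) - f₁ s = -(vv n) * (s - tt n) + g / 2 * (s - tt n) ^ 2 →
      t (n + 1) ≤ s) ∧
    v (n + 1) = v n + g * (t (n + 1) - 2 * tt n + t n)
      + 2 * deriv f₁ (t (n + 1)) - 2 * deriv f₂ (tt n)

/-!
In a time rescaled by the inverse square of the distance of the plates, the action of one flight is
a generating function `h(τ, σ)` which differs from `1 / (σ - τ)` by a bounded analytic function near
the diagonal: fast motion is a perturbation of an integrable twist. An invariant curve is a pair of
analytic degree-one lifts `x`, `y` which make the discrete action stationary,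
`∂₁h(x θ, y θ) = ∂₁h(x θ, y (θ - ω))` and `∂₂h(x θ, y θ) = ∂₂h(x (θ + ω), y θ)`.
With the Diophantine rotation numbers `ω = 1 / (N + √2)` such curves are found by Newton's method on
shrinking complex strips, following Levi and Moser: differentiating along `x` and `y` factors the
linearized equations into first-order difference equations, with an error quadratic in the defect.

As `ω → 0` the curves consist of arbitrarily fast motions. For short flights the velocities at both
ends are monotone functions of the collision times, so a trajectory which starts below a fast curve
stays below it: the curve is a barrier for `vₙ`.
-/

namespace FermiUlam

open Complex
open scoped ComplexConjugate Real

/-! ### Periodic functions on a strip -/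

/-- The open horizontal strip `|Im z| < r`. -/
def strip (r : ℝ) : Set ℂ := {z | |z.im| < r}

section Strip

variable {r s : ℝ} {z w : ℂ}

lemma mem_strip : z ∈ strip r ↔ |z.im| < r := Iff.rfl

lemma isOpen_strip (r : ℝ) : IsOpen (strip r) :=
  isOpen_lt (continuous_abs.comp continuous_im) continuous_const

lemma strip_mem_nhds (hz : z ∈ strip r) : strip r ∈ 𝓝 z := (isOpen_strip r).mem_nhds hz

lemma strip_mono (h : r ≤ s) : strip r ⊆ strip s := fun _ hz ↦ lt_of_lt_of_le hz h

lemma convex_strip (r : ℝ) : Convex ℝ (strip r) := by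
  have : strip r = Complex.imLm ⁻¹' Set.Ioo (-r) r := by ext z; simp [strip, abs_lt]
  exact this ▸ (convex_Ioo _ _).linear_preimage _

lemma ofReal_mem_strip (hr : 0 < r) (x : ℝ) : (x : ℂ) ∈ strip r := by simp [strip, hr]

lemma add_ofReal_mem_strip (hz : z ∈ strip r) (a : ℝ) : z + a ∈ strip r := by
  simpa [strip] using hz

lemma add_one_mem_strip (hz : z ∈ strip r) : z + 1 ∈ strip r := by
  simpa using add_ofReal_mem_strip hz 1

lemma sub_ofReal_mem_strip (hz : z ∈ strip r) (a : ℝ) : z - a ∈ strip r := by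
  simpa [strip] using hz

lemma conj_mem_strip (hz : z ∈ strip r) : conj z ∈ strip r := by simpa [strip] using hz

lemma add_mem_strip (hz : z ∈ strip r) (hw : ‖w‖ ≤ s) : z + w ∈ strip (r + s) := by
  rw [mem_strip] at hz ⊢
  have him := (abs_im_le_norm w).trans hw
  have hadd := abs_add_le z.im w.im
  rw [add_im]
  linarith

lemma closedBall_subset_strip (hz : z ∈ strip (r - s)) : Metric.closedBall z s ⊆ strip r := by
  intro w hw
  simpa using add_mem_strip hz (w := w - z) (s := s) (by simpa [dist_eq_norm] using hw)

lemma norm_deriv_le_of_closedBall_subset {U : Set ℂ} {f : ℂ → ℂ} {ρ M : ℝ} (hρ : 0 < ρ)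
    (hball : Metric.closedBall z ρ ⊆ U) (hf : DifferentiableOn ℂ f U) (hM : ∀ w ∈ U, ‖f w‖ ≤ M) :
    ‖deriv f z‖ ≤ M / ρ := by
  refine norm_deriv_le_of_forall_mem_sphere_norm_le hρ (DifferentiableOn.diffContOnCl ?_)
    fun w hw ↦ hM w (hball (Metric.sphere_subset_closedBall hw))
  rw [closure_ball _ hρ.ne']
  exact hf.mono hball

lemma norm_deriv_le_of_strip {f : ℂ → ℂ} {κ M : ℝ} (hκ : 0 < κ)
    (hf : DifferentiableOn ℂ f (strip r)) (hM : ∀ z ∈ strip r, ‖f z‖ ≤ M)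
    (hz : z ∈ strip (r - κ)) : ‖deriv f z‖ ≤ M / κ :=
  norm_deriv_le_of_closedBall_subset hκ (closedBall_subset_strip hz) hf hM

lemma eqOn_of_eq_on_real {U : Set ℂ} {f g : ℂ → ℂ} {a : ℝ} (hU : IsOpen U)
    (hconn : IsPreconnected U) (ha : (a : ℂ) ∈ U) (hf : DifferentiableOn ℂ f U)
    (hg : DifferentiableOn ℂ g U) (h : ∀ x : ℝ, (x : ℂ) ∈ U → f x = g x) : Set.EqOn f g U := by
  refine AnalyticOnNhd.eqOn_of_preconnected_of_frequently_eq (𝕜 := ℂ) (hf.analyticOnNhd hU)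
    (hg.analyticOnNhd hU) hconn ha ?_
  have htend : Tendsto ((↑) : ℝ → ℂ) (𝓝[≠] a) (𝓝[≠] (a : ℂ)) :=
    continuous_ofReal.continuousWithinAt.tendsto_nhdsWithin fun x hx ↦ by simpa using hx
  refine htend.frequently (Eventually.frequently ?_)
  filter_upwards [nhdsWithin_le_nhds (continuous_ofReal.continuousAt (hU.mem_nhds ha))] using h

lemma eq_on_strip_of_eq_on_real {f g : ℂ → ℂ} (hr : 0 < r) (hf : DifferentiableOn ℂ f (strip r))
    (hg : DifferentiableOn ℂ g (strip r)) (h : ∀ x : ℝ, f x = g x) (hz : z ∈ strip r) :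
    f z = g z :=
  eqOn_of_eq_on_real (isOpen_strip r) (convex_strip r).isPreconnected (ofReal_mem_strip hr 0)
    hf hg (fun x _ ↦ h x) hz

end Strip

/-- Holomorphic functions on a strip which are one-periodic and real on the real axis. -/
structure StripPeriodic (r : ℝ) (f : ℂ → ℂ) : Prop where
  differentiableOn : DifferentiableOn ℂ f (strip r)
  map_add_one : ∀ z ∈ strip r, f (z + 1) = f z
  map_conj : ∀ z ∈ strip r, f (conj z) = conj (f z)

namespace StripPeriodic

variable {r s : ℝ} {f g : ℂ → ℂ} {z : ℂ}

lemma mono (hf : StripPeriodic r f) (h : s ≤ r) : StripPeriodic s f where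
  differentiableOn := hf.differentiableOn.mono (strip_mono h)
  map_add_one z hz := hf.map_add_one z (strip_mono h hz)
  map_conj z hz := hf.map_conj z (strip_mono h hz)

lemma add (hf : StripPeriodic r f) (hg : StripPeriodic r g) :
    StripPeriodic r fun z ↦ f z + g z where
  differentiableOn := hf.differentiableOn.add hg.differentiableOn
  map_add_one z hz := by rw [hf.map_add_one z hz, hg.map_add_one z hz]
  map_conj z hz := by rw [hf.map_conj z hz, hg.map_conj z hz, map_add]

lemma neg (hf : StripPeriodic r f) : StripPeriodic r fun z ↦ -f z where
  differentiableOn := hf.differentiableOn.neg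
  map_add_one z hz := by rw [hf.map_add_one z hz]
  map_conj z hz := by rw [hf.map_conj z hz, map_neg]

lemma sub (hf : StripPeriodic r f) (hg : StripPeriodic r g) :
    StripPeriodic r fun z ↦ f z - g z := by
  simpa only [sub_eq_add_neg] using hf.add hg.neg

lemma mul (hf : StripPeriodic r f) (hg : StripPeriodic r g) :
    StripPeriodic r fun z ↦ f z * g z where
  differentiableOn := hf.differentiableOn.mul hg.differentiableOn
  map_add_one z hz := by rw [hf.map_add_one z hz, hg.map_add_one z hz]
  map_conj z hz := by rw [hf.map_conj z hz, hg.map_conj z hz, map_mul]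

lemma inv (hf : StripPeriodic r f) (h0 : ∀ z ∈ strip r, f z ≠ 0) :
    StripPeriodic r fun z ↦ (f z)⁻¹ where
  differentiableOn := hf.differentiableOn.inv h0
  map_add_one z hz := by rw [hf.map_add_one z hz]
  map_conj z hz := by rw [hf.map_conj z hz, map_inv₀]

lemma const (r c : ℝ) : StripPeriodic r fun _ ↦ (c : ℂ) where
  differentiableOn := differentiableOn_const _
  map_add_one _ _ := rfl
  map_conj _ _ := (conj_ofReal c).symm

lemma comp_add_ofReal (hf : StripPeriodic r f) (a : ℝ) : StripPeriodic r fun z ↦ f (z + a) where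
  differentiableOn :=
    hf.differentiableOn.comp (by fun_prop) fun z hz ↦ add_ofReal_mem_strip hz a
  map_add_one z hz := by rw [← hf.map_add_one _ (add_ofReal_mem_strip hz a), add_right_comm]
  map_conj z hz := by rw [← hf.map_conj _ (add_ofReal_mem_strip hz a), map_add, conj_ofReal]

lemma congr (hf : StripPeriodic r f) (h : ∀ z ∈ strip r, g z = f z) : StripPeriodic r g where
  differentiableOn := hf.differentiableOn.congr h
  map_add_one z hz := by rw [h z hz, h _ (add_one_mem_strip hz), hf.map_add_one z hz]
  map_conj z hz := by rw [h z hz, h _ (conj_mem_strip hz), hf.map_conj z hz]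

lemma differentiableAt (hf : StripPeriodic r f) (hz : z ∈ strip r) : DifferentiableAt ℂ f z :=
  hf.differentiableOn.differentiableAt (strip_mem_nhds hz)

lemma deriv (hf : StripPeriodic r f) : StripPeriodic r (deriv f) where
  differentiableOn := hf.differentiableOn.deriv (isOpen_strip r)
  map_add_one z hz := by
    have hshift : (fun w ↦ f (w + 1)) =ᶠ[𝓝 z] f := by
      filter_upwards [strip_mem_nhds hz] with w hw using hf.map_add_one w hw
    rw [← hshift.deriv_eq, deriv_comp_add_const]
  map_conj z hz := by
    have hconj : conj ∘ f ∘ conj =ᶠ[𝓝 z] f := by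
      filter_upwards [strip_mem_nhds hz] with w hw
      simp [hf.map_conj w hw]
    rw [← hconj.deriv_eq, deriv_conj_conj]
    simp only [Function.comp_apply, conj_conj]

lemma periodic_real (hf : StripPeriodic r f) (hr : 0 < r) :
    Function.Periodic (fun x : ℝ ↦ f x) 1 := fun x ↦ by
  simpa using hf.map_add_one x (ofReal_mem_strip hr x)

lemma continuous_real (hf : StripPeriodic r f) (hr : 0 < r) : Continuous fun x : ℝ ↦ f x :=
  hf.differentiableOn.continuousOn.comp_continuous continuous_ofReal (ofReal_mem_strip hr)

lemma ofReal_re (hf : StripPeriodic r f) (hr : 0 < r) (x : ℝ) : ((f x).re : ℂ) = f x := by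
  have := hf.map_conj x (ofReal_mem_strip hr x)
  rw [conj_ofReal] at this
  exact conj_eq_iff_re.1 this.symm

end StripPeriodic

/-- The mean of `f` over a real period. -/
noncomputable def mean (f : ℂ → ℂ) : ℂ := ∫ x in (0 : ℝ)..1, f x

section Mean

variable {r G : ℝ} {f g : ℂ → ℂ}

lemma mean_comp_add_ofReal (hr : 0 < r) (hf : StripPeriodic r f) (a : ℝ) :
    mean (fun z ↦ f (z + a)) = mean f := by
  have hperiod := (hf.periodic_real hr).intervalIntegral_add_eq a 0
  have hshift := intervalIntegral.integral_comp_add_right (fun x : ℝ ↦ f x) a (a := 0) (b := 1)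
  simpa [mean, add_comm] using hshift.trans (by simpa [add_comm] using hperiod)

lemma mean_deriv (hr : 0 < r) (hf : StripPeriodic r f) : mean (deriv f) = 0 := by
  have hderiv : ∀ x ∈ Set.uIcc (0 : ℝ) 1, HasDerivAt (fun x : ℝ ↦ f x) (deriv f x) x := fun x _ ↦
    (hf.differentiableAt (ofReal_mem_strip hr x)).hasDerivAt.comp_ofReal
  rw [mean, intervalIntegral.integral_eq_sub_of_hasDerivAt hderiv
    ((hf.deriv.continuous_real hr).intervalIntegrable _ _), sub_eq_zero]
  simpa using hf.periodic_real hr 0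

lemma mean_add (hr : 0 < r) (hf : StripPeriodic r f) (hg : StripPeriodic r g) :
    mean (fun z ↦ f z + g z) = mean f + mean g :=
  intervalIntegral.integral_add ((hf.continuous_real hr).intervalIntegrable _ _)
    ((hg.continuous_real hr).intervalIntegrable _ _)

lemma mean_sub (hr : 0 < r) (hf : StripPeriodic r f) (hg : StripPeriodic r g) :
    mean (fun z ↦ f z - g z) = mean f - mean g :=
  intervalIntegral.integral_sub ((hf.continuous_real hr).intervalIntegrable _ _)
    ((hg.continuous_real hr).intervalIntegrable _ _)

lemma mean_const (c : ℂ) : mean (fun _ ↦ c) = c := by simp [mean]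

lemma mean_const_mul (c : ℂ) (f : ℂ → ℂ) : mean (fun z ↦ c * f z) = c * mean f :=
  intervalIntegral.integral_const_mul _ _

lemma mean_congr (h : ∀ x : ℝ, f x = g x) : mean f = mean g :=
  intervalIntegral.integral_congr fun x _ ↦ h x

lemma norm_mean_le (hr : 0 < r) (hG : ∀ z ∈ strip r, ‖f z‖ ≤ G) : ‖mean f‖ ≤ G := by
  simpa [mean] using intervalIntegral.norm_integral_le_of_norm_le_const (a := (0 : ℝ)) (b := 1)
    (f := fun x : ℝ ↦ f x) fun x _ ↦ hG x (ofReal_mem_strip hr x)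

lemma ofReal_re_mean (hr : 0 < r) (hf : StripPeriodic r f) : ((mean f).re : ℂ) = mean f := by
  rw [mean, ← intervalIntegral.integral_congr fun x _ ↦ hf.ofReal_re hr x,
    intervalIntegral.integral_ofReal, Complex.ofReal_re]

end Mean

/-! ### The cohomological equation -/

/-- The character `z ↦ e^{2πikz}` of the circle `ℝ / ℤ`, extended to the complex plane. -/
noncomputable def character (k : ℤ) (z : ℂ) : ℂ := exp (2 * π * I * k * z)

section Character

variable (k : ℤ) (z w : ℂ)

lemma character_add : character k (z + w) = character k z * character k w := by
  rw [character, mul_add, exp_add, character, character]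

lemma character_add_one : character k (z + 1) = character k z := by
  have h1 : character k 1 = 1 := by
    rw [character, show 2 * (π : ℂ) * I * k * 1 = k * (2 * π * I) by ring,
      exp_int_mul_two_pi_mul_I]
  rw [character_add, h1, mul_one]

lemma differentiable_character : Differentiable ℂ (character k) := by
  unfold character; fun_prop

lemma norm_character : ‖character k z‖ = Real.exp (-(2 * π * (k * z.im))) := by
  simp [character, norm_exp, mul_assoc]

end Character

/-- The `k`-th Fourier coefficient of the restriction of `g` to the real axis. -/
noncomputable def coef (g : ℂ → ℂ) (k : ℤ) : ℂ := ∫ x in (0 : ℝ)..1, character (-k) x * g x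

section Coef

variable {r G ω κ : ℝ} {g : ℂ → ℂ}

lemma integral_add_mul_I_of_periodic {f : ℂ → ℂ} (hf : DifferentiableOn ℂ f (strip r))
    (hp : ∀ z ∈ strip r, f (z + 1) = f z) {y : ℝ} (hy : |y| < r) :
    (∫ x in (0 : ℝ)..1, f (x + y * I)) = ∫ x in (0 : ℝ)..1, f x := by
  have hmem : ∀ s ∈ Set.uIcc 0 y, |s| < r := fun s hs ↦ by
    have := Set.abs_sub_left_of_mem_uIcc hs
    simp only [sub_zero] at this
    exact this.trans_lt hy
  have hrect := integral_boundary_rect_eq_zero_of_differentiableOn f 0 (1 + y * I)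
    (hf.mono fun z hz ↦ hmem _ (by simpa using (mem_reProdIm.1 hz).2))
  have hsides : (∫ s in (0 : ℝ)..y, f (1 + s * I)) = ∫ s in (0 : ℝ)..y, f (s * I) :=
    intervalIntegral.integral_congr fun s hs ↦ by
      rw [add_comm]
      exact hp _ (by simpa [strip] using hmem s hs)
  simp only [zero_im, ofReal_zero, zero_mul, add_zero, zero_re, add_re, one_re, mul_re, ofReal_re,
    I_re, mul_zero, ofReal_im, I_im, mul_one, sub_self, add_im, one_im, mul_im, zero_add,
    ofReal_one, hsides] at hrect
  linear_combination -hrect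

lemma norm_coef_le (hr : 0 < r) (hg : StripPeriodic r g) (hG : ∀ z ∈ strip r, ‖g z‖ ≤ G) (k : ℤ) :
    ‖coef g k‖ ≤ G * Real.exp (-(2 * π * r * |(k : ℝ)|)) := by
  have hinner : ∀ s : ℝ, 0 < s → s < r →
      ‖coef g k‖ ≤ G * Real.exp (-(2 * π * s * |(k : ℝ)|)) := by
    intro s hs hsr
    -- move the contour to the side of the real axis where the character decays
    obtain ⟨y, hy, hyk⟩ : ∃ y : ℝ, |y| = s ∧ k * y = -(s * |(k : ℝ)|) := by
      rcases le_total 0 (k : ℝ) with hk | hk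
      · exact ⟨-s, by rw [abs_neg, abs_of_pos hs], by rw [abs_of_nonneg hk]; ring⟩
      · exact ⟨s, abs_of_pos hs, by rw [abs_of_nonpos hk]; ring⟩
    have hshift := integral_add_mul_I_of_periodic (f := fun z ↦ character (-k) z * g z)
      ((differentiable_character _).differentiableOn.mul hg.differentiableOn)
      (fun z hz ↦ by rw [character_add_one, hg.map_add_one z hz]) (hy.trans_lt hsr)
    have hbound := intervalIntegral.norm_integral_le_of_norm_le_const (a := (0 : ℝ)) (b := 1)
      (C := G * Real.exp (-(2 * π * s * |(k : ℝ)|)))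
      (f := fun x : ℝ ↦ character (-k) (x + y * I) * g (x + y * I)) fun x _ ↦ by
        have hexp : -(2 * π * (((-k : ℤ) : ℝ) * (x + y * I : ℂ).im)) =
            -(2 * π * s * |(k : ℝ)|) := by
          simp only [Int.cast_neg, add_im, ofReal_im, mul_im, ofReal_re, I_im, mul_one, I_re,
            mul_zero, add_zero, zero_add]
          linear_combination (2 * π) * hyk
        rw [norm_mul, norm_character, hexp, mul_comm]
        gcongr
        exact hG _ (by simpa [strip, hy] using hsr)
    simpa [coef, ← hshift] using hbound
  have hlim : Tendsto (fun s : ℝ ↦ G * Real.exp (-(2 * π * s * |(k : ℝ)|))) (𝓝[<] r)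
      (𝓝 (G * Real.exp (-(2 * π * r * |(k : ℝ)|)))) :=
    (Continuous.tendsto (by fun_prop) r).mono_left nhdsWithin_le_nhds
  refine ge_of_tendsto hlim ?_
  filter_upwards [Ioo_mem_nhdsLT hr] with s hs using hinner s hs.1 hs.2

lemma hasSum_coef_mul_character (hr : 0 < r) (hg : StripPeriodic r g) (hs : Summable (coef g))
    (x : ℝ) : HasSum (fun k ↦ coef g k * character k x) (g x) := by
  have : Fact ((0 : ℝ) < 1) := ⟨one_pos⟩
  let F : C(AddCircle (1 : ℝ), ℂ) :=
    ⟨(hg.periodic_real hr).lift, continuous_coinduced_dom.mpr (hg.continuous_real hr)⟩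
  have hF : ∀ x : ℝ, F x = g x := fun _ ↦ rfl
  have hcoeff : fourierCoeff F = coef g := by
    ext k
    simp only [fourierCoeff_eq_intervalIntegral F k 0, zero_add, fourier_coe_apply, hF, smul_eq_mul,
      coef, character, div_one, ofReal_one, one_smul]
  have hsum := has_pointwise_sum_fourier_series_of_summable (f := F) (hcoeff ▸ hs) x
  rw [hF, hcoeff] at hsum
  simpa [character, fourier_coe_apply] using hsum

lemma mul_exp_neg_le {n : ℝ} (hκ : 0 < κ) (hn : 0 < n) :
    n * Real.exp (-(2 * π * κ * n)) ≤ κ⁻¹ ^ 3 * (1 / n ^ 2) := by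
  have hcube : (κ * n) ^ 3 ≤ Real.exp (2 * π * κ * n) :=
    calc (κ * n) ^ 3 ≤ Real.exp (κ * n) ^ 3 := by
          gcongr; linarith [Real.add_one_le_exp (κ * n)]
      _ = Real.exp (3 * (κ * n)) := by rw [← Real.exp_nat_mul]; norm_num
      _ ≤ Real.exp (2 * π * κ * n) :=
          Real.exp_le_exp.2 (by nlinarith [mul_pos hκ hn, Real.pi_gt_three])
  rw [Real.exp_neg]
  calc n * (Real.exp (2 * π * κ * n))⁻¹ ≤ n * ((κ * n) ^ 3)⁻¹ := by gcongr
    _ = κ⁻¹ ^ 3 * (1 / n ^ 2) := by field_simp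

lemma summable_one_div_int_sq : Summable fun k : ℤ ↦ 1 / (k : ℝ) ^ 2 :=
  Real.summable_one_div_int_pow.2 (by norm_num)

lemma one_le_abs_intCast {k : ℤ} (hk : k ≠ 0) : 1 ≤ |(k : ℝ)| := mod_cast Int.one_le_abs hk

lemma summable_coef (hr : 0 < r) (hg : StripPeriodic r g) (hG : ∀ z ∈ strip r, ‖g z‖ ≤ G) :
    Summable (coef g) := by
  have hG0 : 0 ≤ G := (norm_nonneg _).trans (hG 0 (ofReal_mem_strip hr 0))
  refine Summable.of_norm_bounded_eventually
    ((summable_one_div_int_sq.mul_left (r⁻¹ ^ 3)).mul_left G) ?_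
  filter_upwards [(Set.finite_singleton (0 : ℤ)).compl_mem_cofinite] with k hk
  have hk1 := one_le_abs_intCast hk
  have hdecay := mul_exp_neg_le hr (one_pos.trans_le hk1)
  rw [sq_abs] at hdecay
  refine (norm_coef_le hr hg hG k).trans (mul_le_mul_of_nonneg_left ?_ hG0)
  exact (le_mul_of_one_le_left (Real.exp_nonneg _) hk1).trans hdecay

/-- The Diophantine condition of exponent one on the rotation number `ω`, with constant `ω`. -/
def Diophantine (ω : ℝ) : Prop := ∀ k : ℤ, k ≠ 0 → ω / |(k : ℝ)| ≤ ‖character k ω - 1‖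

/-- The `k`-th Fourier mode of the solution `w` of `w (z + ω) - w z = g z`; division by zero
makes it vanish for `k = 0`. -/
noncomputable def cohomologicalTerm (ω : ℝ) (g : ℂ → ℂ) (k : ℤ) (z : ℂ) : ℂ :=
  coef g k / (character k ω - 1) * character k z

lemma norm_cohomologicalTerm_le (hω : 0 < ω) (hd : Diophantine ω) (hκ : 0 < κ) (hκr : κ < r)
    (hg : StripPeriodic r g) (hG : ∀ z ∈ strip r, ‖g z‖ ≤ G) (k : ℤ) {z : ℂ}
    (hz : z ∈ strip (r - κ)) :
    ‖cohomologicalTerm ω g k z‖ ≤ G / (ω * κ ^ 3) * (1 / (k : ℝ) ^ 2) := by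
  have hr : 0 < r := hκ.trans hκr
  have hG0 : 0 ≤ G := (norm_nonneg _).trans (hG 0 (ofReal_mem_strip hr 0))
  rcases eq_or_ne k 0 with rfl | hk
  · simp [cohomologicalTerm, character]
  have hk0 : 0 < |(k : ℝ)| := by simpa using hk
  have hchar : ‖character k z‖ ≤ Real.exp (2 * π * (r - κ) * |(k : ℝ)|) := by
    rw [norm_character]
    have : -(k * z.im) ≤ |(k : ℝ)| * (r - κ) :=
      calc -(k * z.im) ≤ |k * z.im| := neg_le_abs _
        _ = |(k : ℝ)| * |z.im| := abs_mul _ _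
        _ ≤ |(k : ℝ)| * (r - κ) := by gcongr; exact le_of_lt hz
    exact Real.exp_le_exp.2 (by nlinarith [Real.pi_pos])
  rw [cohomologicalTerm, norm_mul, norm_div]
  calc ‖coef g k‖ / ‖character k ω - 1‖ * ‖character k z‖
      ≤ G * Real.exp (-(2 * π * r * |(k : ℝ)|)) / (ω / |(k : ℝ)|)
          * Real.exp (2 * π * (r - κ) * |(k : ℝ)|) := by
        gcongr
        exacts [norm_coef_le hr hg hG k, hd k hk]
    _ = G / ω * (|(k : ℝ)| * Real.exp (-(2 * π * κ * |(k : ℝ)|))) := by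
        rw [show -(2 * π * κ * |(k : ℝ)|)
            = -(2 * π * r * |(k : ℝ)|) + 2 * π * (r - κ) * |(k : ℝ)| by ring, Real.exp_add]
        field_simp
    _ ≤ G / ω * (κ⁻¹ ^ 3 * (1 / |(k : ℝ)| ^ 2)) :=
        mul_le_mul_of_nonneg_left (mul_exp_neg_le hκ hk0) (by positivity)
    _ = G / (ω * κ ^ 3) * (1 / (k : ℝ) ^ 2) := by rw [sq_abs]; field_simp

lemma cohomologicalTerm_add_sub (hω : 0 < ω) (hd : Diophantine ω) (hm : mean g = 0) (k : ℤ)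
    (z : ℂ) :
    cohomologicalTerm ω g k (z + ω) - cohomologicalTerm ω g k z = coef g k * character k z := by
  rcases eq_or_ne k 0 with rfl | hk
  · have hcoef : coef g 0 = 0 := by simpa [coef, character, mean] using hm
    simp [cohomologicalTerm, hcoef]
  have hk0 : 0 < ω / |(k : ℝ)| := div_pos hω (by simpa using hk)
  have hne : character k ω - 1 ≠ 0 := norm_pos_iff.1 (hk0.trans_le (hd k hk))
  rw [cohomologicalTerm, cohomologicalTerm, character_add]
  field_simp

/-- The constant in the estimate for the solution of the cohomological equation. -/
noncomputable def cohomologicalConst : ℝ := 1 + ∑' k : ℤ, 1 / (k : ℝ) ^ 2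

lemma one_le_cohomologicalConst : 1 ≤ cohomologicalConst :=
  le_add_of_nonneg_right (tsum_nonneg fun k ↦ by positivity)

lemma exists_complex_cohomological_solution (hω : 0 < ω) (hd : Diophantine ω) (hκ : 0 < κ)
    (hκr : κ < r) (hg : StripPeriodic r g) (hG : ∀ z ∈ strip r, ‖g z‖ ≤ G) (hm : mean g = 0) :
    ∃ w : ℂ → ℂ, DifferentiableOn ℂ w (strip (r - κ)) ∧ (∀ z, w (z + 1) = w z) ∧
      (∀ z ∈ strip (r - κ), ‖w z‖ ≤ cohomologicalConst * G / (ω * κ ^ 3)) ∧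
      ∀ z ∈ strip (r - κ), w (z + ω) - w z = g z := by
  have hr : 0 < r := hκ.trans hκr
  have hrκ : 0 < r - κ := sub_pos.2 hκr
  have hG0 : 0 ≤ G := (norm_nonneg _).trans (hG 0 (ofReal_mem_strip hr 0))
  have hterm := norm_cohomologicalTerm_le hω hd hκ hκr hg hG
  have hbound := summable_one_div_int_sq.mul_left (G / (ω * κ ^ 3))
  have hsum : ∀ z ∈ strip (r - κ), HasSum (cohomologicalTerm ω g · z)
      (∑' k, cohomologicalTerm ω g k z) := fun z hz ↦
    (Summable.of_norm_bounded hbound fun k ↦ hterm k hz).hasSum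
  have hdiff : DifferentiableOn ℂ (fun z ↦ ∑' k, cohomologicalTerm ω g k z) (strip (r - κ)) :=
    differentiableOn_tsum_of_summable_norm hbound
      (fun k ↦ ((differentiable_character k).const_mul _).differentiableOn) (isOpen_strip _)
      fun k z hz ↦ hterm k hz
  refine ⟨fun z ↦ ∑' k, cohomologicalTerm ω g k z, hdiff,
    fun z ↦ tsum_congr fun k ↦ by rw [cohomologicalTerm, character_add_one, cohomologicalTerm],
    fun z hz ↦ ?_, fun z hz ↦ ?_⟩
  · calc _ ≤ ∑' k : ℤ, G / (ω * κ ^ 3) * (1 / (k : ℝ) ^ 2) :=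
          tsum_of_norm_bounded hbound.hasSum fun k ↦ hterm k hz
      _ ≤ G / (ω * κ ^ 3) * cohomologicalConst := by
          rw [tsum_mul_left, cohomologicalConst]
          gcongr
          linarith
      _ = cohomologicalConst * G / (ω * κ ^ 3) := by ring
  · refine eq_on_strip_of_eq_on_real (g := g) hrκ (DifferentiableOn.sub
      (hdiff.comp (by fun_prop) fun z hz ↦ add_ofReal_mem_strip hz ω) hdiff)
      (hg.differentiableOn.mono (strip_mono (by linarith))) (fun x ↦ ?_) hz
    have hx := ofReal_mem_strip hrκ x
    refine ((hsum _ (add_ofReal_mem_strip hx ω)).sub (hsum _ hx)).unique ?_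
    simpa only [cohomologicalTerm_add_sub hω hd hm] using
      hasSum_coef_mul_character hr hg (summable_coef hr hg hG) x

theorem exists_cohomological_solution (hω : 0 < ω) (hd : Diophantine ω) (hκ : 0 < κ)
    (hκr : κ < r) (hg : StripPeriodic r g) (hG : ∀ z ∈ strip r, ‖g z‖ ≤ G) (hm : mean g = 0) :
    ∃ w, StripPeriodic (r - κ) w ∧
      (∀ z ∈ strip (r - κ), ‖w z‖ ≤ cohomologicalConst * G / (ω * κ ^ 3)) ∧
      ∀ z ∈ strip (r - κ), w (z + ω) - w z = g z := by
  obtain ⟨w, hdiff, hper, hbound, heq⟩ :=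
    exists_complex_cohomological_solution hω hd hκ hκr hg hG hm
  have htwo : conj (2 : ℂ) = 2 := map_ofNat _ 2
  -- average with the conjugate solution to obtain a real one
  refine ⟨fun z ↦ (w z + conj (w (conj z))) / 2, ⟨?_, fun z _ ↦ ?_, fun z _ ↦ ?_⟩,
    fun z hz ↦ ?_, fun z hz ↦ ?_⟩
  · refine (hdiff.add fun z hz ↦ ?_).div_const _
    have hw : DifferentiableAt ℂ w (conj z) :=
      hdiff.differentiableAt (strip_mem_nhds (conj_mem_strip hz))
    have hconj := hw.conj_conj
    rw [conj_conj] at hconj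
    exact hconj.differentiableWithinAt
  · simp only [map_add, map_one, hper]
  · simp only [conj_conj, map_add, map_div₀, htwo, add_comm]
  · have htri := norm_add_le (w z) (conj (w (conj z)))
    rw [RCLike.norm_conj] at htri
    rw [norm_div, RCLike.norm_ofNat]
    linarith [hbound z hz, hbound _ (conj_mem_strip hz)]
  · have hconj := congrArg conj (heq _ (conj_mem_strip hz))
    simp only [hg.map_conj z (strip_mono (by linarith) hz), map_sub, conj_conj] at hconj
    simp only [map_add, conj_ofReal]
    linear_combination (heq z hz + hconj) / 2

end Coef

/-! ### Diophantine rotation numbers -/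

lemma one_div_le_abs_sub_mul_sqrt_two (p : ℤ) {m : ℤ} (hm : m ≠ 0) :
    1 / (4 * |(m : ℝ)|) ≤ |p - m * √2| := by
  have hm1 := one_le_abs_intCast hm
  by_cases hlarge : 1 ≤ |p - m * √2|
  · exact ((div_le_one (by positivity)).2 (by linarith)).trans hlarge
  have hsqrt : √2 ^ 2 = 2 := Real.sq_sqrt (by norm_num)
  have hsqrt_le : √2 ≤ 3 / 2 := by nlinarith [Real.sqrt_nonneg 2]
  have hne : (p - m * √2) * (p + m * √2) ≠ 0 := by
    have hirr := irrational_sqrt_two.intCast_mul hm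
    exact mul_ne_zero (hirr.intCast_sub p).ne_zero (hirr.intCast_add p).ne_zero
  have hint : (p - m * √2) * (p + m * √2) = ((p ^ 2 - 2 * m ^ 2 : ℤ) : ℝ) := by
    push_cast
    linear_combination -(m : ℝ) ^ 2 * hsqrt
  have hnorm : 1 ≤ |p - m * √2| * |p + m * √2| := by
    rw [← abs_mul, hint]
    exact one_le_abs_intCast fun h0 ↦ hne (by rw [hint, h0, Int.cast_zero])
  have hsum : |p + m * √2| ≤ 4 * |(m : ℝ)| :=
    calc |p + m * √2| = |(p - m * √2) + 2 * (m * √2)| := by ring_nf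
      _ ≤ |p - m * √2| + |2 * (m * √2)| := abs_add_le _ _
      _ = |p - m * √2| + 2 * (|(m : ℝ)| * √2) := by simp [abs_mul]
      _ ≤ 4 * |(m : ℝ)| := by nlinarith
  rw [div_le_iff₀ (by positivity)]
  exact hnorm.trans (by gcongr)

lemma four_mul_abs_sub_le_norm_exp_sub_one {x : ℝ} {m : ℤ} (h : |x - m| ≤ 1 / 2) :
    4 * |x - m| ≤ ‖exp (2 * π * I * x) - 1‖ := by
  have hperiod : exp (2 * π * I * x) = exp (I * (2 * π * (x - m) : ℝ)) := by
    rw [← exp_periodic.sub_int_mul_eq (n := m)]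
    congr 1; push_cast; ring
  have harg : 2 * π * (x - m) / 2 = π * (x - m) := by ring
  have habs : |π * (x - m)| = π * |x - m| := by rw [abs_mul, abs_of_pos Real.pi_pos]
  have hsin := Real.mul_abs_le_abs_sin (x := π * (x - m)) (by rw [habs]; nlinarith [Real.pi_pos])
  rw [hperiod, norm_exp_I_mul_ofReal_sub_one, harg, norm_mul, Real.norm_eq_abs, Real.norm_eq_abs,
    abs_two]
  rw [habs, div_mul_eq_mul_div, ← mul_assoc, mul_div_right_comm,
    mul_div_cancel_right₀ _ Real.pi_ne_zero] at hsin
  linarith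

lemma abs_round_mul_le_abs {ω : ℝ} (hω0 : 0 < ω) (hω1 : ω ≤ 1) (k : ℤ) :
    |((round (k * ω) : ℤ) : ℝ)| ≤ |(k : ℝ)| := by
  have hround := abs_sub_round (k * ω)
  have hle : |((round (k * ω) : ℤ) : ℝ)| ≤ |(k : ℝ)| + 1 / 2 :=
    calc |((round (k * ω) : ℤ) : ℝ)| = |k * ω - (k * ω - round (k * ω))| := by ring_nf
      _ ≤ |k * ω| + |k * ω - round (k * ω)| := abs_sub _ _
      _ ≤ |(k : ℝ)| + 1 / 2 := by
          rw [abs_mul, abs_of_pos hω0]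
          nlinarith [abs_nonneg (k : ℝ)]
  by_contra! hlt
  have hint : |k| + 1 ≤ |round (k * ω)| := mod_cast hlt
  have : |(k : ℝ)| + 1 ≤ |((round (k * ω) : ℤ) : ℝ)| := mod_cast hint
  linarith

lemma diophantine_one_div_nat_add_sqrt_two (N : ℕ) : Diophantine (1 / (N + √2)) := by
  intro k hk
  set ω : ℝ := 1 / (N + √2) with hω
  have hsqrt : 1 ≤ √2 := Real.one_le_sqrt.2 one_le_two
  have hpos : 0 < N + √2 := by positivity
  have hω0 : 0 < ω := by positivity
  have hω1 : ω ≤ 1 := by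
    rw [hω, div_le_one hpos]
    linarith [N.cast_nonneg (α := ℝ)]
  have hk1 := one_le_abs_intCast hk
  set m : ℤ := round (k * ω)
  have hlow := four_mul_abs_sub_le_norm_exp_sub_one (m := m) (abs_sub_round (k * ω))
  rw [show 2 * (π : ℂ) * I * ((k * ω : ℝ) : ℂ) = 2 * π * I * k * ω by push_cast; ring] at hlow
  refine le_trans ?_ hlow
  rcases eq_or_ne m 0 with hm0 | hm0
  · rw [hm0, Int.cast_zero, sub_zero, abs_mul, abs_of_pos hω0, div_le_iff₀ (by positivity)]
    nlinarith [mul_le_mul hk1 hk1 zero_le_one (abs_nonneg _)]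
  have hsub : k * ω - m = ω * (((k - m * N : ℤ) : ℝ) - m * √2) := by
    push_cast; rw [hω]; field_simp; ring
  rw [hsub, abs_mul, abs_of_pos hω0]
  calc ω / |(k : ℝ)| ≤ ω / |(m : ℝ)| := by gcongr 1; exact abs_round_mul_le_abs hω0 hω1 k
    _ = 4 * (ω * (1 / (4 * |(m : ℝ)|))) := by field_simp
    _ ≤ _ := by gcongr; exact one_div_le_abs_sub_mul_sqrt_two _ hm0

lemma exists_diophantine_lt {ε : ℝ} (hε : 0 < ε) : ∃ ω : ℝ, 0 < ω ∧ ω < ε ∧ Diophantine ω := by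
  obtain ⟨N, hN⟩ := exists_nat_gt (1 / ε)
  have hN0 : 0 < (N : ℝ) := (one_div_pos.2 hε).trans hN
  refine ⟨1 / (N + √2), by positivity, ?_, diophantine_one_div_nat_add_sqrt_two N⟩
  rw [div_lt_comm₀ (by positivity) hε]
  linarith [Real.sqrt_nonneg 2]

/-! ### Lifts and two-point functions -/

/-- Lifts to a strip of degree-one real-analytic maps of the circle `ℝ / ℤ`. -/
def IsStripLift (r : ℝ) (x : ℂ → ℂ) : Prop := StripPeriodic r fun z ↦ x z - z

namespace IsStripLift

variable {r s : ℝ} {x y f : ℂ → ℂ} {z : ℂ}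

lemma mono (hx : IsStripLift r x) (h : s ≤ r) : IsStripLift s x := StripPeriodic.mono hx h

lemma differentiableOn (hx : IsStripLift r x) : DifferentiableOn ℂ x (strip r) :=
  ((StripPeriodic.differentiableOn hx).add differentiableOn_id).congr fun z _ ↦ by simp

lemma differentiableAt (hx : IsStripLift r x) (hz : z ∈ strip r) : DifferentiableAt ℂ x z :=
  hx.differentiableOn.differentiableAt (strip_mem_nhds hz)

lemma map_add_one (hx : IsStripLift r x) (hz : z ∈ strip r) : x (z + 1) = x z + 1 := by
  linear_combination StripPeriodic.map_add_one hx z hz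

lemma map_conj (hx : IsStripLift r x) (hz : z ∈ strip r) : x (conj z) = conj (x z) := by
  have := StripPeriodic.map_conj hx z hz
  rw [map_sub] at this
  linear_combination this

lemma add_periodic (hx : IsStripLift r x) (hf : StripPeriodic r f) :
    IsStripLift r fun z ↦ x z + f z :=
  (StripPeriodic.add hx hf).congr fun _ _ ↦ by ring

lemma comp_add_ofReal (hx : IsStripLift r x) (a : ℝ) : IsStripLift r fun z ↦ x (z + a) :=
  ((StripPeriodic.comp_add_ofReal hx a).add (.const r a)).congr fun _ _ ↦ by ring

lemma comp_sub_ofReal (hx : IsStripLift r x) (a : ℝ) : IsStripLift r fun z ↦ x (z - a) := by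
  simpa [sub_eq_add_neg] using hx.comp_add_ofReal (-a)

lemma deriv (hx : IsStripLift r x) : StripPeriodic r (deriv x) :=
  ((StripPeriodic.deriv hx).add (.const r 1)).congr fun z hz ↦ by
    rw [deriv_fun_sub (hx.differentiableAt hz) differentiableAt_fun_id]
    simp

end IsStripLift

/-- The derivative of `k` in its first variable. -/
noncomputable def partialFst (k : ℂ × ℂ → ℂ) (p : ℂ × ℂ) : ℂ := deriv (fun τ ↦ k (τ, p.2)) p.1

/-- The derivative of `k` in its second variable. -/
noncomputable def partialSnd (k : ℂ × ℂ → ℂ) (p : ℂ × ℂ) : ℂ := deriv (fun σ ↦ k (p.1, σ)) p.2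

section Partial

variable {k : ℂ × ℂ → ℂ} {p : ℂ × ℂ}

lemma hasDerivAt_partialFst (hk : DifferentiableAt ℂ k p) :
    HasDerivAt (fun τ ↦ k (τ, p.2)) (partialFst k p) p.1 :=
  (hk.comp p.1 (by fun_prop : DifferentiableAt ℂ (fun τ : ℂ ↦ (τ, p.2)) p.1)).hasDerivAt

lemma hasDerivAt_partialSnd (hk : DifferentiableAt ℂ k p) :
    HasDerivAt (fun σ ↦ k (p.1, σ)) (partialSnd k p) p.2 :=
  (hk.comp p.2 (by fun_prop : DifferentiableAt ℂ (fun σ : ℂ ↦ (p.1, σ)) p.2)).hasDerivAt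

lemma partialFst_eq_fderiv (hk : DifferentiableAt ℂ k p) : partialFst k p = fderiv ℂ k p (1, 0) :=
  (hasDerivAt_partialFst hk).unique <|
    hk.hasFDerivAt.comp_hasDerivAt p.1 ((hasDerivAt_id _).prodMk (hasDerivAt_const _ _))

lemma partialSnd_eq_fderiv (hk : DifferentiableAt ℂ k p) : partialSnd k p = fderiv ℂ k p (0, 1) :=
  (hasDerivAt_partialSnd hk).unique <|
    hk.hasFDerivAt.comp_hasDerivAt p.2 ((hasDerivAt_const _ _).prodMk (hasDerivAt_id _))

lemma hasDerivAt_comp_pair {x y : ℂ → ℂ} {x' y' z : ℂ} (hk : DifferentiableAt ℂ k (x z, y z))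
    (hx : HasDerivAt x x' z) (hy : HasDerivAt y y' z) :
    HasDerivAt (fun z ↦ k (x z, y z))
      (partialFst k (x z, y z) * x' + partialSnd k (x z, y z) * y') z := by
  have hcomp := hk.hasFDerivAt.comp_hasDerivAt z (hx.prodMk hy)
  have hsplit : (x', y') = x' • ((1, 0) : ℂ × ℂ) + y' • ((0, 1) : ℂ × ℂ) := by simp
  rw [hsplit, map_add, map_smul, map_smul, ← partialFst_eq_fderiv hk, ← partialSnd_eq_fderiv hk,
    smul_eq_mul, smul_eq_mul, mul_comm x', mul_comm y'] at hcomp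
  exact hcomp

lemma analyticAt_partialFst (hk : AnalyticAt ℂ k p) : AnalyticAt ℂ (partialFst k) p := by
  refine (((ContinuousLinearMap.apply ℂ ℂ ((1, 0) : ℂ × ℂ)).analyticAt _).comp hk.fderiv).congr ?_
  filter_upwards [hk.eventually_analyticAt] with q hq
  exact (partialFst_eq_fderiv hq.differentiableAt).symm

lemma analyticAt_partialSnd (hk : AnalyticAt ℂ k p) : AnalyticAt ℂ (partialSnd k) p := by
  refine (((ContinuousLinearMap.apply ℂ ℂ ((0, 1) : ℂ × ℂ)).analyticAt _).comp hk.fderiv).congr ?_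
  filter_upwards [hk.eventually_analyticAt] with q hq
  exact (partialSnd_eq_fderiv hq.differentiableAt).symm

lemma partialFst_partialSnd (hk : AnalyticAt ℂ k p) :
    partialFst (partialSnd k) p = partialSnd (partialFst k) p := by
  have hsnd : partialSnd k =ᶠ[𝓝 p] fun q ↦ fderiv ℂ k q (0, 1) := by
    filter_upwards [hk.eventually_analyticAt] with q hq
    exact partialSnd_eq_fderiv hq.differentiableAt
  have hfst : partialFst k =ᶠ[𝓝 p] fun q ↦ fderiv ℂ k q (1, 0) := by
    filter_upwards [hk.eventually_analyticAt] with q hq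
    exact partialFst_eq_fderiv hq.differentiableAt
  have hderiv (v : ℂ × ℂ) : HasFDerivAt (fun q ↦ fderiv ℂ k q v) _ p :=
    hk.fderiv.differentiableAt.hasFDerivAt.clm_apply (hasFDerivAt_const v p)
  rw [partialFst_eq_fderiv (analyticAt_partialSnd hk).differentiableAt,
    partialSnd_eq_fderiv (analyticAt_partialFst hk).differentiableAt, hsnd.fderiv_eq,
    hfst.fderiv_eq, (hderiv _).fderiv, (hderiv _).fderiv]
  simpa using (hk.contDiffAt (n := ⊤)).isSymmSndFDerivAt (by simp) (1, 0) (0, 1)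

end Partial

/-- The pairs of distinct points of the strip `|Im z| < R` at distance less than `d`. -/
def twoPointDomain (R d : ℝ) : Set (ℂ × ℂ) :=
  {p | |p.1.im| < R ∧ |p.2.im| < R ∧ p.1 ≠ p.2 ∧ ‖p.2 - p.1‖ < d}

section TwoPointDomain

variable {R R' d d' : ℝ} {p : ℂ × ℂ}

lemma isOpen_twoPointDomain (R d : ℝ) : IsOpen (twoPointDomain R d) :=
  ((isOpen_strip R).preimage continuous_fst).inter <|
    ((isOpen_strip R).preimage continuous_snd).inter <|
      (isOpen_ne_fun continuous_fst continuous_snd).inter <|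
        isOpen_lt (continuous_snd.sub continuous_fst).norm continuous_const

lemma twoPointDomain_mem_nhds (hp : p ∈ twoPointDomain R d) : twoPointDomain R d ∈ 𝓝 p :=
  (isOpen_twoPointDomain R d).mem_nhds hp

lemma twoPointDomain_mono (hR : R ≤ R') (hd : d ≤ d') :
    twoPointDomain R d ⊆ twoPointDomain R' d' := fun _ hp ↦
  ⟨hp.1.trans_le hR, hp.2.1.trans_le hR, hp.2.2.1, hp.2.2.2.trans_le hd⟩

lemma swap_mem_twoPointDomain (hp : p ∈ twoPointDomain R d) : p.swap ∈ twoPointDomain R d :=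
  ⟨hp.2.1, hp.1, hp.2.2.1.symm, by simpa [norm_sub_rev] using hp.2.2.2⟩

lemma sub_ne_zero_of_mem_twoPointDomain (hp : p ∈ twoPointDomain R d) : p.2 - p.1 ≠ 0 :=
  sub_ne_zero.2 hp.2.2.1.symm

lemma add_ofReal_mem_twoPointDomain {b : ℂ} {δ : ℝ} (hb : |b.im| < R) (hδ : 0 < δ) (hδd : δ < d) :
    (b, b + δ) ∈ twoPointDomain R d :=
  ⟨hb, by simpa using hb, by simp [hδ.ne'], by simpa [abs_of_pos hδ] using hδd⟩

lemma sub_ofReal_mem_twoPointDomain {b : ℂ} {δ : ℝ} (hb : |b.im| < R) (hδ : 0 < δ) (hδd : δ < d) :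
    (b, b - δ) ∈ twoPointDomain R d :=
  ⟨hb, by simpa using hb, by simp [eq_comm (a := b), sub_eq_self, hδ.ne'],
    by simpa [abs_of_pos hδ] using hδd⟩

end TwoPointDomain

/-- Holomorphic functions of two nearby points of a strip, invariant under the diagonal translation
by `(1, 1)` and real at pairs of real points. -/
structure TwoPointFunction (R d : ℝ) (k : ℂ × ℂ → ℂ) : Prop where
  analyticAt : ∀ p ∈ twoPointDomain R d, AnalyticAt ℂ k p
  map_add_one : ∀ p ∈ twoPointDomain R d, k (p.1 + 1, p.2 + 1) = k p
  map_conj : ∀ p ∈ twoPointDomain R d, k (conj p.1, conj p.2) = conj (k p)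

namespace TwoPointFunction

variable {R R' d d' r : ℝ} {k : ℂ × ℂ → ℂ} {x y : ℂ → ℂ} {p : ℂ × ℂ}

lemma mono (hk : TwoPointFunction R' d' k) (hR : R ≤ R') (hd : d ≤ d') :
    TwoPointFunction R d k where
  analyticAt p hp := hk.analyticAt p (twoPointDomain_mono hR hd hp)
  map_add_one p hp := hk.map_add_one p (twoPointDomain_mono hR hd hp)
  map_conj p hp := hk.map_conj p (twoPointDomain_mono hR hd hp)

lemma differentiableAt (hk : TwoPointFunction R d k) (hp : p ∈ twoPointDomain R d) :
    DifferentiableAt ℂ k p := (hk.analyticAt p hp).differentiableAt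

lemma comp_swap (hk : TwoPointFunction R d k) : TwoPointFunction R d (k ∘ Prod.swap) where
  analyticAt p hp :=
    (hk.analyticAt p.swap (swap_mem_twoPointDomain hp)).comp (analyticAt_snd.prod analyticAt_fst)
  map_add_one p hp := hk.map_add_one p.swap (swap_mem_twoPointDomain hp)
  map_conj p hp := hk.map_conj p.swap (swap_mem_twoPointDomain hp)

lemma partialFst (hk : TwoPointFunction R d k) : TwoPointFunction R d (partialFst k) where
  analyticAt p hp := analyticAt_partialFst (hk.analyticAt p hp)
  map_add_one p hp := by
    have hslice : ∀ᶠ τ in 𝓝 p.1, (τ, p.2) ∈ twoPointDomain R d :=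
      (by fun_prop : Continuous fun τ : ℂ ↦ (τ, p.2)).continuousAt (twoPointDomain_mem_nhds hp)
    have hshift : (fun τ ↦ k (τ + 1, p.2 + 1)) =ᶠ[𝓝 p.1] fun τ ↦ k (τ, p.2) := by
      filter_upwards [hslice] with τ hτ using hk.map_add_one _ hτ
    simp only [FermiUlam.partialFst]
    rw [← hshift.deriv_eq, deriv_comp_add_const (f := fun τ ↦ k (τ, p.2 + 1))]
  map_conj p hp := by
    have hslice : ∀ᶠ τ in 𝓝 p.1, (τ, p.2) ∈ twoPointDomain R d :=
      (by fun_prop : Continuous fun τ : ℂ ↦ (τ, p.2)).continuousAt (twoPointDomain_mem_nhds hp)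
    have hconj : conj ∘ (fun τ ↦ k (τ, conj p.2)) ∘ conj =ᶠ[𝓝 p.1] fun τ ↦ k (τ, p.2) := by
      filter_upwards [hslice] with τ hτ
      simp [hk.map_conj _ hτ]
    simp only [FermiUlam.partialFst]
    rw [← hconj.deriv_eq, deriv_conj_conj]
    simp

lemma partialSnd (hk : TwoPointFunction R d k) : TwoPointFunction R d (partialSnd k) :=
  hk.comp_swap.partialFst.comp_swap

lemma comp (hk : TwoPointFunction R d k) (hx : IsStripLift r x) (hy : IsStripLift r y)
    (hmem : ∀ z ∈ strip r, (x z, y z) ∈ twoPointDomain R d) :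
    StripPeriodic r fun z ↦ k (x z, y z) where
  differentiableOn z hz := (hasDerivAt_comp_pair (hk.differentiableAt (hmem z hz))
    (hx.differentiableAt hz).hasDerivAt
    (hy.differentiableAt hz).hasDerivAt).differentiableAt.differentiableWithinAt
  map_add_one z hz := by
    rw [hx.map_add_one hz, hy.map_add_one hz]
    exact hk.map_add_one _ (hmem z hz)
  map_conj z hz := by
    rw [hx.map_conj hz, hy.map_conj hz]
    exact hk.map_conj _ (hmem z hz)

end TwoPointFunction

lemma exists_differentiableOn_extension {U : Set ℂ} {a : ℂ} {f : ℂ → ℂ} {M : ℝ} (hU : U ∈ 𝓝 a)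
    (hf : DifferentiableOn ℂ f (U \ {a})) (hM : ∀ z ∈ U, z ≠ a → ‖f z‖ ≤ M) :
    ∃ F : ℂ → ℂ, DifferentiableOn ℂ F U ∧ (∀ z ≠ a, F z = f z) ∧ ∀ z ∈ U, ‖F z‖ ≤ M := by
  have hF := differentiableOn_update_limUnder_of_bddAbove hU hf
    ⟨M, by rintro _ ⟨z, ⟨hz, hza⟩, rfl⟩; exact hM z hz hza⟩
  set F := Function.update f a (limUnder (𝓝[≠] a) f)
  have hFf : ∀ z ≠ a, F z = f z := fun z hz ↦ Function.update_of_ne hz _ _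
  refine ⟨F, hF, hFf, fun z hz ↦ ?_⟩
  rcases eq_or_ne z a with rfl | hza
  · have hcont : ContinuousAt F z := (hF.differentiableAt hU).continuousAt
    refine le_of_tendsto (hcont.norm.tendsto.mono_left (nhdsWithin_le_nhds (s := {z}ᶜ))) ?_
    filter_upwards [self_mem_nhdsWithin, mem_nhdsWithin_of_mem_nhds hU] with w hwz hw
    rw [hFf w hwz]
    exact hM w hw hwz
  · rw [hFf z hza]
    exact hM z hz hza

section TwoPointEstimates

variable {R d M ρ : ℝ} {k : ℂ × ℂ → ℂ} {p : ℂ × ℂ} {b u w : ℂ}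

lemma exists_slice_extension (hd : 0 < d)
    (hk : ∀ p ∈ twoPointDomain R d, DifferentiableAt ℂ k p)
    (hM : ∀ p ∈ twoPointDomain R d, ‖k p‖ ≤ M) (hb : b ∈ strip R) :
    ∃ F : ℂ → ℂ, DifferentiableOn ℂ F (strip R ∩ Metric.ball b d) ∧
      (∀ τ ≠ b, F τ = k (τ, b)) ∧ ∀ τ ∈ strip R ∩ Metric.ball b d, ‖F τ‖ ≤ M := by
  have hmem : ∀ τ ∈ strip R ∩ Metric.ball b d, τ ≠ b → (τ, b) ∈ twoPointDomain R d :=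
    fun τ hτ hτb ↦ ⟨hτ.1, hb, hτb, by simpa [dist_eq_norm, norm_sub_rev] using hτ.2⟩
  exact exists_differentiableOn_extension
    (inter_mem (strip_mem_nhds hb) (Metric.ball_mem_nhds b hd))
    (fun τ hτ ↦ (hasDerivAt_partialFst
      (hk _ (hmem τ hτ.1 hτ.2))).differentiableAt.differentiableWithinAt)
    fun τ hτ hτb ↦ hM _ (hmem τ hτ hτb)

lemma norm_partialFst_le (hρ : 0 < ρ) (hk : ∀ p ∈ twoPointDomain R d, DifferentiableAt ℂ k p)
    (hM : ∀ p ∈ twoPointDomain R d, ‖k p‖ ≤ M) (hp : p ∈ twoPointDomain (R - ρ) (d - ρ)) :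
    ‖partialFst k p‖ ≤ M / ρ := by
  obtain ⟨hp₁, hp₂, hne, hdist⟩ := hp
  have hd : 0 < d := by linarith [norm_nonneg (p.2 - p.1)]
  obtain ⟨F, hF, hFk, hFM⟩ :=
    exists_slice_extension hd hk hM (b := p.2) (hp₂.trans (by linarith))
  have heq : F =ᶠ[𝓝 p.1] fun τ ↦ k (τ, p.2) := by
    filter_upwards [isOpen_ne.mem_nhds hne] with τ hτ using hFk τ hτ
  rw [partialFst, ← heq.deriv_eq]
  refine norm_deriv_le_of_closedBall_subset hρ
    (Set.subset_inter (closedBall_subset_strip hp₁) ?_) hF hFM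
  exact Metric.closedBall_subset_ball' (by rw [dist_comm, dist_eq_norm]; linarith)

lemma norm_partialSnd_le (hρ : 0 < ρ) (hk : ∀ p ∈ twoPointDomain R d, DifferentiableAt ℂ k p)
    (hM : ∀ p ∈ twoPointDomain R d, ‖k p‖ ≤ M) (hp : p ∈ twoPointDomain (R - ρ) (d - ρ)) :
    ‖partialSnd k p‖ ≤ M / ρ := by
  refine norm_partialFst_le (k := k ∘ Prod.swap) hρ (fun q hq ↦ ?_)
    (fun q hq ↦ hM _ (swap_mem_twoPointDomain hq)) (swap_mem_twoPointDomain hp)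
  exact (hk _ (swap_mem_twoPointDomain hq)).comp q
    (differentiableAt_snd.prodMk differentiableAt_fst)

lemma norm_sub_le_near_diagonal_fst (hρd : 2 * ρ ≤ d)
    (hk : ∀ p ∈ twoPointDomain R d, DifferentiableAt ℂ k p)
    (hM : ∀ p ∈ twoPointDomain R d, ‖k p‖ ≤ M) (hb : b ∈ strip (R - 2 * ρ))
    (hu : u ∈ Metric.ball b ρ) (hw : w ∈ Metric.ball b ρ) (hub : u ≠ b) (hwb : w ≠ b) :
    ‖k (u, b) - k (w, b)‖ ≤ M / ρ * ‖u - w‖ := by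
  have hρ : 0 < ρ := Metric.pos_of_mem_ball hu
  obtain ⟨F, hF, hFk, hFM⟩ := exists_slice_extension (by linarith) hk hM (b := b)
    (strip_mono (by linarith) hb)
  have hsub : ∀ z ∈ Metric.ball b ρ, Metric.closedBall z ρ ⊆ strip R ∩ Metric.ball b d :=
    fun z hz ↦ by
      have hball : Metric.closedBall z ρ ⊆ Metric.ball b (2 * ρ) :=
        Metric.closedBall_subset_ball' (by linarith [Metric.mem_ball.1 hz])
      exact Set.subset_inter
        (hball.trans (Metric.ball_subset_closedBall.trans (closedBall_subset_strip hb)))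
        (hball.trans (Metric.ball_subset_ball hρd))
  rw [← hFk u hub, ← hFk w hwb]
  refine Convex.norm_image_sub_le_of_norm_deriv_le (𝕜 := ℂ) (s := Metric.ball b ρ)
    (fun z hz ↦ ?_) (fun z hz ↦ norm_deriv_le_of_closedBall_subset hρ (hsub z hz) hF hFM)
    (convex_ball b ρ) hw hu
  exact hF.differentiableAt
    (mem_of_superset (Metric.closedBall_mem_nhds z hρ) (hsub z hz))

lemma norm_sub_le_near_diagonal_snd (hρd : 2 * ρ ≤ d)
    (hk : ∀ p ∈ twoPointDomain R d, DifferentiableAt ℂ k p)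
    (hM : ∀ p ∈ twoPointDomain R d, ‖k p‖ ≤ M) (hb : b ∈ strip (R - 2 * ρ))
    (hu : u ∈ Metric.ball b ρ) (hw : w ∈ Metric.ball b ρ) (hub : u ≠ b) (hwb : w ≠ b) :
    ‖k (b, u) - k (b, w)‖ ≤ M / ρ * ‖u - w‖ := by
  refine norm_sub_le_near_diagonal_fst (k := k ∘ Prod.swap) hρd (fun q hq ↦ ?_)
    (fun q hq ↦ hM _ (swap_mem_twoPointDomain hq)) hb hu hw hub hwb
  exact (hk _ (swap_mem_twoPointDomain hq)).comp q
    (differentiableAt_snd.prodMk differentiableAt_fst)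

end TwoPointEstimates

/-- Generating functions `h(τ, σ)` that look like `1 / (σ - τ)` near the diagonal: the derivatives
needed for the Newton step agree with those of `1 / (σ - τ)` up to an error `M`, and the pole of
`∂₁h` and `∂₂h` is even in `σ - τ` up to a linear error. -/
structure TwistGenerator (R d M : ℝ) (h : ℂ × ℂ → ℂ) : Prop where
  twoPointFunction : TwoPointFunction R d h
  norm_partialFst_sub_le : ∀ p ∈ twoPointDomain R d,
    ‖partialFst h p - 1 / (p.2 - p.1) ^ 2‖ ≤ M
  norm_partialSnd_add_le : ∀ p ∈ twoPointDomain R d,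
    ‖partialSnd h p + 1 / (p.2 - p.1) ^ 2‖ ≤ M
  norm_partialSnd_partialFst_add_le : ∀ p ∈ twoPointDomain R d,
    ‖partialSnd (partialFst h) p + 2 / (p.2 - p.1) ^ 3‖ ≤ M
  norm_partialFst_reflect_le : ∀ (τ : ℂ) (δ : ℝ), |τ.im| < R → 0 < δ → δ < d →
    ‖partialFst h (τ, τ + δ) - partialFst h (τ, τ - δ)‖ ≤ M * δ
  norm_partialSnd_reflect_le : ∀ (σ : ℂ) (δ : ℝ), |σ.im| < R → 0 < δ → δ < d →
    ‖partialSnd h (σ - δ, σ) - partialSnd h (σ + δ, σ)‖ ≤ M * δ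

/-- What remains of `h(τ, σ)` after removing the polar part `1 / (σ - τ)`. -/
noncomputable def regularPart (h : ℂ × ℂ → ℂ) (p : ℂ × ℂ) : ℂ := h p - 1 / (p.2 - p.1)

section RegularPart

variable {R d M δ ρ : ℝ} {h : ℂ × ℂ → ℂ} {p : ℂ × ℂ} {b : ℂ}

lemma analyticAt_regularPart (hh : TwoPointFunction R d h) (hp : p ∈ twoPointDomain R d) :
    AnalyticAt ℂ (regularPart h) p :=
  (hh.analyticAt p hp).sub (analyticAt_const.div (analyticAt_snd.sub analyticAt_fst)
    (sub_ne_zero_of_mem_twoPointDomain hp))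

lemma partialFst_regularPart (hh : TwoPointFunction R d h) (hp : p ∈ twoPointDomain R d) :
    partialFst (regularPart h) p = partialFst h p - 1 / (p.2 - p.1) ^ 2 := by
  have hpole := ((hasDerivAt_id' p.1).const_sub p.2).fun_inv (sub_ne_zero_of_mem_twoPointDomain hp)
  simpa [partialFst, regularPart] using
    ((hasDerivAt_partialFst (hh.differentiableAt hp)).fun_sub hpole).deriv

lemma partialSnd_regularPart (hh : TwoPointFunction R d h) (hp : p ∈ twoPointDomain R d) :
    partialSnd (regularPart h) p = partialSnd h p + 1 / (p.2 - p.1) ^ 2 := by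
  have hpole := ((hasDerivAt_id' p.2).sub_const p.1).fun_inv (sub_ne_zero_of_mem_twoPointDomain hp)
  simpa [partialSnd, regularPart, neg_div] using
    ((hasDerivAt_partialSnd (hh.differentiableAt hp)).fun_sub hpole).deriv

lemma partialSnd_partialFst_regularPart (hh : TwoPointFunction R d h)
    (hp : p ∈ twoPointDomain R d) :
    partialSnd (partialFst (regularPart h)) p =
      partialSnd (partialFst h) p + 2 / (p.2 - p.1) ^ 3 := by
  have hp0 := sub_ne_zero_of_mem_twoPointDomain hp
  have hslice : (fun σ ↦ partialFst (regularPart h) (p.1, σ)) =ᶠ[𝓝 p.2]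
      fun σ ↦ partialFst h (p.1, σ) - 1 / (σ - p.1) ^ 2 := by
    filter_upwards [(by fun_prop : Continuous fun σ : ℂ ↦ (p.1, σ)).continuousAt
      (twoPointDomain_mem_nhds hp)] with σ hσ using partialFst_regularPart hh hσ
  have hpole := (((hasDerivAt_id' p.2).sub_const p.1).fun_pow 2).fun_inv (pow_ne_zero 2 hp0)
  have hderiv := (hasDerivAt_partialSnd (hh.partialFst.differentiableAt hp)).fun_sub hpole
  rw [partialSnd, hslice.deriv_eq]
  simp only [one_div]
  refine (hderiv.congr_deriv ?_).deriv
  field_simp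
  ring

lemma norm_sub_reflect_le {f : ℂ → ℂ} {C : ℝ} (hδ : 0 < δ) (hδρ : δ < ρ)
    (hf : ∀ u ∈ Metric.ball b ρ, ∀ w ∈ Metric.ball b ρ, u ≠ b → w ≠ b →
      ‖f u - f w‖ ≤ C * ‖u - w‖) :
    ‖f (b + δ) - f (b - δ)‖ ≤ 2 * C * δ := by
  have hdist : ‖b + δ - (b - δ)‖ = 2 * δ := by
    rw [show b + δ - (b - δ) = ((2 * δ : ℝ) : ℂ) by push_cast; ring, norm_real, Real.norm_eq_abs,
      abs_of_pos (by positivity)]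
  have := hf (b + δ) (by simpa [abs_of_pos hδ]) (b - δ) (by simpa [abs_of_pos hδ])
    (by simp [hδ.ne']) (by simp [sub_eq_self, hδ.ne'])
  rw [hdist] at this
  linarith

lemma norm_partialFst_reflect_le (hh : TwoPointFunction R d h)
    (hM : ∀ p ∈ twoPointDomain R d, ‖partialFst (regularPart h) p‖ ≤ M) (hρd : 2 * ρ ≤ d)
    (hb : b ∈ strip (R - 2 * ρ)) (hδ : 0 < δ) (hδρ : δ < ρ) :
    ‖partialFst h (b, b + δ) - partialFst h (b, b - δ)‖ ≤ 2 * (M / ρ) * δ := by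
  have hreflect := norm_sub_reflect_le hδ hδρ fun u hu w hw ↦ norm_sub_le_near_diagonal_snd hρd
    (fun p hp ↦ (analyticAt_partialFst (analyticAt_regularPart hh hp)).differentiableAt) hM hb hu hw
  have hbR : |b.im| < R := hb.trans (by linarith)
  rwa [partialFst_regularPart hh (add_ofReal_mem_twoPointDomain hbR hδ (by linarith)),
    partialFst_regularPart hh (sub_ofReal_mem_twoPointDomain hbR hδ (by linarith)),
    add_sub_cancel_left, sub_sub_cancel_left, even_two.neg_pow, sub_sub_sub_cancel_right]
    at hreflect

lemma norm_partialSnd_reflect_le (hh : TwoPointFunction R d h)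
    (hM : ∀ p ∈ twoPointDomain R d, ‖partialSnd (regularPart h) p‖ ≤ M) (hρd : 2 * ρ ≤ d)
    (hb : b ∈ strip (R - 2 * ρ)) (hδ : 0 < δ) (hδρ : δ < ρ) :
    ‖partialSnd h (b - δ, b) - partialSnd h (b + δ, b)‖ ≤ 2 * (M / ρ) * δ := by
  have hreflect := norm_sub_reflect_le hδ hδρ fun u hu w hw ↦ norm_sub_le_near_diagonal_fst hρd
    (fun p hp ↦ (analyticAt_partialSnd (analyticAt_regularPart hh hp)).differentiableAt) hM hb hu hw
  have hbR : |b.im| < R := hb.trans (by linarith)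
  rw [norm_sub_rev,
    partialSnd_regularPart (p := (b - δ, b)) hh
      (swap_mem_twoPointDomain (sub_ofReal_mem_twoPointDomain hbR hδ (by linarith))),
    partialSnd_regularPart (p := (b + δ, b)) hh
      (swap_mem_twoPointDomain (add_ofReal_mem_twoPointDomain hbR hδ (by linarith)))] at hreflect
  simpa [even_two.neg_pow] using hreflect

theorem exists_twistGenerator (hR : 0 < R) (hd : 0 < d) (hh : TwoPointFunction R d h)
    (hM : ∀ p ∈ twoPointDomain R d, ‖h p - 1 / (p.2 - p.1)‖ ≤ M) :
    ∃ d' M', 0 < d' ∧ 0 ≤ M' ∧ TwistGenerator (R / 4) d' M' h := by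
  obtain ⟨ρ, hρ, hρd, hρR⟩ : ∃ ρ, 0 < ρ ∧ 4 * ρ ≤ d ∧ 4 * ρ ≤ R :=
    ⟨min d R / 4, by positivity, by linarith [min_le_left d R], by linarith [min_le_right d R]⟩
  have hM₀ : 0 ≤ M := (norm_nonneg _).trans <| hM (0, (d / 2 : ℝ)) ⟨by simpa, by simpa,
    by simpa [eq_comm (a := (0 : ℂ))] using hd.ne', by simpa [abs_of_pos hd] using hd⟩
  have hreg (p) (hp : p ∈ twoPointDomain R d) := (analyticAt_regularPart hh hp).differentiableAt
  have hh' : TwoPointFunction (R - ρ) (d - ρ) h := hh.mono (by linarith) (by linarith)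
  have hdom : twoPointDomain (R / 4) ρ ⊆ twoPointDomain (R - ρ - ρ) (d - ρ - ρ) :=
    twoPointDomain_mono (by linarith) (by linarith)
  have hdom' : twoPointDomain (R / 4) ρ ⊆ twoPointDomain (R - ρ) (d - ρ) :=
    twoPointDomain_mono (by linarith) (by linarith)
  have hstrip : strip (R / 4) ⊆ strip (R - ρ - 2 * ρ) := strip_mono (by linarith)
  have hfst (p) (hp : p ∈ twoPointDomain (R - ρ) (d - ρ)) :
      ‖partialFst (regularPart h) p‖ ≤ M / ρ := norm_partialFst_le hρ hreg hM hp
  have hsnd (p) (hp : p ∈ twoPointDomain (R - ρ) (d - ρ)) :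
      ‖partialSnd (regularPart h) p‖ ≤ M / ρ := norm_partialSnd_le hρ hreg hM hp
  have hM₁ : 0 ≤ M / ρ := by positivity
  have hM₂ : 0 ≤ M / ρ / ρ := by positivity
  refine ⟨ρ, M / ρ + 2 * (M / ρ / ρ), hρ, by positivity,
    hh.mono (by linarith) (by linarith), fun p hp ↦ ?_, fun p hp ↦ ?_, fun p hp ↦ ?_,
    fun τ δ hτ hδ hδρ ↦ ?_, fun σ δ hσ hδ hδρ ↦ ?_⟩
  · rw [← partialFst_regularPart hh' (hdom' hp)]
    linarith [hfst p (hdom' hp)]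
  · rw [← partialSnd_regularPart hh' (hdom' hp)]
    linarith [hsnd p (hdom' hp)]
  · rw [← partialSnd_partialFst_regularPart hh' (hdom' hp)]
    linarith [norm_partialSnd_le hρ
      (fun q hq ↦ (analyticAt_partialFst (analyticAt_regularPart hh' hq)).differentiableAt)
      hfst (hdom hp)]
  · refine (norm_partialFst_reflect_le hh' hfst (by linarith) (hstrip hτ) hδ hδρ).trans ?_
    gcongr
    linarith
  · refine (norm_partialSnd_reflect_le hh' hsnd (by linarith) (hstrip hσ) hδ hδρ).trans ?_
    gcongr
    linarith

end RegularPart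

section Taylor

-- The Schwarz lemma, applied twice to difference quotients.
lemma norm_sub_sub_deriv_le {φ : ℂ → ℂ} {ρ K : ℝ} (hρ : 1 < ρ)
    (hφ : DifferentiableOn ℂ φ (Metric.ball 0 ρ)) (hK : ∀ s ∈ Metric.ball (0 : ℂ) ρ, ‖φ s‖ ≤ K) :
    ‖φ 1 - φ 0 - deriv φ 0‖ ≤ 4 * K / ρ ^ 2 := by
  have hρ0 : 0 < ρ := by linarith
  have hschwarz {f : ℂ → ℂ} {B : ℝ} (hf : DifferentiableOn ℂ f (Metric.ball 0 ρ))
      (hB : ∀ s ∈ Metric.ball (0 : ℂ) ρ, ‖f s‖ ≤ B) :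
      ∀ s ∈ Metric.ball (0 : ℂ) ρ, ‖dslope f 0 s‖ ≤ 2 * B / ρ := fun s hs ↦ by
    refine norm_dslope_le_div_of_mapsTo_ball hf (fun t ht ↦ ?_) hs
    rw [Metric.mem_closedBall, dist_eq_norm]
    linarith [norm_sub_le (f t) (f 0), hB t ht, hB 0 (Metric.mem_ball_self hρ0)]
  have hd : DifferentiableOn ℂ (dslope φ 0) (Metric.ball 0 ρ) :=
    (differentiableOn_dslope (Metric.ball_mem_nhds 0 hρ0)).2 hφ
  have h1 := hschwarz hd (hschwarz hφ hK) 1 (by simpa)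
  rw [dslope_of_ne _ one_ne_zero, slope_def_field, dslope_of_ne _ one_ne_zero, slope_def_field,
    dslope_same, sub_zero, div_one, div_one] at h1
  exact h1.trans_eq (by field_simp; ring)

variable {R d M ω β : ℝ} {k : ℂ × ℂ → ℂ} {τ σ ξ η : ℂ}

lemma norm_sub_sub_partial_le {ρ K : ℝ} (hρ : 1 < ρ)
    (hk : ∀ s ∈ Metric.ball (0 : ℂ) ρ, DifferentiableAt ℂ k (τ + s * ξ, σ + s * η))
    (hK : ∀ s ∈ Metric.ball (0 : ℂ) ρ, ‖k (τ + s * ξ, σ + s * η)‖ ≤ K) :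
    ‖k (τ + ξ, σ + η) - k (τ, σ) - (partialFst k (τ, σ) * ξ + partialSnd k (τ, σ) * η)‖ ≤
      4 * K / ρ ^ 2 := by
  have hline (a b s : ℂ) : HasDerivAt (fun s : ℂ ↦ a + s * b) b s := by
    simpa using ((hasDerivAt_id s).mul_const b).const_add a
  have hderiv (s) (hs : s ∈ Metric.ball (0 : ℂ) ρ) :=
    hasDerivAt_comp_pair (hk s hs) (hline τ ξ s) (hline σ η s)
  have := norm_sub_sub_deriv_le hρ
    (fun s hs ↦ (hderiv s hs).differentiableAt.differentiableWithinAt) hK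
  rw [(hderiv 0 (Metric.mem_ball_self (by linarith))).deriv] at this
  simpa using this

lemma add_mem_twoPointDomain_of_le (hω : 0 < ω) (hR1 : R ≤ 1) (hωR : ω ≤ R / 100) (hωd : 2 * ω < d)
    (hτ : |τ.im| ≤ 11 * R / 16) (hσ : |σ.im| ≤ 11 * R / 16)
    (hl : 3 / 8 * ω ≤ ‖σ - τ‖) (hu : ‖σ - τ‖ ≤ ω) (hξ : ‖ξ‖ ≤ R / 8) (hηξ : ‖η - ξ‖ ≤ R / 8 * ω) :
    (τ + ξ, σ + η) ∈ twoPointDomain R d ∧ ω / 4 ≤ ‖(σ + η) - (τ + ξ)‖ := by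
  have hη : ‖η‖ ≤ R / 8 + R / 8 * ω := by
    linarith [norm_add_le ξ (η - ξ), congrArg norm (add_sub_cancel ξ η)]
  have hRω : R / 8 * ω ≤ R / 8 * (1 / 100) := by nlinarith
  have hsplit : (σ + η) - (τ + ξ) = (σ - τ) + (η - ξ) := by ring
  have hlower : ω / 4 ≤ ‖(σ + η) - (τ + ξ)‖ := by
    have := norm_sub_le (σ - τ + (η - ξ)) (η - ξ)
    rw [add_sub_cancel_right] at this
    rw [hsplit]
    nlinarith
  have him {a b : ℂ} : |(a + b).im| ≤ |a.im| + ‖b‖ :=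
    (abs_add_le a.im b.im).trans (by linarith [abs_im_le_norm b])
  refine ⟨⟨him.trans_lt (by linarith), him.trans_lt (by linarith), fun h ↦ ?_, ?_⟩, hlower⟩
  · rw [show σ + η - (τ + ξ) = 0 from sub_eq_zero.2 h.symm, norm_zero] at hlower
    linarith
  · rw [hsplit]
    nlinarith [norm_add_le (σ - τ) (η - ξ)]

lemma norm_sub_sub_partial_le_of_pole (hω : 0 < ω) (hβ : 0 < β)
    (hR1 : R ≤ 1) (hωβ : ω * β ≤ R / 16) (hωR : ω ≤ R / 100) (hωd : 2 * ω < d)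
    (hMω : M ≤ 1 / ω ^ 2) (hk : ∀ p ∈ twoPointDomain R d, DifferentiableAt ℂ k p)
    (hM : ∀ p ∈ twoPointDomain R d, ‖k p‖ ≤ 1 / ‖p.2 - p.1‖ ^ 2 + M)
    (hτ : |τ.im| ≤ 11 * R / 16) (hσ : |σ.im| ≤ 11 * R / 16)
    (hl : 3 / 8 * ω ≤ ‖σ - τ‖) (hu : ‖σ - τ‖ ≤ ω)
    (hξ : ‖ξ‖ ≤ ω * β) (hηξ : ‖η - ξ‖ ≤ ω ^ 2 * β) :
    ‖k (τ + ξ, σ + η) - k (τ, σ) - (partialFst k (τ, σ) * ξ + partialSnd k (τ, σ) * η)‖ ≤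
      5000 * β ^ 2 / R ^ 2 := by
  have hR : 0 < R := by linarith
  obtain ⟨ρ, hρ⟩ : ∃ ρ, ρ = R / (8 * (ω * β)) := ⟨_, rfl⟩
  have hρβ : ρ * (ω * β) = R / 8 := by rw [hρ]; field_simp
  have hρ1 : 1 < ρ := by rw [hρ, lt_div_iff₀ (by positivity)]; linarith
  have hmem (s) (hs : s ∈ Metric.ball (0 : ℂ) ρ) :
      (τ + s * ξ, σ + s * η) ∈ twoPointDomain R d ∧ ω / 4 ≤ ‖(σ + s * η) - (τ + s * ξ)‖ := by
    rw [mem_ball_zero_iff] at hs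
    refine add_mem_twoPointDomain_of_le hω hR1 hωR hωd hτ hσ hl hu ?_ ?_
    · rw [norm_mul, ← hρβ]
      gcongr
    · rw [← mul_sub, norm_mul, ← hρβ]
      calc ‖s‖ * ‖η - ξ‖ ≤ ρ * (ω ^ 2 * β) := by gcongr
        _ = ρ * (ω * β) * ω := by ring
  refine (norm_sub_sub_partial_le (K := 17 / ω ^ 2) hρ1 (fun s hs ↦ hk _ (hmem s hs).1)
    fun s hs ↦ ?_).trans ?_
  · obtain ⟨hdom, hlower⟩ := hmem s hs
    calc _ ≤ 1 / (ω / 4) ^ 2 + 1 / ω ^ 2 := (hM _ hdom).trans (by gcongr)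
      _ = 17 / ω ^ 2 := by field_simp; norm_num
  · calc 4 * (17 / ω ^ 2) / ρ ^ 2 = 4352 * β ^ 2 / R ^ 2 := by rw [hρ]; field_simp; norm_num
      _ ≤ 5000 * β ^ 2 / R ^ 2 := by gcongr; norm_num

end Taylor

section TwistCoefficient

variable {ω r : ℝ}

/-- A periodic coefficient that is a small perturbation of `-16 / ω ^ 3`: the second derivative
`∂₁∂₂h` along a curve with increments `≈ ω / 2`, where `h` has the pole `1 / (σ - τ)`. -/
structure TwistCoefficient (r ω : ℝ) (A : ℂ → ℂ) : Prop where
  stripPeriodic : StripPeriodic r A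
  ne_zero : ∀ z ∈ strip r, A z ≠ 0
  norm_inv_add_le : ∀ z ∈ strip r, ‖(A z)⁻¹ + ω ^ 3 / 16‖ ≤ ω ^ 3 / 32

lemma norm_le_of_norm_sub_one_le {p : ℂ} {c : ℝ} (hp : ‖p - 1‖ ≤ c) : ‖p‖ ≤ 1 + c := by
  have := norm_le_norm_add_norm_sub' p 1
  rw [norm_one] at this
  linarith

lemma norm_mul_mul_one_sub_sub_one_le {p q b : ℂ} (hp : ‖p - 1‖ ≤ 1 / 50) (hq : ‖q - 1‖ ≤ 1 / 50)
    (hb : ‖b‖ ≤ 1 / 100) : ‖p * q * (1 - b) - 1‖ ≤ 1 / 10 := by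
  have hp' := norm_le_of_norm_sub_one_le hp
  have hq' := norm_le_of_norm_sub_one_le hq
  calc ‖p * q * (1 - b) - 1‖ = ‖(p - 1) + p * (q - 1) - p * q * b‖ := by congr 1; ring
    _ ≤ ‖p - 1‖ + ‖p‖ * ‖q - 1‖ + ‖p‖ * ‖q‖ * ‖b‖ := by
      rw [← norm_mul, ← norm_mul, ← norm_mul]
      exact (norm_sub_le _ _).trans (by gcongr; exact norm_add_le _ _)
    _ ≤ 1 / 50 + (1 + 1 / 50) * (1 / 50) + (1 + 1 / 50) * (1 + 1 / 50) * (1 / 100) := by gcongr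
    _ ≤ 1 / 10 := by norm_num

lemma norm_sub_one_add_pow_three_div_le {a D : ℂ} (ha : ‖a‖ ≤ 1 / 20) (hD : ‖D - 1‖ ≤ 1 / 10) :
    ‖(D - (1 + a) ^ 3) / D‖ ≤ 1 / 2 := by
  have hD' : 9 / 10 ≤ ‖D‖ := by
    have := norm_le_norm_add_norm_sub D 1
    rw [norm_one] at this
    linarith
  rw [norm_div, div_le_iff₀ (by linarith)]
  calc ‖D - (1 + a) ^ 3‖ = ‖(D - 1) - (3 * a + 3 * a ^ 2 + a ^ 3)‖ := by congr 1; ring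
    _ ≤ ‖D - 1‖ + (3 * ‖a‖ + 3 * ‖a‖ ^ 2 + ‖a‖ ^ 3) := by
      refine (norm_sub_le _ _).trans (add_le_add_right (norm_add₃_le.trans_eq ?_) _)
      simp
    _ ≤ 1 / 10 + (3 * (1 / 20) + 3 * (1 / 20) ^ 2 + (1 / 20) ^ 3) := by gcongr
    _ ≤ 1 / 2 * ‖D‖ := by linarith

lemma exists_eq_half_mul_one_add {δ : ℂ} (hω : 0 < ω) (hδ : ‖δ - ω / 2‖ ≤ ω / 40) :
    ∃ a : ℂ, ‖a‖ ≤ 1 / 20 ∧ δ = ω / 2 * (1 + a) := by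
  have hωc : (ω : ℂ) ≠ 0 := mod_cast hω.ne'
  refine ⟨(δ - ω / 2) / (ω / 2), ?_, by field_simp; ring⟩
  rw [norm_div, norm_div, norm_real, Real.norm_of_nonneg hω.le, RCLike.norm_ofNat,
    div_le_iff₀ (by positivity)]
  linarith

lemma exists_eq_neg_two_div_pow_three_mul {M : ℝ} {δ H : ℂ} (hω : 0 < ω) (hω1 : ω ≤ 1 / 100)
    (hM : M * ω ≤ 1 / 100) (hδ0 : δ ≠ 0) (hδ : ‖δ‖ ≤ ω) (hH : ‖H + 2 / δ ^ 3‖ ≤ M) :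
    ∃ b : ℂ, ‖b‖ ≤ 1 / 100 ∧ H = -(2 / δ ^ 3) * (1 - b) := by
  have hM0 : 0 ≤ M := (norm_nonneg _).trans hH
  refine ⟨(H + 2 / δ ^ 3) * δ ^ 3 / 2, ?_, by field_simp; ring⟩
  calc ‖(H + 2 / δ ^ 3) * δ ^ 3 / 2‖ ≤ M * ω ^ 3 / 2 := by
        rw [norm_div, norm_mul, norm_pow, RCLike.norm_ofNat]
        gcongr
    _ = M * ω * ω ^ 2 / 2 := by ring
    _ ≤ 1 / 100 * 1 / 2 := by gcongr; exact pow_le_one₀ hω.le (by linarith)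
    _ ≤ 1 / 100 := by norm_num

lemma norm_inv_mul_mul_add_le {M : ℝ} {δ H p q : ℂ} (hω : 0 < ω) (hω1 : ω ≤ 1 / 100)
    (hM : M * ω ≤ 1 / 100) (hδ : ‖δ - ω / 2‖ ≤ ω / 40) (hH : ‖H + 2 / δ ^ 3‖ ≤ M)
    (hp : ‖p - 1‖ ≤ 1 / 50) (hq : ‖q - 1‖ ≤ 1 / 50) :
    p * q * H ≠ 0 ∧ ‖(p * q * H)⁻¹ + ω ^ 3 / 16‖ ≤ ω ^ 3 / 32 := by
  have hωc : (ω : ℂ) ≠ 0 := mod_cast hω.ne'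
  have hωn : ‖(ω : ℂ)‖ = ω := by simp [hω.le]
  obtain ⟨a, ha, rfl⟩ := exists_eq_half_mul_one_add hω hδ
  have ha0 : 1 + a ≠ 0 := fun h ↦ by
    rw [eq_neg_of_add_eq_zero_right h] at ha
    norm_num at ha
  have hδω : ‖ω / 2 * (1 + a)‖ ≤ ω := by
    have := norm_add_le_of_le norm_one.le ha
    rw [norm_mul, norm_div, hωn, RCLike.norm_ofNat]
    nlinarith
  obtain ⟨b, hb, rfl⟩ :=
    exists_eq_neg_two_div_pow_three_mul hω hω1 hM (by simp [hωc, ha0]) hδω hH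
  have hD := norm_mul_mul_one_sub_sub_one_le hp hq hb
  have hD0 : p * q * (1 - b) ≠ 0 := fun h ↦ by norm_num [h] at hD
  rw [show p * q * (-(2 / (ω / 2 * (1 + a)) ^ 3) * (1 - b)) =
      -(2 / (ω / 2 * (1 + a)) ^ 3) * (p * q * (1 - b)) by ring]
  generalize p * q * (1 - b) = D at hD hD0
  refine ⟨by simp [hωc, ha0, hD0], ?_⟩
  calc _ = ‖(ω : ℂ) ^ 3 / 16 * ((D - (1 + a) ^ 3) / D)‖ := by congr 1; field_simp; ring
    _ ≤ ω ^ 3 / 16 * (1 / 2) := by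
        rw [norm_mul, norm_div, norm_pow, hωn, RCLike.norm_ofNat]
        gcongr
        exact norm_sub_one_add_pow_three_div_le ha hD
    _ = ω ^ 3 / 32 := by ring

namespace TwistCoefficient

variable {A B : ℂ → ℂ}

lemma mono {s : ℝ} (hA : TwistCoefficient r ω A) (h : s ≤ r) : TwistCoefficient s ω A where
  stripPeriodic := hA.stripPeriodic.mono h
  ne_zero z hz := hA.ne_zero z (strip_mono h hz)
  norm_inv_add_le z hz := hA.norm_inv_add_le z (strip_mono h hz)

lemma inv (hA : TwistCoefficient r ω A) : StripPeriodic r fun z ↦ (A z)⁻¹ :=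
  hA.stripPeriodic.inv hA.ne_zero

lemma norm_inv_le (hω : 0 < ω) (hA : TwistCoefficient r ω A) {z : ℂ} (hz : z ∈ strip r) :
    ‖(A z)⁻¹‖ ≤ 3 * ω ^ 3 / 32 := by
  have := norm_sub_le ((A z)⁻¹ + ω ^ 3 / 16) ((ω : ℂ) ^ 3 / 16)
  rw [add_sub_cancel_right, norm_div, norm_pow, norm_real, Real.norm_of_nonneg hω.le,
    RCLike.norm_ofNat] at this
  linarith [hA.norm_inv_add_le z hz]

lemma le_norm_mean_inv_add_inv (hr : 0 < r) (hω : 0 < ω) (hA : TwistCoefficient r ω A)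
    (hB : TwistCoefficient r ω B) : ω ^ 3 / 16 ≤ ‖mean fun z ↦ (A z)⁻¹ + (B z)⁻¹‖ := by
  have hmean := mean_add hr (hA.inv.add hB.inv) (.const r (ω ^ 3 / 8))
  have hsmall : ‖mean fun z ↦ (A z)⁻¹ + (B z)⁻¹ + ((ω ^ 3 / 8 : ℝ) : ℂ)‖ ≤ ω ^ 3 / 16 := by
    refine norm_mean_le hr fun z hz ↦ ?_
    calc _ = ‖((A z)⁻¹ + ω ^ 3 / 16) + ((B z)⁻¹ + ω ^ 3 / 16)‖ := by
          congr 1; push_cast; ring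
      _ ≤ ω ^ 3 / 32 + ω ^ 3 / 32 :=
          norm_add_le_of_le (hA.norm_inv_add_le z hz) (hB.norm_inv_add_le z hz)
      _ = ω ^ 3 / 16 := by ring
  rw [hmean, mean_const] at hsmall
  have := norm_sub_le ((mean fun z ↦ (A z)⁻¹ + (B z)⁻¹) + ((ω ^ 3 / 8 : ℝ) : ℂ))
    (mean fun z ↦ (A z)⁻¹ + (B z)⁻¹)
  rw [add_sub_cancel_left, norm_real, Real.norm_of_nonneg (by positivity)] at this
  linarith

end TwistCoefficient

end TwistCoefficient

section LinearizedEquation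

variable {ω κ r e X : ℝ} {A B F G Q : ℂ → ℂ}

lemma exists_real_const_mean_add_eq_zero {f g : ℂ → ℂ} (hr : 0 < r) (hf : StripPeriodic r f)
    (hg : StripPeriodic r g) (h0 : mean g ≠ 0) :
    ∃ c : ℝ, |c| = ‖mean f‖ / ‖mean g‖ ∧ mean (fun z ↦ f z + c * g z) = 0 := by
  obtain ⟨c, hc⟩ : ∃ c : ℝ, (c : ℂ) = -mean f / mean g :=
    ⟨-(mean f).re / (mean g).re, by
      push_cast
      rw [ofReal_re_mean hr hf, ofReal_re_mean hr hg]⟩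
  refine ⟨c, by rw [← Real.norm_eq_abs, ← norm_real, hc, norm_div, norm_neg], ?_⟩
  rw [mean_add hr hf ((StripPeriodic.const r c).mul hg), mean_const_mul, hc,
    div_mul_cancel₀ _ h0, add_neg_cancel]

lemma exists_const_mean_div_add_div_eq_zero (hω : 0 < ω) (hr : 0 < r) (hX : 0 < X)
    (hA : TwistCoefficient r ω A) (hB : TwistCoefficient r ω B) (hQ : StripPeriodic r Q)
    (hG : StripPeriodic r G) (hQX : ∀ z ∈ strip r, ‖Q z‖ ≤ 3 * X)
    (hGX : ∀ z ∈ strip r, ‖G z‖ ≤ X / 50) :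
    ∃ c : ℝ, |c| ≤ 10 * X ∧
      mean (fun z ↦ (Q z + c + G z) * (A z)⁻¹ + (Q z + c) * (B z)⁻¹) = 0 := by
  have hN : StripPeriodic r fun z ↦ (Q z + G z) * (A z)⁻¹ + Q z * (B z)⁻¹ :=
    ((hQ.add hG).mul hA.inv).add (hQ.mul hB.inv)
  have hNX : ‖mean fun z ↦ (Q z + G z) * (A z)⁻¹ + Q z * (B z)⁻¹‖ ≤
      (3 * X + X / 50) * (3 * ω ^ 3 / 32) + 3 * X * (3 * ω ^ 3 / 32) := by
    refine norm_mean_le hr fun z hz ↦ norm_add_le_of_le ?_ ?_ <;> rw [norm_mul]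
    · gcongr
      exacts [norm_add_le_of_le (hQX z hz) (hGX z hz), hA.norm_inv_le hω hz]
    · gcongr
      exacts [hQX z hz, hB.norm_inv_le hω hz]
  have hμ := hA.le_norm_mean_inv_add_inv hr hω hB
  have hω3 : 0 < ω ^ 3 / 16 := by positivity
  obtain ⟨c, hc, hmean⟩ := exists_real_const_mean_add_eq_zero hr hN (hA.inv.add hB.inv)
    (norm_pos_iff.1 (hω3.trans_le hμ))
  refine ⟨c, ?_, ?_⟩
  · rw [hc, div_le_iff₀ (hω3.trans_le hμ)]
    nlinarith [mul_pos hX hω3]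
  · rw [← hmean]
    congr 1 with z
    ring

lemma exists_potential (hω : 0 < ω) (hω1 : ω ≤ 1 / 100) (hd : Diophantine ω)
    (hκ : 0 < κ) (hκ1 : κ ≤ 1) (hκr : κ < r) (he : 0 < e)
    (hX : X = cohomologicalConst * e / (ω * κ ^ 3)) (hF : StripPeriodic r F)
    (hG : StripPeriodic r G) (hA : TwistCoefficient r ω A) (hB : TwistCoefficient r ω B)
    (hFe : ∀ z ∈ strip r, ‖F z‖ ≤ 3 * e) (hGe : ∀ z ∈ strip r, ‖G z‖ ≤ 2 * e)
    (hm : mean F = 0) :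
    ∃ Q, StripPeriodic (r - κ) Q ∧
      (∀ z ∈ strip (r - κ), ‖Q z‖ ≤ 13 * X ∧ ‖Q z + G z‖ ≤ 14 * X) ∧
      (∀ z ∈ strip (r - κ), Q (z + ω) - Q z = -F (z + ω)) ∧
      mean (fun z ↦ (Q z + G z) * (A z)⁻¹ + Q z * (B z)⁻¹) = 0 := by
  have hK := one_le_cohomologicalConst
  have hle : r - κ ≤ r := by linarith
  have hr : 0 < r := by linarith
  have hX0 : 0 < X := by rw [hX]; positivity
  have heX : 2 * e ≤ X / 50 := by
    rw [hX, div_div, le_div_iff₀ (by positivity)]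
    have : ω * κ ^ 3 ≤ 1 / 100 * 1 := by gcongr; exact pow_le_one₀ hκ.le hκ1
    nlinarith
  have hmF : mean (fun z ↦ -F (z + ω)) = 0 := by
    have := mean_const_mul (-1) fun z ↦ F (z + ω)
    rwa [mean_comp_add_ofReal hr hF, hm, mul_zero, funext fun z ↦ neg_one_mul _] at this
  obtain ⟨Q, hQ, hQX, hQeq⟩ := exists_cohomological_solution hω hd hκ hκr
    (hF.comp_add_ofReal ω).neg
    (fun z hz ↦ (norm_neg _).trans_le (hFe _ (add_ofReal_mem_strip hz ω))) hmF
  replace hQX : ∀ z ∈ strip (r - κ), ‖Q z‖ ≤ 3 * X := fun z hz ↦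
    (hQX z hz).trans_eq (by rw [hX]; ring)
  have hGX : ∀ z ∈ strip (r - κ), ‖G z‖ ≤ X / 50 := fun z hz ↦
    (hGe z (strip_mono hle hz)).trans heX
  obtain ⟨c, hcX, hcm⟩ := exists_const_mean_div_add_div_eq_zero hω (by linarith) hX0
    (hA.mono hle) (hB.mono hle) hQ (hG.mono hle) hQX hGX
  refine ⟨fun z ↦ Q z + c, hQ.add (.const _ c), fun z hz ↦ ?_, fun z hz ↦ ?_, hcm⟩
  · have hQc := norm_add_le_of_le (hQX z hz) ((norm_real c).trans_le hcX)
    constructor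
    · linarith
    · linarith [norm_add_le_of_le hQc (hGX z hz)]
  · rw [add_sub_add_right_eq_sub, hQeq z hz]

lemma linearized_equations_of_potential {w : ℂ → ℂ} {z : ℂ} (hA : A z ≠ 0) (hB : B z ≠ 0)
    (hB' : B (z - ω) ≠ 0) (hQ : Q z - Q (z - ω) = -F z)
    (hw' : w z - w (z - ω) =
      (Q (z - ω) + G (z - ω)) * (A (z - ω))⁻¹ + Q (z - ω) * (B (z - ω))⁻¹)
    (hw : w (z + ω) - w z = (Q z + G z) * (A z)⁻¹ + Q z * (B z)⁻¹) :
    F z - G z + A z * (w z + (Q z + G z) * (A z)⁻¹ - w z) +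
        B (z - ω) * (w (z - ω) + (Q (z - ω) + G (z - ω)) * (A (z - ω))⁻¹ - w z) = 0 ∧
      G z + A z * (w z - (w z + (Q z + G z) * (A z)⁻¹)) +
        B z * (w (z + ω) - (w z + (Q z + G z) * (A z)⁻¹)) = 0 := by
  constructor
  · rw [show w (z - ω) + (Q (z - ω) + G (z - ω)) * (A (z - ω))⁻¹ - w z =
      -(Q (z - ω) * (B (z - ω))⁻¹) by linear_combination -hw']
    field_simp
    linear_combination hQ
  · rw [show w (z + ω) - (w z + (Q z + G z) * (A z)⁻¹) = Q z * (B z)⁻¹ by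
      linear_combination hw]
    field_simp
    ring

-- The unknown `Q = A (v - w) - G` turns the system into the two scalar cohomological equations
-- `Q (z + ω) - Q z = -F (z + ω)` and `w (z + ω) - w z = (Q + G) / A + Q / B`; the free constant in
-- `Q` is what makes the second right-hand side have mean zero.
lemma exists_linearized_solution (hω : 0 < ω) (hω1 : ω ≤ 1 / 100) (hd : Diophantine ω)
    (hκ : 0 < κ) (hκ1 : κ ≤ 1) (hκr : 2 * κ < r) (he : 0 < e) (hF : StripPeriodic r F)
    (hG : StripPeriodic r G) (hA : TwistCoefficient r ω A) (hB : TwistCoefficient r ω B)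
    (hFe : ∀ z ∈ strip r, ‖F z‖ ≤ 3 * e) (hGe : ∀ z ∈ strip r, ‖G z‖ ≤ 2 * e)
    (hm : mean F = 0) :
    ∃ w v, StripPeriodic (r - 2 * κ) w ∧ StripPeriodic (r - 2 * κ) v ∧
      (∀ z ∈ strip (r - 2 * κ), ‖w z‖ ≤ 3 * cohomologicalConst ^ 2 * ω * e / κ ^ 6) ∧
      (∀ z ∈ strip (r - 2 * κ), ‖v z - w z‖ ≤ 2 * cohomologicalConst * ω ^ 2 * e / κ ^ 3) ∧
      ∀ z ∈ strip (r - 2 * κ),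
        F z - G z + A z * (v z - w z) + B (z - ω) * (v (z - ω) - w z) = 0 ∧
        G z + A z * (w z - v z) + B z * (w (z + ω) - v z) = 0 := by
  obtain ⟨X, hX⟩ : ∃ X, X = cohomologicalConst * e / (ω * κ ^ 3) := ⟨_, rfl⟩
  have hXω : X * ω ^ 3 = cohomologicalConst * ω ^ 2 * e / κ ^ 3 := by rw [hX]; field_simp
  obtain ⟨Q, hQ, hQX, hQeq, hmQ⟩ :=
    exists_potential hω hω1 hd hκ hκ1 (by linarith) he hX hF hG hA hB hFe hGe hm
  replace hA := hA.mono (show r - κ ≤ r by linarith)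
  replace hB := hB.mono (show r - κ ≤ r by linarith)
  have hU := (hQ.add (hG.mono (by linarith))).mul hA.inv
  have hUX : ∀ z ∈ strip (r - κ), ‖(Q z + G z) * (A z)⁻¹‖ ≤ 2 * (X * ω ^ 3) := fun z hz ↦ by
    have := norm_mul_le_of_le (hQX z hz).2 (hA.norm_inv_le hω hz)
    have := (norm_nonneg _).trans this
    linarith
  have hUVX : ∀ z ∈ strip (r - κ), ‖(Q z + G z) * (A z)⁻¹ + Q z * (B z)⁻¹‖ ≤ 3 * (X * ω ^ 3) :=
    fun z hz ↦ by
      have := norm_add_le_of_le (norm_mul_le_of_le (hQX z hz).2 (hA.norm_inv_le hω hz))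
        (norm_mul_le_of_le (hQX z hz).1 (hB.norm_inv_le hω hz))
      have := (norm_nonneg _).trans this
      linarith
  obtain ⟨w, hw, hwX, hweq⟩ := exists_cohomological_solution hω hd hκ (by linarith)
    (hU.add (hQ.mul hB.inv)) hUVX hmQ
  rw [show r - κ - κ = r - 2 * κ by ring] at hw hwX hweq
  have hsub : strip (r - 2 * κ) ⊆ strip (r - κ) := strip_mono (by linarith)
  refine ⟨w, fun z ↦ w z + (Q z + G z) * (A z)⁻¹, hw, hw.add (hU.mono (by linarith)),
    fun z hz ↦ (hwX z hz).trans_eq (by rw [hXω]; field_simp), fun z hz ↦ ?_,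
    fun z hz ↦ ?_⟩
  · rw [add_sub_cancel_left]
    exact (hUX z (hsub hz)).trans_eq (by rw [hXω]; ring)
  · have hz' := sub_ofReal_mem_strip hz ω
    have hQ' := hQeq _ (hsub hz')
    have hw' := hweq _ hz'
    rw [sub_add_cancel] at hQ' hw'
    exact linearized_equations_of_potential (hA.ne_zero z (hsub hz)) (hB.ne_zero z (hsub hz))
      (hB.ne_zero _ (hsub hz')) hQ' hw' (hweq z hz)

end LinearizedEquation

/-- Smallness of the frequency `ω` relative to the domain and to the error bound `M` of a
`TwistGenerator R d M`, as required by the Newton iteration. -/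
structure SmallParameters (ω R d M : ℝ) : Prop where
  ω_pos : 0 < ω
  R_le_one : R ≤ 1
  ω_le : ω ≤ R / 100
  two_mul_ω_lt : 2 * ω < d
  M_mul_ω_le : M * ω ≤ 1 / 100

namespace SmallParameters

variable {ω R d M : ℝ}

lemma R_pos (P : SmallParameters ω R d M) : 0 < R := by linarith [P.ω_pos, P.ω_le]

lemma ω_le_one_div (P : SmallParameters ω R d M) : ω ≤ 1 / 100 := by
  linarith [P.ω_le, P.R_le_one]

lemma M_le_one_div_sq (P : SmallParameters ω R d M) : M ≤ 1 / ω ^ 2 := by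
  rw [le_div_iff₀ (pow_pos P.ω_pos 2)]
  nlinarith [P.M_mul_ω_le, P.ω_le_one_div, P.ω_pos]

end SmallParameters

/-- Pairs of points of the strip `|Im z| ≤ 11 R / 16` at distance about `ω / 2`, around which a
`TwistGenerator` can be expanded. -/
structure IsTwistPair (ω R : ℝ) (p : ℂ × ℂ) : Prop where
  abs_im_fst_le : |p.1.im| ≤ 11 * R / 16
  abs_im_snd_le : |p.2.im| ≤ 11 * R / 16
  le_norm_sub : 3 / 8 * ω ≤ ‖p.2 - p.1‖
  norm_sub_le : ‖p.2 - p.1‖ ≤ ω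

section TwistPair

variable {ω R d M β ε : ℝ} {k : ℂ × ℂ → ℂ} {p q : ℂ × ℂ} {ξ η ξ' η' : ℂ}

lemma IsTwistPair.mem_twoPointDomain (P : SmallParameters ω R d M) (hp : IsTwistPair ω R p) :
    p ∈ twoPointDomain R d := by
  have hω := P.ω_pos
  refine ⟨by linarith [P.R_pos, hp.abs_im_fst_le], by linarith [P.R_pos, hp.abs_im_snd_le],
    fun h ↦ ?_, by linarith [hp.norm_sub_le, P.two_mul_ω_lt]⟩
  have := hp.le_norm_sub
  rw [h, sub_self, norm_zero] at this
  linarith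

lemma TwistGenerator.norm_partialFst_le {h : ℂ × ℂ → ℂ} (K : TwistGenerator R d M h)
    (hp : p ∈ twoPointDomain R d) : ‖partialFst h p‖ ≤ 1 / ‖p.2 - p.1‖ ^ 2 + M := by
  have := norm_add_le (1 / (p.2 - p.1) ^ 2) (partialFst h p - 1 / (p.2 - p.1) ^ 2)
  rw [add_sub_cancel, norm_div, norm_one, norm_pow] at this
  exact this.trans (add_le_add_right (K.norm_partialFst_sub_le p hp) _)

lemma TwistGenerator.norm_partialSnd_le {h : ℂ × ℂ → ℂ} (K : TwistGenerator R d M h)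
    (hp : p ∈ twoPointDomain R d) : ‖partialSnd h p‖ ≤ 1 / ‖p.2 - p.1‖ ^ 2 + M := by
  have := norm_sub_le (partialSnd h p + 1 / (p.2 - p.1) ^ 2) (1 / (p.2 - p.1) ^ 2)
  rw [add_sub_cancel_right, norm_div, norm_one, norm_pow] at this
  linarith [K.norm_partialSnd_add_le p hp]

lemma norm_sub_le_of_linearized (P : SmallParameters ω R d M) (hβ : 0 < β) (hβR : β ≤ R / 16)
    (hk : ∀ p ∈ twoPointDomain R d, DifferentiableAt ℂ k p)
    (hM : ∀ p ∈ twoPointDomain R d, ‖k p‖ ≤ 1 / ‖p.2 - p.1‖ ^ 2 + M)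
    (hp : IsTwistPair ω R p) (hq : IsTwistPair ω R q)
    (hξ : ‖ξ‖ ≤ ω * β) (hηξ : ‖η - ξ‖ ≤ ω ^ 2 * β)
    (hξ' : ‖ξ'‖ ≤ ω * β) (hηξ' : ‖η' - ξ'‖ ≤ ω ^ 2 * β)
    (hε : ‖k p - k q + ((partialFst k p * ξ + partialSnd k p * η) -
      (partialFst k q * ξ' + partialSnd k q * η'))‖ ≤ ε) :
    ‖k (p.1 + ξ, p.2 + η) - k (q.1 + ξ', q.2 + η')‖ ≤ 10000 * β ^ 2 / R ^ 2 + ε := by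
  have hωβ : ω * β ≤ R / 16 := by nlinarith [P.ω_le_one_div]
  have hremainder {p : ℂ × ℂ} {ξ η : ℂ} (hp : IsTwistPair ω R p) (hξ : ‖ξ‖ ≤ ω * β)
      (hηξ : ‖η - ξ‖ ≤ ω ^ 2 * β) :=
    norm_sub_sub_partial_le_of_pole P.ω_pos hβ P.R_le_one hωβ P.ω_le P.two_mul_ω_lt
      P.M_le_one_div_sq hk hM hp.abs_im_fst_le hp.abs_im_snd_le hp.le_norm_sub hp.norm_sub_le
      hξ hηξ
  calc ‖k (p.1 + ξ, p.2 + η) - k (q.1 + ξ', q.2 + η')‖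
      = ‖(k (p.1 + ξ, p.2 + η) - k p - (partialFst k p * ξ + partialSnd k p * η)) -
          (k (q.1 + ξ', q.2 + η') - k q - (partialFst k q * ξ' + partialSnd k q * η')) +
          (k p - k q + ((partialFst k p * ξ + partialSnd k p * η) -
            (partialFst k q * ξ' + partialSnd k q * η')))‖ := by congr 1; ring
    _ ≤ 5000 * β ^ 2 / R ^ 2 + 5000 * β ^ 2 / R ^ 2 + ε :=
        norm_add_le_of_le (norm_sub_le_of_le (hremainder hp hξ hηξ) (hremainder hq hξ' hηξ')) hε
    _ = 10000 * β ^ 2 / R ^ 2 + ε := by ring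

lemma le_norm_and_norm_le_of_norm_sub_half_le {δ : ℂ} {b : ℝ} (hω : 0 < ω) (hb : b ≤ 1 / 50)
    (h : ‖δ - ω / 2‖ ≤ ω * b) : 3 / 8 * ω ≤ ‖δ‖ ∧ ‖δ‖ ≤ ω := by
  have hhalf : ‖(ω : ℂ) / 2‖ = ω / 2 := by simp [abs_of_pos hω]
  have hlower := norm_sub_le δ (δ - ω / 2)
  have hupper := norm_add_le (δ - ω / 2) (ω / 2)
  rw [sub_sub_cancel, hhalf] at hlower
  rw [sub_add_cancel, hhalf] at hupper
  constructor <;> nlinarith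

end TwistPair

section ErrorFunctions

/-- The defect in the first invariance equation `∂₁h(x, y) = ∂₁h(x, y ∘ (· - ω))`. -/
noncomputable def errorFst (h : ℂ × ℂ → ℂ) (ω : ℝ) (x y : ℂ → ℂ) (z : ℂ) : ℂ :=
  partialFst h (x z, y z) - partialFst h (x z, y (z - ω))

/-- The defect in the second invariance equation `∂₂h(x, y) = ∂₂h(x ∘ (· + ω), y)`. -/
noncomputable def errorSnd (h : ℂ × ℂ → ℂ) (ω : ℝ) (x y : ℂ → ℂ) (z : ℂ) : ℂ :=
  partialSnd h (x z, y z) - partialSnd h (x (z + ω), y z)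

/-- The derivative of `errorFst h ω x y z` in the direction `(ξ, η)` of variations of `(x, y)`. -/
noncomputable def linearizedErrorFst (h : ℂ × ℂ → ℂ) (ω : ℝ) (x y ξ η : ℂ → ℂ) (z : ℂ) : ℂ :=
  (partialFst (partialFst h) (x z, y z) * ξ z + partialSnd (partialFst h) (x z, y z) * η z) -
    (partialFst (partialFst h) (x z, y (z - ω)) * ξ z +
      partialSnd (partialFst h) (x z, y (z - ω)) * η (z - ω))

/-- The derivative of `errorSnd h ω x y z` in the direction `(ξ, η)` of variations of `(x, y)`. -/
noncomputable def linearizedErrorSnd (h : ℂ × ℂ → ℂ) (ω : ℝ) (x y ξ η : ℂ → ℂ) (z : ℂ) : ℂ :=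
  (partialFst (partialSnd h) (x z, y z) * ξ z + partialSnd (partialSnd h) (x z, y z) * η z) -
    (partialFst (partialSnd h) (x (z + ω), y z) * ξ (z + ω) +
      partialSnd (partialSnd h) (x (z + ω), y z) * η z)

end ErrorFunctions

/-- Analytic degree-one lifts `x, y` with `y ≈ x + ω / 2` that satisfy the two invariance equations
up to an error `e`; `a` measures the distance to the unperturbed curve `x z = z`,
`y z = z + ω / 2`. -/
structure ApproxInvariantCurve (h : ℂ × ℂ → ℂ) (ω r a e : ℝ) (x y : ℂ → ℂ) : Prop where
  lift_fst : IsStripLift r x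
  lift_snd : IsStripLift r y
  norm_fst_sub_le : ∀ z ∈ strip r, ‖x z - z‖ ≤ a
  norm_snd_sub_fst_sub_le : ∀ z ∈ strip r, ‖y z - x z - ω / 2‖ ≤ ω * a
  norm_deriv_fst_sub_le : ∀ z ∈ strip r, ‖deriv x z - 1‖ ≤ a
  norm_deriv_snd_sub_le : ∀ z ∈ strip r, ‖deriv y z - deriv x z‖ ≤ ω * a
  norm_errorFst_le : ∀ z ∈ strip r, ‖errorFst h ω x y z‖ ≤ e
  norm_errorSnd_le : ∀ z ∈ strip r, ‖errorSnd h ω x y z‖ ≤ e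

lemma norm_comp_add_ofReal_sub_le {r ω C : ℝ} {f : ℂ → ℂ} {z : ℂ} (hω : 0 ≤ ω)
    (hf : DifferentiableOn ℂ f (strip r)) (hC : ∀ z ∈ strip r, ‖deriv f z‖ ≤ C)
    (hz : z ∈ strip r) : ‖f (z + ω) - f z‖ ≤ C * ω := by
  simpa [abs_of_nonneg hω] using (convex_strip r).norm_image_sub_le_of_norm_deriv_le
    (fun w hw ↦ hf.differentiableAt (strip_mem_nhds hw)) hC hz (add_ofReal_mem_strip hz ω)

namespace ApproxInvariantCurve

variable {h : ℂ × ℂ → ℂ} {ω r a e R d M : ℝ} {x y : ℂ → ℂ} {z : ℂ}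

lemma norm_fst_add_sub_fst_sub_le (hω : 0 ≤ ω) (S : ApproxInvariantCurve h ω r a e x y)
    (hz : z ∈ strip r) : ‖x (z + ω) - x z - ω‖ ≤ ω * a := by
  have hderiv (w) (hw : w ∈ strip r) : ‖deriv (fun z ↦ x z - z) w‖ ≤ a := by
    rw [deriv_fun_sub (S.lift_fst.differentiableAt hw) differentiableAt_fun_id, deriv_id'']
    exact S.norm_deriv_fst_sub_le w hw
  have := norm_comp_add_ofReal_sub_le hω (StripPeriodic.differentiableOn S.lift_fst) hderiv hz
  rw [mul_comm]
  convert this using 2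
  ring

lemma norm_fst_add_sub_snd_sub_le (hω : 0 ≤ ω) (S : ApproxInvariantCurve h ω r a e x y)
    (hz : z ∈ strip r) : ‖x (z + ω) - y z - ω / 2‖ ≤ ω * (2 * a) :=
  calc _ = ‖(x (z + ω) - x z - ω) - (y z - x z - ω / 2)‖ := by congr 1; ring
    _ ≤ ω * a + ω * a := norm_sub_le_of_le (S.norm_fst_add_sub_fst_sub_le hω hz)
        (S.norm_snd_sub_fst_sub_le z hz)
    _ = ω * (2 * a) := by ring

section Geometry

variable (P : SmallParameters ω R d M) (S : ApproxInvariantCurve h ω r a e x y)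
  (hr : r ≤ R / 2) (ha : a ≤ R / 100) (hz : z ∈ strip r)
include P S ha hz

lemma norm_deriv_fst_sub_one_le : ‖deriv x z - 1‖ ≤ 1 / 50 :=
  (S.norm_deriv_fst_sub_le z hz).trans (by linarith [P.R_le_one])

lemma norm_deriv_snd_sub_one_le : ‖deriv y z - 1‖ ≤ 1 / 50 := by
  have ha0 := (norm_nonneg _).trans (S.norm_fst_sub_le z hz)
  calc ‖deriv y z - 1‖ = ‖(deriv y z - deriv x z) + (deriv x z - 1)‖ := by congr 1; ring
    _ ≤ ω * a + a :=
        norm_add_le_of_le (S.norm_deriv_snd_sub_le z hz) (S.norm_deriv_fst_sub_le z hz)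
    _ ≤ 1 / 50 := by nlinarith [P.R_le_one, P.ω_le_one_div]

include hr

lemma abs_im_fst_le : |(x z).im| ≤ 10 * R / 16 := by
  have hxz := (abs_im_le_norm _).trans (S.norm_fst_sub_le z hz)
  have := abs_add_le (x z - z).im z.im
  rw [sub_im, sub_add_cancel] at this
  rw [mem_strip] at hz
  rw [sub_im] at hxz
  linarith [P.R_pos]

lemma abs_im_snd_le : |(y z).im| ≤ 11 * R / 16 := by
  have hyx := (abs_im_le_norm _).trans (le_norm_and_norm_le_of_norm_sub_half_le P.ω_pos
    (by linarith [P.R_le_one]) (S.norm_snd_sub_fst_sub_le z hz)).2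
  have := abs_add_le (y z - x z).im (x z).im
  rw [sub_im, sub_add_cancel] at this
  rw [sub_im] at hyx
  linarith [S.abs_im_fst_le P hr ha hz, P.ω_le, P.R_pos]

lemma isTwistPair : IsTwistPair ω R (x z, y z) :=
  have hδ := le_norm_and_norm_le_of_norm_sub_half_le P.ω_pos (by linarith [P.R_le_one])
    (S.norm_snd_sub_fst_sub_le z hz)
  ⟨(S.abs_im_fst_le P hr ha hz).trans (by linarith [P.R_pos]), S.abs_im_snd_le P hr ha hz,
    hδ.1, hδ.2⟩

lemma isTwistPair_next : IsTwistPair ω R (x (z + ω), y z) := by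
  have hδ := le_norm_and_norm_le_of_norm_sub_half_le P.ω_pos (by linarith [P.R_le_one])
    (S.norm_fst_add_sub_snd_sub_le P.ω_pos.le hz)
  rw [norm_sub_rev] at hδ
  exact ⟨(S.abs_im_fst_le P hr ha (add_ofReal_mem_strip hz ω)).trans (by linarith [P.R_pos]),
    S.abs_im_snd_le P hr ha hz, hδ.1, hδ.2⟩

lemma isTwistPair_prev : IsTwistPair ω R (x z, y (z - ω)) := by
  have := S.isTwistPair_next P hr ha (sub_ofReal_mem_strip hz ω)
  rwa [sub_add_cancel] at this

end Geometry

end ApproxInvariantCurve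

/-- A solution `(ξ, η)`, up to the quadratically small error `ε`, of the linearized invariance
equations at `(x, y)`, of size `X`. -/
structure IsNewtonCorrection (h : ℂ × ℂ → ℂ) (ω r X ε : ℝ) (x y ξ η : ℂ → ℂ) : Prop where
  stripPeriodic_fst : StripPeriodic r ξ
  stripPeriodic_snd : StripPeriodic r η
  norm_fst_le : ∀ z ∈ strip r, ‖ξ z‖ ≤ 4 * (ω * X)
  norm_snd_sub_fst_le : ∀ z ∈ strip r, ‖η z - ξ z‖ ≤ 3 * (ω ^ 2 * X)
  norm_linearizedErrorFst_le : ∀ z ∈ strip r,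
    ‖errorFst h ω x y z + linearizedErrorFst h ω x y ξ η z‖ ≤ ε
  norm_linearizedErrorSnd_le : ∀ z ∈ strip r,
    ‖errorSnd h ω x y z + linearizedErrorSnd h ω x y ξ η z‖ ≤ ε

namespace ApproxInvariantCurve

variable {h : ℂ × ℂ → ℂ} {ω r a e R d M κ X : ℝ} {x y w v : ℂ → ℂ} {z : ℂ}

section Errors

variable (K : TwistGenerator R d M h) (P : SmallParameters ω R d M)
  (S : ApproxInvariantCurve h ω r a e x y) (hr : r ≤ R / 2) (ha : a ≤ R / 100)
include P S ha

lemma norm_deriv_mul_error_add_le (hz : z ∈ strip r) :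
    ‖deriv x z * errorFst h ω x y z + deriv y z * errorSnd h ω x y z‖ ≤ 3 * e ∧
      ‖deriv y z * errorSnd h ω x y z‖ ≤ 2 * e := by
  have hx := norm_mul_le_of_le (norm_le_of_norm_sub_one_le
    (S.norm_deriv_fst_sub_one_le P ha hz)) (S.norm_errorFst_le z hz)
  have hy := norm_mul_le_of_le (norm_le_of_norm_sub_one_le
    (S.norm_deriv_snd_sub_one_le P ha hz)) (S.norm_errorSnd_le z hz)
  have he := (norm_nonneg _).trans (S.norm_errorFst_le z hz)
  exact ⟨(norm_add_le_of_le hx hy).trans (by linarith), hy.trans (by linarith)⟩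

include hr

lemma stripPeriodic_comp {k : ℂ × ℂ → ℂ} (hk : TwoPointFunction R d k) :
    StripPeriodic r fun z ↦ k (x z, y z) :=
  hk.comp S.lift_fst S.lift_snd fun _ hz ↦ (S.isTwistPair P hr ha hz).mem_twoPointDomain P

lemma stripPeriodic_comp_next {k : ℂ × ℂ → ℂ} (hk : TwoPointFunction R d k) :
    StripPeriodic r fun z ↦ k (x (z + ω), y z) :=
  hk.comp (S.lift_fst.comp_add_ofReal ω) S.lift_snd fun _ hz ↦
    (S.isTwistPair_next P hr ha hz).mem_twoPointDomain P

lemma stripPeriodic_comp_prev {k : ℂ × ℂ → ℂ} (hk : TwoPointFunction R d k) :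
    StripPeriodic r fun z ↦ k (x z, y (z - ω)) :=
  hk.comp S.lift_fst (S.lift_snd.comp_sub_ofReal ω) fun _ hz ↦
    (S.isTwistPair_prev P hr ha hz).mem_twoPointDomain P

include K

lemma stripPeriodic_errorFst : StripPeriodic r (errorFst h ω x y) :=
  (S.stripPeriodic_comp P hr ha K.twoPointFunction.partialFst).sub
    (S.stripPeriodic_comp_prev P hr ha K.twoPointFunction.partialFst)

lemma stripPeriodic_errorSnd : StripPeriodic r (errorSnd h ω x y) :=
  (S.stripPeriodic_comp P hr ha K.twoPointFunction.partialSnd).sub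
    (S.stripPeriodic_comp_next P hr ha K.twoPointFunction.partialSnd)

lemma hasDerivAt_errorFst (hz : z ∈ strip r) :
    HasDerivAt (errorFst h ω x y) (linearizedErrorFst h ω x y (deriv x) (deriv y) z) z := by
  have hx := (S.lift_fst.differentiableAt hz).hasDerivAt
  have hy := (S.lift_snd.differentiableAt hz).hasDerivAt
  have hy' := (S.lift_snd.differentiableAt
    (sub_ofReal_mem_strip hz ω)).hasDerivAt.comp_sub_const z ω
  have hk := K.twoPointFunction.partialFst
  exact (hasDerivAt_comp_pair (hk.differentiableAt
      ((S.isTwistPair P hr ha hz).mem_twoPointDomain P)) hx hy).sub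
    (hasDerivAt_comp_pair (hk.differentiableAt
      ((S.isTwistPair_prev P hr ha hz).mem_twoPointDomain P)) hx hy')

lemma hasDerivAt_errorSnd (hz : z ∈ strip r) :
    HasDerivAt (errorSnd h ω x y) (linearizedErrorSnd h ω x y (deriv x) (deriv y) z) z := by
  have hx := (S.lift_fst.differentiableAt hz).hasDerivAt
  have hy := (S.lift_snd.differentiableAt hz).hasDerivAt
  have hx' := (S.lift_fst.differentiableAt
    (add_ofReal_mem_strip hz ω)).hasDerivAt.comp_add_const z ω
  have hk := K.twoPointFunction.partialSnd
  exact (hasDerivAt_comp_pair (hk.differentiableAt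
      ((S.isTwistPair P hr ha hz).mem_twoPointDomain P)) hx hy).sub
    (hasDerivAt_comp_pair (hk.differentiableAt
      ((S.isTwistPair_next P hr ha hz).mem_twoPointDomain P)) hx' hy)

-- The integrand is an exact derivative plus a difference `Ψ (z + ω) - Ψ z`: this is the exactness
-- (zero flux) of the twist map generated by `h`.
lemma mean_deriv_mul_error (hr0 : 0 < r) :
    mean (fun z ↦ deriv x z * errorFst h ω x y z + deriv y z * errorSnd h ω x y z) = 0 := by
  have hk := K.twoPointFunction
  have hΦ : StripPeriodic r fun z ↦ h (x z, y z) - h (x (z + ω), y z) :=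
    (S.stripPeriodic_comp P hr ha hk).sub (S.stripPeriodic_comp_next P hr ha hk)
  have hΨ : StripPeriodic r fun z ↦ deriv x z * partialFst h (x z, y (z - ω)) :=
    S.lift_fst.deriv.mul (S.stripPeriodic_comp_prev P hr ha hk.partialFst)
  have hsplit (t : ℝ) : deriv x t * errorFst h ω x y t + deriv y t * errorSnd h ω x y t =
      deriv (fun z ↦ h (x z, y z) - h (x (z + ω), y z)) t +
        (deriv x (t + ω) * partialFst h (x (t + ω), y (t + ω - ω)) -
          deriv x t * partialFst h (x t, y (t - ω))) := by
    have ht := ofReal_mem_strip hr0 t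
    have hx := (S.lift_fst.differentiableAt ht).hasDerivAt
    have hy := (S.lift_snd.differentiableAt ht).hasDerivAt
    have hx' := (S.lift_fst.differentiableAt
      (add_ofReal_mem_strip ht ω)).hasDerivAt.comp_add_const (t : ℂ) ω
    have hderiv := (hasDerivAt_comp_pair (hk.differentiableAt
        ((S.isTwistPair P hr ha ht).mem_twoPointDomain P)) hx hy).fun_sub
      (hasDerivAt_comp_pair (hk.differentiableAt
        ((S.isTwistPair_next P hr ha ht).mem_twoPointDomain P)) hx' hy)
    rw [hderiv.deriv, add_sub_cancel_right, errorFst, errorSnd]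
    ring
  have hmean : mean (fun z ↦ deriv x z * errorFst h ω x y z + deriv y z * errorSnd h ω x y z) =
      mean (fun z ↦ deriv (fun z ↦ h (x z, y z) - h (x (z + ω), y z)) z +
        (deriv x (z + ω) * partialFst h (x (z + ω), y (z + ω - ω)) -
          deriv x z * partialFst h (x z, y (z - ω)))) :=
    mean_congr hsplit
  rw [hmean, mean_add hr0 hΦ.deriv ((hΨ.comp_add_ofReal ω).sub hΨ),
    mean_sub hr0 (hΨ.comp_add_ofReal ω) hΨ, mean_deriv hr0 hΦ, mean_comp_add_ofReal hr0 hΨ,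
    sub_self, add_zero]

lemma twistCoefficient : TwistCoefficient r ω
    fun z ↦ deriv x z * deriv y z * partialSnd (partialFst h) (x z, y z) := by
  have hpole (z) (hz : z ∈ strip r) :
      ‖partialSnd (partialFst h) (x z, y z) + 2 / (y z - x z) ^ 3‖ ≤ M :=
    K.norm_partialSnd_partialFst_add_le _ ((S.isTwistPair P hr ha hz).mem_twoPointDomain P)
  have hδ (z) (hz : z ∈ strip r) : ‖y z - x z - ω / 2‖ ≤ ω / 40 :=
    (S.norm_snd_sub_fst_sub_le z hz).trans (by nlinarith [P.R_le_one, P.ω_pos])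
  have hinv (z) (hz : z ∈ strip r) := norm_inv_mul_mul_add_le P.ω_pos P.ω_le_one_div
    P.M_mul_ω_le (hδ z hz) (hpole z hz)
    (S.norm_deriv_fst_sub_one_le P ha hz) (S.norm_deriv_snd_sub_one_le P ha hz)
  exact ⟨(S.lift_fst.deriv.mul S.lift_snd.deriv).mul
      (S.stripPeriodic_comp P hr ha K.twoPointFunction.partialFst.partialSnd),
    fun z hz ↦ (hinv z hz).1, fun z hz ↦ (hinv z hz).2⟩

lemma twistCoefficient_next : TwistCoefficient r ω
    fun z ↦ deriv x (z + ω) * deriv y z * -partialSnd (partialFst h) (x (z + ω), y z) := by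
  have hpole (z) (hz : z ∈ strip r) : ‖-partialSnd (partialFst h) (x (z + ω), y z) +
      2 / (x (z + ω) - y z) ^ 3‖ ≤ M := by
    rw [← norm_neg, neg_add, neg_neg, ← div_neg, ← Odd.neg_pow (by decide), neg_sub]
    exact K.norm_partialSnd_partialFst_add_le _
      ((S.isTwistPair_next P hr ha hz).mem_twoPointDomain P)
  have hδ (z) (hz : z ∈ strip r) : ‖x (z + ω) - y z - ω / 2‖ ≤ ω / 40 :=
    (S.norm_fst_add_sub_snd_sub_le P.ω_pos.le hz).trans (by nlinarith [P.R_le_one, P.ω_pos])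
  have hinv (z) (hz : z ∈ strip r) := norm_inv_mul_mul_add_le P.ω_pos P.ω_le_one_div
    P.M_mul_ω_le (hδ z hz) (hpole z hz)
    (S.norm_deriv_fst_sub_one_le P ha (add_ofReal_mem_strip hz ω))
    (S.norm_deriv_snd_sub_one_le P ha hz)
  exact ⟨((S.lift_fst.deriv.comp_add_ofReal ω).mul S.lift_snd.deriv).mul
      (S.stripPeriodic_comp_next P hr ha K.twoPointFunction.partialFst.partialSnd).neg,
    fun z hz ↦ (hinv z hz).1, fun z hz ↦ (hinv z hz).2⟩

end Errors

section Residual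

variable (K : TwistGenerator R d M h) (P : SmallParameters ω R d M)
  (S : ApproxInvariantCurve h ω r a e x y) (hr : r ≤ R / 2) (ha : a ≤ R / 100) (hz : z ∈ strip r)
include K P S hr ha hz

-- The variation `w • (x', y')` is a reparametrization of the curve, so it changes the error by
-- `w E'`; only the part of the variation transversal to it sees the twist coefficients.
lemma errorFst_add_linearizedErrorFst_eq
    (hwv : deriv x z * errorFst h ω x y z +
      deriv x z * deriv y z * partialSnd (partialFst h) (x z, y z) * (v z - w z) +
      deriv x z * deriv y (z - ω) * -partialSnd (partialFst h) (x z, y (z - ω)) *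
        (v (z - ω) - w z) = 0) :
    errorFst h ω x y z + linearizedErrorFst h ω x y (fun z ↦ deriv x z * w z)
      (fun z ↦ deriv y z * v z) z = w z * deriv (errorFst h ω x y) z := by
  have hx : deriv x z ≠ 0 := fun h0 ↦ by
    have := S.norm_deriv_fst_sub_one_le P ha hz
    norm_num [h0] at this
  rw [(S.hasDerivAt_errorFst K P hr ha hz).deriv]
  refine mul_left_cancel₀ hx ?_
  simp only [linearizedErrorFst]
  linear_combination hwv

lemma errorSnd_add_linearizedErrorSnd_eq
    (hwv : deriv y z * errorSnd h ω x y z +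
      deriv x z * deriv y z * partialSnd (partialFst h) (x z, y z) * (w z - v z) +
      deriv x (z + ω) * deriv y z * -partialSnd (partialFst h) (x (z + ω), y z) *
        (w (z + ω) - v z) = 0) :
    errorSnd h ω x y z + linearizedErrorSnd h ω x y (fun z ↦ deriv x z * w z)
      (fun z ↦ deriv y z * v z) z = v z * deriv (errorSnd h ω x y) z := by
  have hy : deriv y z ≠ 0 := fun h0 ↦ by
    have := S.norm_deriv_snd_sub_one_le P ha hz
    norm_num [h0] at this
  rw [(S.hasDerivAt_errorSnd K P hr ha hz).deriv]
  refine mul_left_cancel₀ hy ?_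
  simp only [linearizedErrorSnd]
  rw [partialFst_partialSnd (K.twoPointFunction.analyticAt _
      ((S.isTwistPair P hr ha hz).mem_twoPointDomain P)),
    partialFst_partialSnd (K.twoPointFunction.analyticAt _
      ((S.isTwistPair_next P hr ha hz).mem_twoPointDomain P))]
  linear_combination hwv

end Residual

section Correction

variable (P : SmallParameters ω R d M) (S : ApproxInvariantCurve h ω r a e x y)
  (hr : r ≤ R / 2) (ha : a ≤ R / 100)
include P S ha

lemma norm_deriv_mul_le (hX : 0 ≤ X) (hz : z ∈ strip r) (hw : ‖w z‖ ≤ 3 * (ω * X))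
    (hvw : ‖v z - w z‖ ≤ 2 * (ω ^ 2 * X)) :
    ‖deriv x z * w z‖ ≤ 4 * (ω * X) ∧ ‖deriv y z * v z - deriv x z * w z‖ ≤ 3 * (ω ^ 2 * X) := by
  have hX1 := mul_nonneg P.ω_pos.le hX
  have hX2 := mul_nonneg (sq_nonneg ω) hX
  have ha1 : a ≤ 1 / 100 := by linarith [P.R_le_one]
  have hω := P.ω_pos
  have hx := norm_mul_le_of_le (norm_le_of_norm_sub_one_le
    (S.norm_deriv_fst_sub_one_le P ha hz)) hw
  have hsplit := norm_add_le_of_le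
    (norm_mul_le_of_le (norm_le_of_norm_sub_one_le (S.norm_deriv_snd_sub_one_le P ha hz)) hvw)
    (norm_mul_le_of_le ((S.norm_deriv_snd_sub_le z hz).trans
      (mul_le_mul_of_nonneg_left ha1 hω.le)) hw)
  refine ⟨hx.trans (by linarith), ?_⟩
  calc _ = ‖deriv y z * (v z - w z) + (deriv y z - deriv x z) * w z‖ := by congr 1; ring
    _ ≤ _ := hsplit
    _ ≤ 3 * (ω ^ 2 * X) := by linarith

include hr

lemma isNewtonCorrection (K : TwistGenerator R d M h) (hκ : 0 < κ) (hX : 0 ≤ X)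
    (hw : StripPeriodic (r - 2 * κ) w) (hv : StripPeriodic (r - 2 * κ) v)
    (hwX : ∀ z ∈ strip (r - 2 * κ), ‖w z‖ ≤ 3 * (ω * X))
    (hvwX : ∀ z ∈ strip (r - 2 * κ), ‖v z - w z‖ ≤ 2 * (ω ^ 2 * X))
    (hfst : ∀ z ∈ strip (r - 2 * κ), deriv x z * errorFst h ω x y z +
      deriv x z * deriv y z * partialSnd (partialFst h) (x z, y z) * (v z - w z) +
      deriv x z * deriv y (z - ω) * -partialSnd (partialFst h) (x z, y (z - ω)) *
        (v (z - ω) - w z) = 0)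
    (hsnd : ∀ z ∈ strip (r - 2 * κ), deriv y z * errorSnd h ω x y z +
      deriv x z * deriv y z * partialSnd (partialFst h) (x z, y z) * (w z - v z) +
      deriv x (z + ω) * deriv y z * -partialSnd (partialFst h) (x (z + ω), y z) *
        (w (z + ω) - v z) = 0) :
    IsNewtonCorrection h ω (r - 2 * κ) X (4 * (ω * X) * (e / κ)) x y
      (fun z ↦ deriv x z * w z) fun z ↦ deriv y z * v z := by
  have hκr : r - 2 * κ ≤ r := by linarith
  have hsub {z} (hz : z ∈ strip (r - 2 * κ)) : z ∈ strip r := strip_mono hκr hz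
  have hcauchy {E : ℂ → ℂ} (hE : StripPeriodic r E) (hEe : ∀ z ∈ strip r, ‖E z‖ ≤ e) (z)
      (hz : z ∈ strip (r - 2 * κ)) : ‖deriv E z‖ ≤ e / κ :=
    norm_deriv_le_of_strip hκ hE.differentiableOn hEe (strip_mono (by linarith) hz)
  have hvX (z) (hz : z ∈ strip (r - 2 * κ)) : ‖v z‖ ≤ 4 * (ω * X) := by
    have := norm_add_le_of_le (hvwX z hz) (hwX z hz)
    rw [sub_add_cancel] at this
    nlinarith [mul_nonneg P.ω_pos.le hX, P.ω_le_one_div]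
  refine ⟨(S.lift_fst.deriv.mono hκr).mul hw, (S.lift_snd.deriv.mono hκr).mul hv,
    fun z hz ↦ (S.norm_deriv_mul_le P ha hX (hsub hz) (hwX z hz) (hvwX z hz)).1,
    fun z hz ↦ (S.norm_deriv_mul_le P ha hX (hsub hz) (hwX z hz) (hvwX z hz)).2,
    fun z hz ↦ ?_, fun z hz ↦ ?_⟩
  · rw [S.errorFst_add_linearizedErrorFst_eq K P hr ha (hsub hz) (hfst z hz)]
    exact norm_mul_le_of_le
      ((hwX z hz).trans (by linarith [mul_nonneg P.ω_pos.le hX]))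
      (hcauchy (S.stripPeriodic_errorFst K P hr ha) S.norm_errorFst_le z hz)
  · rw [S.errorSnd_add_linearizedErrorSnd_eq K P hr ha (hsub hz) (hsnd z hz)]
    exact norm_mul_le_of_le (hvX z hz)
      (hcauchy (S.stripPeriodic_errorSnd K P hr ha) S.norm_errorSnd_le z hz)

lemma exists_newtonCorrection (K : TwistGenerator R d M h) (hd : Diophantine ω) (hκ : 0 < κ)
    (hκ1 : κ ≤ 1) (hκr : 2 * κ < r) (he : 0 < e) (hX : X = cohomologicalConst ^ 2 * e / κ ^ 6) :
    ∃ ξ η, IsNewtonCorrection h ω (r - 2 * κ) X (4 * (ω * X) * (e / κ)) x y ξ η := by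
  have hr0 : 0 < r := by linarith
  have hC := one_le_cohomologicalConst
  have hG := S.lift_snd.deriv.mul (S.stripPeriodic_errorSnd K P hr ha)
  obtain ⟨w, v, hw, hv, hwX, hvwX, heq⟩ := exists_linearized_solution P.ω_pos P.ω_le_one_div hd hκ
    hκ1 hκr he ((S.lift_fst.deriv.mul (S.stripPeriodic_errorFst K P hr ha)).add hG) hG
    (S.twistCoefficient K P hr ha) (S.twistCoefficient_next K P hr ha)
    (fun z hz ↦ (S.norm_deriv_mul_error_add_le P ha hz).1)
    (fun z hz ↦ (S.norm_deriv_mul_error_add_le P ha hz).2)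
    (S.mean_deriv_mul_error K P hr ha hr0)
  have hX0 : 0 ≤ X := by rw [hX]; positivity
  have hle : cohomologicalConst * e / κ ^ 3 ≤ X := by
    rw [hX]
    exact div_le_div₀ (by positivity)
      (mul_le_mul_of_nonneg_right (le_self_pow₀ hC two_ne_zero) he.le) (by positivity)
      (pow_le_pow_of_le_one hκ.le hκ1 (by norm_num))
  refine ⟨_, _, S.isNewtonCorrection P hr ha K hκ hX0 hw hv (fun z hz ↦ (hwX z hz).trans_eq
    (by rw [hX]; ring)) (fun z hz ↦ (hvwX z hz).trans ?_) (fun z hz ↦ ?_) fun z hz ↦ (heq z hz).2⟩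
  · calc _ = 2 * (ω ^ 2 * (cohomologicalConst * e / κ ^ 3)) := by ring
      _ ≤ 2 * (ω ^ 2 * X) := by gcongr
  · have := (heq z hz).1
    simp only [sub_add_cancel] at this
    rw [← this]
    ring

end Correction

end ApproxInvariantCurve

namespace IsNewtonCorrection

variable {h : ℂ × ℂ → ℂ} {ω r X β κ ε : ℝ} {x y ξ η : ℂ → ℂ} {z : ℂ}
  (N : IsNewtonCorrection h ω r X ε x y ξ η) (hω : 0 ≤ ω) (hκ : 0 < κ) (hX : 10 * X = β * κ)
include N

lemma norm_fst_le_mul (hω : 0 ≤ ω) (hβ : 0 ≤ β) (hκ1 : κ ≤ 1) (hX : 10 * X = β * κ)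
    (hz : z ∈ strip r) : ‖ξ z‖ ≤ ω * β :=
  (N.norm_fst_le z hz).trans (by nlinarith [mul_le_of_le_one_right hβ hκ1, mul_nonneg hω hβ])

lemma norm_snd_sub_fst_le_mul (hβ : 0 ≤ β) (hκ1 : κ ≤ 1) (hX : 10 * X = β * κ)
    (hz : z ∈ strip r) : ‖η z - ξ z‖ ≤ 3 / 10 * (ω ^ 2 * β) :=
  (N.norm_snd_sub_fst_le z hz).trans
    (by nlinarith [mul_le_of_le_one_right hβ hκ1, mul_nonneg (sq_nonneg ω) hβ])

include hκ hX

lemma norm_deriv_fst_le (hz : z ∈ strip (r - κ)) : ‖deriv ξ z‖ ≤ 4 / 10 * (ω * β) := by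
  have := norm_deriv_le_of_strip hκ N.stripPeriodic_fst.differentiableOn N.norm_fst_le hz
  refine this.trans_eq ?_
  rw [div_eq_iff hκ.ne']
  linear_combination 4 / 10 * ω * hX

lemma norm_deriv_snd_sub_deriv_fst_le (hz : z ∈ strip (r - κ)) :
    ‖deriv η z - deriv ξ z‖ ≤ 3 / 10 * (ω ^ 2 * β) := by
  have hz' := strip_mono (sub_le_self r hκ.le) hz
  have := norm_deriv_le_of_strip hκ (N.stripPeriodic_snd.sub N.stripPeriodic_fst).differentiableOn
    N.norm_snd_sub_fst_le hz
  rw [deriv_fun_sub (N.stripPeriodic_snd.differentiableAt hz')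
    (N.stripPeriodic_fst.differentiableAt hz')] at this
  refine this.trans_eq ?_
  rw [div_eq_iff hκ.ne']
  linear_combination 3 / 10 * ω ^ 2 * hX

include hω

lemma norm_fst_add_sub_le (hz : z ∈ strip (r - κ)) :
    ‖ξ (z + ω) - ξ z‖ ≤ 4 / 10 * (ω ^ 2 * β) :=
  (norm_comp_add_ofReal_sub_le hω
    (N.stripPeriodic_fst.mono (sub_le_self r hκ.le)).differentiableOn
    (fun _ ↦ N.norm_deriv_fst_le hκ hX) hz).trans_eq (by ring)

lemma norm_snd_sub_fst_add_le (hβ : 0 ≤ β) (hκ1 : κ ≤ 1) (hz : z ∈ strip (r - κ)) :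
    ‖η z - ξ (z + ω)‖ ≤ ω ^ 2 * β := by
  have := norm_sub_le_of_le
    (N.norm_snd_sub_fst_le_mul hβ hκ1 hX (strip_mono (sub_le_self r hκ.le) hz))
    (N.norm_fst_add_sub_le hω hκ hX hz)
  rw [sub_sub_sub_cancel_right] at this
  nlinarith [mul_nonneg (sq_nonneg ω) hβ]

end IsNewtonCorrection

namespace ApproxInvariantCurve

section NewtonStep

variable {h : ℂ × ℂ → ℂ} {ω r r' a e R d M κ X β ε : ℝ} {x y ξ η : ℂ → ℂ} {z : ℂ}
  (P : SmallParameters ω R d M) (S : ApproxInvariantCurve h ω r a e x y)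
  (hr : r ≤ R / 2) (ha : a ≤ R / 100) (N : IsNewtonCorrection h ω r' X ε x y ξ η) (hr' : r' ≤ r)
  (hκ : 0 < κ) (hκ1 : κ ≤ 1) (hX : 10 * X = β * κ) (hβ : 0 < β)
include P S N hr' hκ hκ1 hX hβ

section Error

variable (K : TwistGenerator R d M h) (hβR : β ≤ R / 16) (hz : z ∈ strip (r' - κ))
include K hr ha hβR hz

lemma norm_errorFst_add_le :
    ‖errorFst h ω (fun z ↦ x z + ξ z) (fun z ↦ y z + η z) z‖ ≤ 10000 * β ^ 2 / R ^ 2 + ε := by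
  have hω := P.ω_pos.le
  have hz' := strip_mono (sub_le_self r' hκ.le) hz
  have hprev := N.norm_snd_sub_fst_add_le hω hκ hX hβ.le hκ1 (sub_ofReal_mem_strip hz ω)
  rw [sub_add_cancel] at hprev
  have hω2β := mul_nonneg (sq_nonneg ω) hβ.le
  have hξ := N.norm_fst_le_mul hω hβ.le hκ1 hX hz'
  exact norm_sub_le_of_linearized P hβ hβR
    (fun _ ↦ K.twoPointFunction.partialFst.differentiableAt) (fun _ ↦ K.norm_partialFst_le)
    (S.isTwistPair P hr ha (strip_mono hr' hz'))
    (S.isTwistPair_prev P hr ha (strip_mono hr' hz')) hξ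
    ((N.norm_snd_sub_fst_le_mul hβ.le hκ1 hX hz').trans (by linarith))
    hξ hprev (N.norm_linearizedErrorFst_le z hz')

lemma norm_errorSnd_add_le :
    ‖errorSnd h ω (fun z ↦ x z + ξ z) (fun z ↦ y z + η z) z‖ ≤ 10000 * β ^ 2 / R ^ 2 + ε := by
  have hω := P.ω_pos.le
  have hz' := strip_mono (sub_le_self r' hκ.le) hz
  have hω2β := mul_nonneg (sq_nonneg ω) hβ.le
  exact norm_sub_le_of_linearized P hβ hβR
    (fun _ ↦ K.twoPointFunction.partialSnd.differentiableAt) (fun _ ↦ K.norm_partialSnd_le)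
    (S.isTwistPair P hr ha (strip_mono hr' hz'))
    (S.isTwistPair_next P hr ha (strip_mono hr' hz'))
    (N.norm_fst_le_mul hω hβ.le hκ1 hX hz')
    ((N.norm_snd_sub_fst_le_mul hβ.le hκ1 hX hz').trans (by linarith))
    (N.norm_fst_le_mul hω hβ.le hκ1 hX (add_ofReal_mem_strip hz' ω))
    (N.norm_snd_sub_fst_add_le hω hκ hX hβ.le hκ1 hz) (N.norm_linearizedErrorSnd_le z hz')

end Error

lemma add_newtonCorrection (hr : r ≤ R / 2) (ha : a ≤ R / 100) (K : TwistGenerator R d M h)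
    (hβR : β ≤ R / 16) :
    ApproxInvariantCurve h ω (r' - κ) (a + β) (10000 * β ^ 2 / R ^ 2 + ε)
      (fun z ↦ x z + ξ z) (fun z ↦ y z + η z) := by
  have hω := P.ω_pos
  have hωβ : ω * β ≤ β := by nlinarith [P.ω_le_one_div]
  have hω2β : ω ^ 2 * β ≤ ω * β := by nlinarith [P.ω_le_one_div, mul_pos hω hβ]
  have hωβ0 := mul_pos hω hβ
  have hκr := sub_le_self r' hκ.le
  have hS {z} (hz : z ∈ strip (r' - κ)) : z ∈ strip r := strip_mono (hκr.trans hr') hz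
  have hx {z} (hz : z ∈ strip (r' - κ)) : deriv (fun z ↦ x z + ξ z) z = deriv x z + deriv ξ z :=
    deriv_fun_add (S.lift_fst.differentiableAt (hS hz))
      (N.stripPeriodic_fst.differentiableAt (strip_mono hκr hz))
  have hy {z} (hz : z ∈ strip (r' - κ)) : deriv (fun z ↦ y z + η z) z = deriv y z + deriv η z :=
    deriv_fun_add (S.lift_snd.differentiableAt (hS hz))
      (N.stripPeriodic_snd.differentiableAt (strip_mono hκr hz))
  refine ⟨(S.lift_fst.mono (hκr.trans hr')).add_periodic (N.stripPeriodic_fst.mono hκr),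
    (S.lift_snd.mono (hκr.trans hr')).add_periodic (N.stripPeriodic_snd.mono hκr),
    fun z hz ↦ ?_, fun z hz ↦ ?_, fun z hz ↦ ?_, fun z hz ↦ ?_,
    fun z ↦ S.norm_errorFst_add_le P hr ha N hr' hκ hκ1 hX hβ K hβR,
    fun z ↦ S.norm_errorSnd_add_le P hr ha N hr' hκ hκ1 hX hβ K hβR⟩
  · rw [add_sub_right_comm]
    exact norm_add_le_of_le (S.norm_fst_sub_le z (hS hz))
      ((N.norm_fst_le_mul hω.le hβ.le hκ1 hX (strip_mono hκr hz)).trans hωβ)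
  · rw [add_sub_add_comm, add_sub_right_comm, mul_add]
    exact norm_add_le_of_le (S.norm_snd_sub_fst_sub_le z (hS hz))
      ((N.norm_snd_sub_fst_le_mul hβ.le hκ1 hX (strip_mono hκr hz)).trans (by linarith))
  · rw [hx hz, add_sub_right_comm]
    exact norm_add_le_of_le (S.norm_deriv_fst_sub_le z (hS hz))
      ((N.norm_deriv_fst_le hκ hX hz).trans (by linarith))
  · rw [hx hz, hy hz, add_sub_add_comm, mul_add]
    exact norm_add_le_of_le (S.norm_deriv_snd_sub_le z (hS hz))
      ((N.norm_deriv_snd_sub_deriv_fst_le hκ hX hz).trans (by linarith))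

end NewtonStep

variable {h : ℂ × ℂ → ℂ} {ω r a e R d M κ β q : ℝ} {x y : ℂ → ℂ}

lemma mono {r' a' e' : ℝ} (hω : 0 ≤ ω) (S : ApproxInvariantCurve h ω r a e x y) (hr : r' ≤ r)
    (ha : a ≤ a') (he : e ≤ e') : ApproxInvariantCurve h ω r' a' e' x y where
  lift_fst := S.lift_fst.mono hr
  lift_snd := S.lift_snd.mono hr
  norm_fst_sub_le z hz := (S.norm_fst_sub_le z (strip_mono hr hz)).trans ha
  norm_snd_sub_fst_sub_le z hz := (S.norm_snd_sub_fst_sub_le z (strip_mono hr hz)).trans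
    (mul_le_mul_of_nonneg_left ha hω)
  norm_deriv_fst_sub_le z hz := (S.norm_deriv_fst_sub_le z (strip_mono hr hz)).trans ha
  norm_deriv_snd_sub_le z hz := (S.norm_deriv_snd_sub_le z (strip_mono hr hz)).trans
    (mul_le_mul_of_nonneg_left ha hω)
  norm_errorFst_le z hz := (S.norm_errorFst_le z (strip_mono hr hz)).trans he
  norm_errorSnd_le z hz := (S.norm_errorSnd_le z (strip_mono hr hz)).trans he

variable (K : TwistGenerator R d M h) (P : SmallParameters ω R d M)
include K P

lemma newton_step (S : ApproxInvariantCurve h ω r a e x y) (hr : r ≤ R / 2) (ha : a ≤ R / 100)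
    (hd : Diophantine ω) (hκ : 0 < κ) (hκ1 : κ ≤ 1) (hκr : 2 * κ < r) (he : 0 < e)
    (hβ : β = 10 * cohomologicalConst ^ 2 * e / κ ^ 7) (hβR : β ≤ R / 16) :
    ∃ x' y', ApproxInvariantCurve h ω (r - 3 * κ) (a + β) (20000 * β ^ 2 / R ^ 2) x' y' ∧
      ∀ z ∈ strip (r - 3 * κ), ‖x' z - x z‖ ≤ 2 * β ∧ ‖y' z - y z‖ ≤ 2 * β := by
  have hC := one_le_cohomologicalConst
  have hω := P.ω_pos
  have hR := P.R_pos
  have hβ0 : 0 < β := by rw [hβ]; positivity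
  obtain ⟨X, hX⟩ : ∃ X, X = cohomologicalConst ^ 2 * e / κ ^ 6 := ⟨_, rfl⟩
  have hXβ : 10 * X = β * κ := by rw [hX, hβ]; field_simp
  obtain ⟨ξ, η, N⟩ := S.exists_newtonCorrection P hr ha K hd hκ hκ1 hκr he hX
  have hrr : r - 2 * κ - κ = r - 3 * κ := by ring
  have he_le : e ≤ β := by
    rw [hβ, le_div_iff₀ (by positivity)]
    nlinarith [pow_le_one₀ (n := 7) hκ.le hκ1, one_le_pow₀ (n := 2) hC]
  have hresidual : 4 * (ω * X) * (e / κ) ≤ 10000 * β ^ 2 / R ^ 2 := by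
    rw [show X = β * κ / 10 by linarith, le_div_iff₀ (by positivity)]
    calc 4 * (ω * (β * κ / 10)) * (e / κ) * R ^ 2 = 4 / 10 * ω * β * e * R ^ 2 := by
          field_simp
      _ ≤ 4 / 10 * 1 * β * β * 1 ^ 2 := by
          gcongr <;> linarith [P.ω_le_one_div, P.R_le_one]
      _ ≤ 10000 * β ^ 2 := by nlinarith [sq_nonneg β]
  have hωβ : ω * β ≤ β := by nlinarith [P.ω_le_one_div]
  have hω2β : ω ^ 2 * β ≤ ω * β := by nlinarith [P.ω_le_one_div, mul_pos hω hβ0]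
  refine ⟨fun z ↦ x z + ξ z, fun z ↦ y z + η z, ?_, fun z hz ↦ ?_⟩
  · rw [← hrr]
    refine (S.add_newtonCorrection P N (by linarith) hκ hκ1 hXβ hβ0 hr ha K hβR).mono hω.le
      le_rfl le_rfl ?_
    linear_combination hresidual
  · have hz' := strip_mono (by linarith : r - 3 * κ ≤ r - 2 * κ) hz
    have hξ := N.norm_fst_le_mul hω.le hβ0.le hκ1 hXβ hz'
    have hη := norm_add_le_of_le (N.norm_snd_sub_fst_le_mul hβ0.le hκ1 hXβ hz') hξ
    rw [sub_add_cancel] at hη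
    simp only [add_sub_cancel_left]
    exact ⟨by linarith, by linarith⟩

lemma newton_step_scaled (hq : 0 < q) (hq1 : q ≤ 1)
    (S : ApproxInvariantCurve h ω (R / 8 + 3 * R / 8 * q) (2 * β * (1 - q)) (e * q ^ 14) x y)
    (hd : Diophantine ω) (he : 0 < e) (hβ : β = 10 * cohomologicalConst ^ 2 * e / (R / 16) ^ 7)
    (hβR : 2 * β ≤ R / 100) (hβe : 20000 * β ^ 2 * 2 ^ 14 ≤ e * R ^ 2) :
    ∃ x' y', ApproxInvariantCurve h ω (R / 8 + 3 * R / 8 * (q / 2)) (2 * β * (1 - q / 2))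
        (e * (q / 2) ^ 14) x' y' ∧
      ∀ z ∈ strip (R / 8), ‖x' z - x z‖ ≤ 2 * β * q ∧ ‖y' z - y z‖ ≤ 2 * β * q := by
  have hC := one_le_cohomologicalConst
  have hR := P.R_pos
  have hRq := mul_pos hR hq
  have hR1 := P.R_le_one
  have hβ0 : 0 < β := by rw [hβ]; positivity
  have hβq : β * q ^ 7 ≤ β * q := by gcongr; exact pow_le_of_le_one hq.le hq1 (by norm_num)
  have hβ_eq : β * q ^ 7 = 10 * cohomologicalConst ^ 2 * (e * q ^ 14) / (R / 16 * q) ^ 7 := by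
    rw [hβ]; field_simp
  obtain ⟨x', y', S', hdist⟩ := S.newton_step K P (κ := R / 16 * q) (by nlinarith) (by nlinarith)
    hd (by positivity) (by nlinarith) (by linarith) (by positivity) hβ_eq (by nlinarith)
  have hr : R / 8 + 3 * R / 8 * q - 3 * (R / 16 * q) = R / 8 + 3 * R / 8 * (q / 2) := by ring
  rw [hr] at S' hdist
  refine ⟨x', y', S'.mono P.ω_pos.le le_rfl (by linarith) ?_, fun z hz ↦ ?_⟩
  · rw [div_le_iff₀ (by positivity)]
    calc 20000 * (β * q ^ 7) ^ 2 = 20000 * β ^ 2 * 2 ^ 14 * (q / 2) ^ 14 := by ring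
      _ ≤ e * R ^ 2 * (q / 2) ^ 14 := by gcongr
      _ = e * (q / 2) ^ 14 * R ^ 2 := by ring
  · have := hdist z (strip_mono (by linarith) hz)
    exact ⟨by linarith, by linarith⟩

lemma exists_newton_sequence (S : ApproxInvariantCurve h ω (R / 2) 0 e x y) (hd : Diophantine ω)
    (he : 0 < e) (hβ : β = 10 * cohomologicalConst ^ 2 * e / (R / 16) ^ 7)
    (hβR : 2 * β ≤ R / 100) (hβe : 20000 * β ^ 2 * 2 ^ 14 ≤ e * R ^ 2) :
    ∃ u v : ℕ → ℂ → ℂ, ∀ n,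
      ApproxInvariantCurve h ω (R / 8) (R / 100) (e * (1 / 2) ^ n) (u n) (v n) ∧
      ∀ z ∈ strip (R / 8), ‖u (n + 1) z - u n z‖ ≤ 2 * β * (1 / 2) ^ n ∧
        ‖v (n + 1) z - v n z‖ ≤ 2 * β * (1 / 2) ^ n := by
  have hC := one_le_cohomologicalConst
  have hR := P.R_pos
  have hβ0 : 0 < β := by rw [hβ]; positivity
  have hq0 (n : ℕ) : 0 < (1 / 2 : ℝ) ^ n := by positivity
  have hq1 (n : ℕ) : (1 / 2 : ℝ) ^ n ≤ 1 := pow_le_one₀ (by norm_num) (by norm_num)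
  have hstep (n : ℕ) (p : (ℂ → ℂ) × (ℂ → ℂ))
      (hp : ApproxInvariantCurve h ω (R / 8 + 3 * R / 8 * (1 / 2) ^ n)
        (2 * β * (1 - (1 / 2) ^ n)) (e * ((1 / 2) ^ n) ^ 14) p.1 p.2) :
      ∃ p' : (ℂ → ℂ) × (ℂ → ℂ), ApproxInvariantCurve h ω (R / 8 + 3 * R / 8 * (1 / 2) ^ (n + 1))
        (2 * β * (1 - (1 / 2) ^ (n + 1))) (e * ((1 / 2) ^ (n + 1)) ^ 14) p'.1 p'.2 ∧
      ∀ z ∈ strip (R / 8), ‖p'.1 z - p.1 z‖ ≤ 2 * β * (1 / 2) ^ n ∧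
        ‖p'.2 z - p.2 z‖ ≤ 2 * β * (1 / 2) ^ n := by
    obtain ⟨x', y', hnext⟩ := hp.newton_step_scaled K P (hq0 n) (hq1 n) hd he hβ hβR hβe
    rw [pow_succ, mul_one_div]
    exact ⟨(x', y'), hnext⟩
  choose! next hnext hdist using hstep
  let s (n : ℕ) : (ℂ → ℂ) × (ℂ → ℂ) := n.rec (x, y) next
  have hs (n : ℕ) : ApproxInvariantCurve h ω (R / 8 + 3 * R / 8 * (1 / 2) ^ n)
      (2 * β * (1 - (1 / 2) ^ n)) (e * ((1 / 2) ^ n) ^ 14) (s n).1 (s n).2 := by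
    induction n with
    | zero => exact S.mono P.ω_pos.le (by linarith) (by simp) (by simp)
    | succ n ih => exact hnext n (s n) ih
  refine ⟨fun n ↦ (s n).1, fun n ↦ (s n).2, fun n ↦ ⟨(hs n).mono P.ω_pos.le ?_ ?_ ?_,
    hdist n (s n) (hs n)⟩⟩
  · exact le_add_of_nonneg_right (mul_nonneg (by linarith) (hq0 n).le)
  · nlinarith [hq0 n]
  · gcongr
    exact pow_le_of_le_one (hq0 n).le (hq1 n) (by norm_num)

omit P in
lemma unperturbed (hω : 0 < ω) (hωd : ω < d) (hM : 0 ≤ M) :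
    ApproxInvariantCurve h ω (R / 2) 0 (M * ω) (fun z ↦ z) fun z ↦ z + ω / 2 := by
  have hR (z : ℂ) (hz : z ∈ strip (R / 2)) : |z.im| < R := by
    have := (abs_nonneg z.im).trans_lt hz
    rw [mem_strip] at hz
    linarith
  have hMω : M * (ω / 2) ≤ M * ω := by nlinarith
  refine ⟨⟨by fun_prop, fun _ _ ↦ by ring, fun _ _ ↦ by simp⟩,
    ⟨by fun_prop, fun _ _ ↦ by ring, fun _ _ ↦ by simp [map_ofNat (starRingEnd ℂ) 2]⟩,
    fun z _ ↦ by simp, fun z _ ↦ by simp, fun z _ ↦ by simp, fun z _ ↦ by simp,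
    fun z hz ↦ ?_, fun z hz ↦ ?_⟩
  · have := K.norm_partialFst_reflect_le z (ω / 2) (hR z hz) (by linarith) (by linarith)
    push_cast at this
    rw [errorFst, show z - (ω : ℂ) + ω / 2 = z - ω / 2 by ring]
    exact this.trans hMω
  · have := K.norm_partialSnd_reflect_le (z + (ω / 2 : ℝ)) (ω / 2)
      (hR _ (add_ofReal_mem_strip hz _)) (by linarith) (by linarith)
    push_cast at this
    rw [add_sub_cancel_right, add_assoc, add_halves] at this
    exact this.trans hMω

end ApproxInvariantCurve

/-- Degree-one lifts `ℝ → ℝ` that stay Lipschitz-close to the identity. -/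
structure IsRealLift (x : ℝ → ℝ) : Prop where
  map_add_one : ∀ θ, x (θ + 1) = x θ + 1
  abs_sub_sub_le : ∀ θ θ', θ ≤ θ' → |x θ' - x θ - (θ' - θ)| ≤ 1 / 50 * (θ' - θ)

/-- A pair of lifts parametrizing an invariant curve of rotation number `ω` of the twist map
generated by `h`. -/
structure IsInvariantCurve (h : ℂ × ℂ → ℂ) (ω : ℝ) (x y : ℝ → ℝ) : Prop where
  lift_fst : IsRealLift x
  lift_snd : IsRealLift y
  abs_snd_sub_fst_sub_le : ∀ θ, |y θ - x θ - ω / 2| ≤ ω / 100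
  partialFst_eq : ∀ θ, partialFst h (x θ, y θ) = partialFst h (x θ, y (θ - ω))
  partialSnd_eq : ∀ θ, partialSnd h (x θ, y θ) = partialSnd h (x (θ + ω), y θ)

section Limit

variable {h k : ℂ × ℂ → ℂ} {ω r e C R d M : ℝ}

lemma IsStripLift.ofReal_re {f : ℂ → ℂ} (hr : 0 < r) (hf : IsStripLift r f) (θ : ℝ) :
    ((f θ).re : ℂ) = f θ := by
  have := hf.map_conj (ofReal_mem_strip hr θ)
  rw [conj_ofReal] at this
  exact conj_eq_iff_re.1 this.symm

lemma abs_re_sub_sub_le_of_norm_deriv_sub_one_le {f : ℂ → ℂ} (hr : 0 < r) (hf : IsStripLift r f)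
    (hderiv : ∀ z ∈ strip r, ‖deriv f z - 1‖ ≤ C) {θ θ' : ℝ} (hθ : θ ≤ θ') :
    |(f θ').re - (f θ).re - (θ' - θ)| ≤ C * (θ' - θ) := by
  have hdrift (z) (hz : z ∈ strip r) : ‖deriv (fun z ↦ f z - z) z‖ ≤ C := by
    rw [deriv_fun_sub (hf.differentiableAt hz) differentiableAt_fun_id, deriv_id'']
    exact hderiv z hz
  have := (abs_re_le_norm _).trans (norm_comp_add_ofReal_sub_le (sub_nonneg.2 hθ)
    (StripPeriodic.differentiableOn hf) hdrift (ofReal_mem_strip hr θ))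
  rw [← ofReal_add, add_sub_cancel] at this
  simp only [sub_re, ofReal_re] at this
  rwa [sub_sub_sub_comm] at this

lemma exists_tendsto_isRealLift {f : ℕ → ℂ → ℂ} (hr : 0 < r) (hf : ∀ n, IsStripLift r (f n))
    (hderiv : ∀ n, ∀ z ∈ strip r, ‖deriv (f n) z - 1‖ ≤ 1 / 50)
    (hdist : ∀ n, ∀ z ∈ strip r, ‖f (n + 1) z - f n z‖ ≤ C * (1 / 2) ^ n) :
    ∃ x : ℝ → ℝ, IsRealLift x ∧ ∀ θ : ℝ, Tendsto (fun n ↦ f n θ) atTop (𝓝 (x θ : ℂ)) := by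
  have hcauchy (θ : ℝ) : CauchySeq fun n ↦ (f n θ).re := by
    refine cauchySeq_of_le_geometric (1 / 2) C (by norm_num) fun n ↦ ?_
    rw [Real.dist_eq, abs_sub_comm, ← sub_re]
    exact (abs_re_le_norm _).trans (hdist n θ (ofReal_mem_strip hr θ))
  choose x hx using fun θ ↦ cauchySeq_tendsto_of_complete (hcauchy θ)
  refine ⟨x, ⟨fun θ ↦ tendsto_nhds_unique (hx (θ + 1)) ?_, fun θ θ' hθ ↦ ?_⟩, fun θ ↦ ?_⟩
  · refine ((hx θ).add_const 1).congr fun n ↦ ?_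
    rw [ofReal_add, ofReal_one, (hf n).map_add_one (ofReal_mem_strip hr θ), add_re, one_re]
  · exact le_of_tendsto' (((hx θ').sub (hx θ)).sub_const (θ' - θ)).abs
      fun n ↦ abs_re_sub_sub_le_of_norm_deriv_sub_one_le hr (hf n) (hderiv n) hθ
  · exact ((continuous_ofReal.tendsto _).comp (hx θ)).congr fun n ↦ (hf n).ofReal_re hr θ

lemma IsTwistPair.of_tendsto {p : ℕ → ℂ × ℂ} {p₀ : ℂ × ℂ} (hp : ∀ n, IsTwistPair ω R (p n))
    (h : Tendsto p atTop (𝓝 p₀)) : IsTwistPair ω R p₀ where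
  abs_im_fst_le := le_of_tendsto' (((continuous_im.comp continuous_fst).abs.tendsto _).comp h)
    fun n ↦ (hp n).abs_im_fst_le
  abs_im_snd_le := le_of_tendsto' (((continuous_im.comp continuous_snd).abs.tendsto _).comp h)
    fun n ↦ (hp n).abs_im_snd_le
  le_norm_sub := ge_of_tendsto' (((continuous_snd.sub continuous_fst).norm.tendsto _).comp h)
    fun n ↦ (hp n).le_norm_sub
  norm_sub_le := le_of_tendsto' (((continuous_snd.sub continuous_fst).norm.tendsto _).comp h)
    fun n ↦ (hp n).norm_sub_le

lemma eq_of_tendsto_isTwistPair (P : SmallParameters ω R d M) (hk : TwoPointFunction R d k)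
    {p q : ℕ → ℂ × ℂ} {p₀ q₀ : ℂ × ℂ} {ε : ℕ → ℝ} (hp : ∀ n, IsTwistPair ω R (p n))
    (hq : ∀ n, IsTwistPair ω R (q n)) (hp₀ : Tendsto p atTop (𝓝 p₀))
    (hq₀ : Tendsto q atTop (𝓝 q₀)) (hε : Tendsto ε atTop (𝓝 0))
    (h : ∀ n, ‖k (p n) - k (q n)‖ ≤ ε n) : k p₀ = k q₀ := by
  have hlim {p : ℕ → ℂ × ℂ} {p₀ : ℂ × ℂ} (hp : ∀ n, IsTwistPair ω R (p n))
      (hp₀ : Tendsto p atTop (𝓝 p₀)) : Tendsto (k ∘ p) atTop (𝓝 (k p₀)) :=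
    (hk.differentiableAt
      ((IsTwistPair.of_tendsto hp hp₀).mem_twoPointDomain P)).continuousAt.tendsto.comp hp₀
  exact sub_eq_zero.1 (tendsto_nhds_unique ((hlim hp hp₀).sub (hlim hq hq₀))
    (squeeze_zero_norm h hε))

lemma exists_isInvariantCurve_of_sequence (P : SmallParameters ω R d M)
    (hh : TwoPointFunction R d h) {u v : ℕ → ℂ → ℂ} (hr : 0 < r) (hrR : r ≤ R / 2)
    (S : ∀ n, ApproxInvariantCurve h ω r (R / 100) (e * (1 / 2) ^ n) (u n) (v n))
    (hu : ∀ n, ∀ z ∈ strip r, ‖u (n + 1) z - u n z‖ ≤ C * (1 / 2) ^ n)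
    (hv : ∀ n, ∀ z ∈ strip r, ‖v (n + 1) z - v n z‖ ≤ C * (1 / 2) ^ n) :
    ∃ x y : ℝ → ℝ, IsInvariantCurve h ω x y := by
  obtain ⟨x, hx, hux⟩ := exists_tendsto_isRealLift hr (fun n ↦ (S n).lift_fst)
    (fun n _ ↦ (S n).norm_deriv_fst_sub_one_le P le_rfl) hu
  obtain ⟨y, hy, hvy⟩ := exists_tendsto_isRealLift hr (fun n ↦ (S n).lift_snd)
    (fun n _ ↦ (S n).norm_deriv_snd_sub_one_le P le_rfl) hv
  have he : Tendsto (fun n : ℕ ↦ e * (1 / 2 : ℝ) ^ n) atTop (𝓝 0) := by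
    simpa using (tendsto_pow_atTop_nhds_zero_of_lt_one (r := (1 / 2 : ℝ)) (by norm_num)
      (by norm_num)).const_mul e
  have hreal := ofReal_mem_strip hr
  have hpair (n : ℕ) (θ : ℝ) := (S n).isTwistPair P hrR le_rfl (hreal θ)
  refine ⟨x, y, hx, hy, fun θ ↦ ?_, fun θ ↦ ?_, fun θ ↦ ?_⟩
  · have hlim := (((hvy θ).sub (hux θ)).sub_const ((ω : ℂ) / 2)).norm
    have := le_of_tendsto' hlim fun n ↦ (S n).norm_snd_sub_fst_sub_le θ (hreal θ)
    rw [show (y θ - x θ - ω / 2 : ℂ) = (y θ - x θ - ω / 2 : ℝ) by push_cast; ring, norm_real,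
      Real.norm_eq_abs] at this
    nlinarith [P.R_le_one, P.ω_pos]
  · refine eq_of_tendsto_isTwistPair P hh.partialFst (hpair · θ)
      (fun n ↦ (S n).isTwistPair_prev P hrR le_rfl (hreal θ)) ((hux θ).prodMk_nhds (hvy θ))
      ((hux θ).prodMk_nhds ?_) he fun n ↦ (S n).norm_errorFst_le θ (hreal θ)
    simpa using hvy (θ - ω)
  · refine eq_of_tendsto_isTwistPair P hh.partialSnd (hpair · θ)
      (fun n ↦ (S n).isTwistPair_next P hrR le_rfl (hreal θ)) ((hux θ).prodMk_nhds (hvy θ))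
      (Tendsto.prodMk_nhds ?_ (hvy θ)) he fun n ↦ (S n).norm_errorSnd_le θ (hreal θ)
    simpa using hux (θ + ω)

end Limit

theorem TwistGenerator.exists_isInvariantCurve {h : ℂ × ℂ → ℂ} {R d M : ℝ}
    (K : TwistGenerator R d M h) (hR : 0 < R) (hR1 : R ≤ 1) (hd : 0 < d) (hM : 0 ≤ M) {ε : ℝ}
    (hε : 0 < ε) : ∃ ω x y, 0 < ω ∧ ω < ε ∧ IsInvariantCurve h ω x y := by
  have hC := one_le_cohomologicalConst
  -- With the initial error `e = (M + 1) ω`, the corrections have size `β = c ω`.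
  obtain ⟨c, hc⟩ : ∃ c, c = 10 * cohomologicalConst ^ 2 * (M + 1) / (R / 16) ^ 7 := ⟨_, rfl⟩
  have hc0 : 0 < c := by rw [hc]; positivity
  obtain ⟨ω, hω, hωlt, hdioph⟩ := exists_diophantine_lt
    (ε := min ε (min (R / 100) (min (d / 2) (min (1 / (100 * (M + 1)))
      (min (R / 100 / (2 * c)) ((M + 1) * R ^ 2 / (20000 * 2 ^ 14 * c ^ 2))))))) (by positivity)
  simp only [lt_min_iff] at hωlt
  obtain ⟨hωε, hωR, hωd, hωM, hωc, hωe⟩ := hωlt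
  rw [lt_div_iff₀ (by positivity)] at hωM hωc hωe
  have P : SmallParameters ω R d M := ⟨hω, hR1, hωR.le, by linarith, by nlinarith⟩
  have hβ : c * ω = 10 * cohomologicalConst ^ 2 * ((M + 1) * ω) / (R / 16) ^ 7 := by rw [hc]; ring
  have hβe : 20000 * (c * ω) ^ 2 * 2 ^ 14 ≤ (M + 1) * ω * R ^ 2 := by
    linear_combination ω * hωe
  have S₀ := (ApproxInvariantCurve.unperturbed K hω (by linarith) hM).mono hω.le le_rfl le_rfl
    (mul_le_mul_of_nonneg_right (le_add_of_nonneg_right zero_le_one) hω.le)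
  obtain ⟨u, v, huv⟩ := S₀.exists_newton_sequence K P hdioph (by positivity) hβ (by linarith) hβe
  obtain ⟨x, y, hxy⟩ := exists_isInvariantCurve_of_sequence P K.twoPointFunction
    (by linarith : 0 < R / 8) (by linarith) (fun n ↦ (huv n).1) (fun n z hz ↦ ((huv n).2 z hz).1)
    fun n z hz ↦ ((huv n).2 z hz).2
  exact ⟨ω, x, y, hω, hωε, hxy⟩

/-! ### Real-analytic functions and their complex extensions -/

section Extension

variable {f : ℝ → ℝ} {x ρ : ℝ}

lemma ofReal_mem_ball {a b : ℝ} : (a : ℂ) ∈ Metric.ball (b : ℂ) ρ ↔ |a - b| < ρ := by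
  rw [Metric.mem_ball, dist_eq_norm, ← ofReal_sub, norm_real, Real.norm_eq_abs]

lemma exists_differentiableOn_ball_of_analyticAt (hf : AnalyticAt ℝ f x) :
    ∃ ρ > 0, ∃ F : ℂ → ℂ, DifferentiableOn ℂ F (Metric.ball (x : ℂ) ρ) ∧
      ∀ t : ℝ, |t - x| < ρ → F t = f t := by
  obtain ⟨p, r, hp⟩ := hf
  let q : FormalMultilinearSeries ℂ ℂ ℂ := fun n ↦
    ContinuousMultilinearMap.mkPiRing ℂ (Fin n) ((p.coeff n : ℝ) : ℂ)
  have hrq : r ≤ q.radius := hp.r_le.trans <| FormalMultilinearSeries.radius_le_of_le fun n ↦ by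
    simp [q, ContinuousMultilinearMap.norm_mkPiRing,
      FormalMultilinearSeries.norm_apply_eq_norm_coef]
  have hq := q.hasFPowerSeriesOnBall (hp.r_pos.trans_le hrq)
  obtain ⟨ρ, hρ, hρr⟩ := ENNReal.lt_iff_exists_nnreal_btwn.1 hp.r_pos
  refine ⟨ρ, by exact_mod_cast hρ, fun z ↦ q.sum (z - x),
    hq.differentiableOn.comp (by fun_prop) fun z hz ↦ ?_, fun t ht ↦ HasSum.tsum_eq ?_⟩
  · rw [Metric.mem_ball, dist_eq_norm] at hz
    rw [Metric.mem_eball, edist_zero_right, enorm_eq_nnnorm]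
    exact lt_of_lt_of_le (by exact_mod_cast hz) (hρr.le.trans hrq)
  · have hmem : t - x ∈ Metric.eball (0 : ℝ) r := by
      rw [← Real.norm_eq_abs] at ht
      rw [Metric.mem_eball, edist_zero_right, enorm_eq_nnnorm]
      exact lt_of_lt_of_le (by exact_mod_cast ht) hρr.le
    have hsum := hp.hasSum hmem
    rw [add_sub_cancel] at hsum
    exact (hasSum_ofReal.2 hsum).congr_fun fun n ↦ by simp [q]

lemma mem_ball_re_of_mem_strip {z : ℂ} (hz : z ∈ strip ρ) : z ∈ Metric.ball (z.re : ℂ) ρ := by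
  rw [Metric.mem_ball, dist_eq_norm, show z - z.re = z.im * I by apply Complex.ext <;> simp,
    norm_mul, norm_I, mul_one, norm_real]
  exact hz

lemma exists_differentiableOn_strip_of_forall_ball (hρ : 0 < ρ)
    (hloc : ∀ x : ℝ, ∃ F : ℂ → ℂ, DifferentiableOn ℂ F (Metric.ball (x : ℂ) ρ) ∧
      ∀ t : ℝ, |t - x| < ρ → F t = f t) :
    ∃ F : ℂ → ℂ, DifferentiableOn ℂ F (strip ρ) ∧ ∀ t : ℝ, F t = f t := by
  choose G hG hGf using hloc
  refine ⟨fun z ↦ G z.re z, fun z hz ↦ DifferentiableAt.differentiableWithinAt ?_,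
    fun t ↦ by simpa using hGf t t (by simpa using hρ)⟩
  have hball := Metric.isOpen_ball.mem_nhds (mem_ball_re_of_mem_strip hz)
  refine ((hG z.re).differentiableAt hball).congr_of_eventuallyEq ?_
  have hre : ∀ᶠ w : ℂ in 𝓝 z, w.re ∈ Metric.ball z.re ρ :=
    continuous_re.continuousAt (Metric.ball_mem_nhds _ hρ)
  filter_upwards [hball, strip_mem_nhds hz, hre] with w hwz hw hwre
  refine eqOn_of_eq_on_real (Metric.isOpen_ball.inter Metric.isOpen_ball)
    ((convex_ball _ _).inter (convex_ball _ _)).isPreconnected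
    ⟨ofReal_mem_ball.2 ?_, Metric.mem_ball_self hρ⟩ ((hG w.re).mono Set.inter_subset_left)
    ((hG z.re).mono Set.inter_subset_right) (fun t ht ↦ ?_) ⟨mem_ball_re_of_mem_strip hw, hwz⟩
  · rwa [abs_sub_comm, ← Real.dist_eq]
  · rw [hGf _ _ (ofReal_mem_ball.1 ht.1), hGf _ _ (ofReal_mem_ball.1 ht.2)]

lemma exists_differentiableOn_strip_of_periodic (hf : ∀ x, AnalyticAt ℝ f x)
    (hper : Function.Periodic f 1) :
    ∃ r > 0, ∃ F : ℂ → ℂ, DifferentiableOn ℂ F (strip r) ∧ ∀ t : ℝ, F t = f t := by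
  choose ρ hρ G hG hGf using fun x ↦ exists_differentiableOn_ball_of_analyticAt (hf x)
  obtain ⟨δ, hδ, hcover⟩ := lebesgue_number_lemma_of_metric
    (s := ((↑) : ℝ → ℂ) '' Set.Icc 0 1) (c := fun x : ℝ ↦ Metric.ball (x : ℂ) (ρ x))
    (isCompact_Icc.image continuous_ofReal) (fun x ↦ Metric.isOpen_ball) (by
      rintro _ ⟨x, _, rfl⟩
      exact Set.mem_iUnion.2 ⟨x, Metric.mem_ball_self (hρ x)⟩)
  refine ⟨δ, hδ, exists_differentiableOn_strip_of_forall_ball hδ fun x ↦ ?_⟩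
  obtain ⟨i, hi⟩ := hcover (Int.fract x : ℝ)
    ⟨Int.fract x, ⟨Int.fract_nonneg x, (Int.fract_lt_one x).le⟩, rfl⟩
  have hmem : ∀ z ∈ Metric.ball (x : ℂ) δ, z - (⌊x⌋ : ℝ) ∈ Metric.ball (i : ℂ) (ρ i) :=
    fun z hz ↦ hi <| by
      rw [Metric.mem_ball, dist_eq_norm] at hz ⊢
      rwa [Int.fract, ofReal_sub, sub_sub_sub_cancel_right]
  refine ⟨fun z ↦ G i (z - (⌊x⌋ : ℝ)), (hG i).comp (by fun_prop) hmem, fun t ht ↦ ?_⟩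
  have htmem := hmem t (ofReal_mem_ball.2 ht)
  beta_reduce
  rw [← ofReal_sub] at htmem ⊢
  rw [hGf i _ (ofReal_mem_ball.1 htmem)]
  simpa using hper.sub_int_mul_eq ⌊x⌋ (x := t)

lemma stripPeriodic_of_eq_on_real {F : ℂ → ℂ} (hρ : 0 < ρ) (hF : DifferentiableOn ℂ F (strip ρ))
    (hFf : ∀ t : ℝ, F t = f t) (hper : Function.Periodic f 1) : StripPeriodic ρ F where
  differentiableOn := hF
  map_add_one z hz := by
    refine eq_on_strip_of_eq_on_real hρ
      (hF.comp (t := strip ρ) (by fun_prop) fun z hz ↦ add_one_mem_strip hz) hF (fun t ↦ ?_) hz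
    have := hFf (t + 1)
    rw [hper t, ofReal_add, ofReal_one] at this
    rw [Function.comp_apply, this, hFf]
  map_conj z hz := by
    have hconj : DifferentiableOn ℂ (conj ∘ F ∘ conj) (strip ρ) := fun w hw ↦ by
      have := (hF.differentiableAt (strip_mem_nhds (conj_mem_strip hw))).hasDerivAt.conj_conj
      rw [conj_conj] at this
      exact this.differentiableAt.differentiableWithinAt
    have := eq_on_strip_of_eq_on_real hρ hconj hF (fun t ↦ by simp [hFf]) hz
    rw [← this]
    simp

theorem exists_stripPeriodic_of_periodic (hf : ∀ x, AnalyticAt ℝ f x)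
    (hper : Function.Periodic f 1) :
    ∃ r > 0, ∃ F : ℂ → ℂ, StripPeriodic r F ∧ ∀ t : ℝ, F t = f t := by
  obtain ⟨r, hr, F, hF, hFf⟩ := exists_differentiableOn_strip_of_periodic hf hper
  exact ⟨r, hr, F, stripPeriodic_of_eq_on_real hr hF hFf hper, hFf⟩

lemma deriv_eq_of_eq_on_real {F : ℂ → ℂ} {f' : ℝ} (hF : DifferentiableAt ℂ F x)
    (h : ∀ t : ℝ, F t = f t) (hf : HasDerivAt f f' x) : deriv F x = f' := by
  have hderiv := hF.hasDerivAt.comp_ofReal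
  simp only [h] at hderiv
  exact hderiv.unique hf.ofReal_comp

lemma StripPeriodic.exists_norm_le {r s : ℝ} {F : ℂ → ℂ} (hF : StripPeriodic r F) (hs : s < r) :
    ∃ C, ∀ z ∈ strip s, ‖F z‖ ≤ C := by
  have hK : IsCompact (Set.Icc (0 : ℝ) 1 ×ℂ Set.Icc (-s) s) := isCompact_Icc.reProdIm isCompact_Icc
  obtain ⟨C, hC⟩ := hK.exists_bound_of_continuousOn (hF.differentiableOn.continuousOn.mono
    fun z hz ↦ (abs_le.2 hz.2).trans_lt hs)
  refine ⟨C, fun z hz ↦ ?_⟩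
  have hline : Function.Periodic (fun x : ℝ ↦ F (x + z.im * I)) 1 := fun x ↦ by
    beta_reduce
    rw [ofReal_add, ofReal_one, add_right_comm]
    exact hF.map_add_one _ (by simpa [strip] using hz.trans hs)
  obtain ⟨x, hx, hxz⟩ := hline.exists_mem_Ico₀ one_pos z.re
  rw [re_add_im] at hxz
  rw [hxz]
  exact hC _ ⟨by simpa using Set.Ico_subset_Icc_self hx, by simpa [← abs_le] using (le_of_lt hz)⟩

lemma analyticAt_of_hasDerivAt {k : ℝ → ℝ} (hk : AnalyticAt ℝ k x)
    (hf : ∀ t, HasDerivAt f (k t) t) : AnalyticAt ℝ f x := by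
  obtain ⟨ρ, hρ, K, hK, hKk⟩ := exists_differentiableOn_ball_of_analyticAt hk
  obtain ⟨P, hPx, hP⟩ := hK.isExactOn_ball.with_val_at (x : ℂ) (f x : ℂ)
  have hPana : AnalyticAt ℂ P x :=
    DifferentiableOn.analyticAt (fun z hz ↦ (hP z hz).differentiableAt.differentiableWithinAt)
      (Metric.ball_mem_nhds _ hρ)
  have hre : AnalyticAt ℝ (fun t : ℝ ↦ (P t).re) x :=
    (reCLM.analyticAt _).comp <| hPana.restrictScalars.comp_of_eq (ofRealCLM.analyticAt x) rfl
  refine hre.congr ?_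
  have hderiv : ∀ s ∈ Metric.ball x ρ,
      HasDerivWithinAt (fun t : ℝ ↦ (P t).re - f t) 0 (Metric.ball x ρ) s := fun s hs ↦ by
    have hPs := hP s (ofReal_mem_ball.2 hs)
    rw [hKk s hs] at hPs
    simpa using (hPs.real_of_complex.fun_sub (hf s)).hasDerivWithinAt
  filter_upwards [Metric.ball_mem_nhds x hρ] with t ht
  have := (convex_ball x ρ).norm_image_sub_le_of_norm_hasDerivWithin_le (C := 0) hderiv (by simp)
    (Metric.mem_ball_self hρ) ht
  simpa [hPx, sub_eq_zero] using this

end Extension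

/-! ### Change of time -/

lemma surjective_of_map_add {f : ℝ → ℝ} {T S : ℝ} (hS : 0 < S) (hf : Continuous f)
    (hmap : ∀ t, f (t + T) = f t + S) : Function.Surjective f := by
  have hnat (n : ℕ) (t : ℝ) : f (t + n * T) = f t + n * S := by
    induction n with
    | zero => simp
    | succ n ih =>
      have hsucc : f (t + (n + 1) * T) = f (t + n * T) + S := by
        rw [← hmap]
        ring_nf
      push_cast
      linear_combination hsucc + ih
  intro y
  obtain ⟨n, hn⟩ := exists_nat_ge (|y - f 0| / S)
  obtain ⟨hlow, hup⟩ := abs_le.1 ((div_le_iff₀ hS).1 hn)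
  refine mem_range_of_exists_le_of_exists_ge hf ⟨0 - n * T, ?_⟩ ⟨0 + n * T, ?_⟩
  · have := hnat n (0 - n * T)
    rw [sub_add_cancel] at this
    linarith
  · rw [hnat]
    linarith

/-- The time change that slows the clock by the `T`-periodic factor `s`, normalized so that the
new time has period one. -/
structure IsTimeChange (s : ℝ → ℝ) (T c : ℝ) (X : ℝ → ℝ) : Prop where
  analyticAt : ∀ θ, AnalyticAt ℝ X θ
  hasDerivAt : ∀ θ, HasDerivAt X (c * s (X θ)) θ
  map_add_one : ∀ θ, X (θ + 1) = X θ + T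

section TimeChange

variable {k s τ X : ℝ → ℝ} {T c : ℝ}

lemma exists_normalized_primitive (hT : 0 < T) (hk : Continuous k) (hper : Function.Periodic k T)
    (hpos : ∀ t, 0 < k t) :
    ∃ c > 0, ∃ τ : ℝ → ℝ, (∀ t, HasDerivAt τ (k t / c) t) ∧ ∀ t, τ (t + T) = τ t + 1 := by
  have hint (a b : ℝ) : IntervalIntegrable k MeasureTheory.volume a b := hk.intervalIntegrable a b
  have hc := intervalIntegral.intervalIntegral_pos_of_pos (hint 0 T) hpos hT
  refine ⟨_, hc, fun t ↦ (∫ u in (0 : ℝ)..t, k u) / ∫ u in (0 : ℝ)..T, k u,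
    fun t ↦ (hk.integral_hasStrictDerivAt 0 t).hasDerivAt.div_const _, fun t ↦ ?_⟩
  beta_reduce
  rw [← intervalIntegral.integral_add_adjacent_intervals (hint 0 t) (hint t (t + T)),
    hper.intervalIntegral_add_eq t 0, zero_add, add_div, div_self hc.ne']

lemma exists_analytic_inverse {τ' : ℝ → ℝ} (hτ : ∀ t, HasDerivAt τ (τ' t) t)
    (hτ' : ∀ t, AnalyticAt ℝ τ' t) (hpos : ∀ t, 0 < τ' t) (hsurj : Function.Surjective τ) :
    ∃ X : ℝ → ℝ, (∀ θ, τ (X θ) = θ) ∧ (∀ θ, AnalyticAt ℝ X θ) ∧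
      ∀ θ, HasDerivAt X (τ' (X θ))⁻¹ θ := by
  have hmono : StrictMono τ := strictMono_of_deriv_pos fun t ↦ (hτ t).deriv ▸ hpos t
  let e := (hmono.orderIsoOfSurjective τ hsurj).toHomeomorph.toOpenPartialHomeomorph
  have hne (θ : ℝ) : τ' (e.symm θ) ≠ 0 := (hpos _).ne'
  refine ⟨e.symm, fun θ ↦ e.right_inv (x := θ) trivial, fun θ ↦ ?_,
    fun θ ↦ e.hasDerivAt_symm (a := θ) trivial (hne θ) (hτ _)⟩
  refine e.analyticAt_symm (i := ContinuousLinearEquiv.unitsEquivAut ℝ (Units.mk0 _ (hne θ)))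
    trivial (analyticAt_of_hasDerivAt (hτ' _) hτ) ((hτ (e.symm θ)).hasFDerivAt.fderiv.trans ?_)
  ext
  simp

theorem exists_isTimeChange (hT : 0 < T) (hs : ∀ t, AnalyticAt ℝ s t)
    (hper : Function.Periodic s T) (hpos : ∀ t, 0 < s t) :
    ∃ c > 0, ∃ X, IsTimeChange s T c X := by
  have hk (t : ℝ) : AnalyticAt ℝ (fun t ↦ (s t)⁻¹) t := (hs t).inv (hpos t).ne'
  obtain ⟨c, hc, τ, hτ, hτT⟩ := exists_normalized_primitive hT
    (continuous_iff_continuousAt.2 fun t ↦ (hk t).continuousAt) (fun t ↦ by rw [hper t])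
    fun t ↦ inv_pos.2 (hpos t)
  have hτpos (t : ℝ) : 0 < (s t)⁻¹ / c := div_pos (inv_pos.2 (hpos t)) hc
  obtain ⟨X, hτX, hX, hX'⟩ := exists_analytic_inverse hτ
    (fun t ↦ (hk t).div analyticAt_const hc.ne') hτpos (surjective_of_map_add one_pos
      (continuous_iff_continuousAt.2 fun t ↦ (hτ t).continuousAt) hτT)
  refine ⟨c, hc, X, hX, fun θ ↦ by simpa [div_eq_mul_inv] using hX' θ, fun θ ↦ ?_⟩
  have hmono : StrictMono τ := strictMono_of_deriv_pos fun t ↦ (hτ t).deriv ▸ hτpos t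
  exact hmono.injective (by rw [hτX, hτT, hτX])

namespace IsTimeChange

lemma continuous (hX : IsTimeChange s T c X) : Continuous X :=
  continuous_iff_continuousAt.2 fun θ ↦ (hX.analyticAt θ).continuousAt

lemma strictMono (hX : IsTimeChange s T c X) (hc : 0 < c) (hpos : ∀ t, 0 < s t) : StrictMono X :=
  strictMono_of_deriv_pos fun θ ↦ (hX.hasDerivAt θ).deriv ▸ mul_pos hc (hpos _)

lemma surjective (hX : IsTimeChange s T c X) (hT : 0 < T) : Function.Surjective X :=
  surjective_of_map_add hT hX.continuous hX.map_add_one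

end IsTimeChange

end TimeChange

/-! ### The generating function of the Fermi–Ulam model -/

lemma norm_sub_sub_deriv_mul_le {s : Set ℂ} {f : ℂ → ℂ} {C : ℝ} {z w : ℂ} (hconv : Convex ℝ s)
    (hopen : IsOpen s) (hf : DifferentiableOn ℂ f s) (hC : ∀ u ∈ s, ‖deriv (deriv f) u‖ ≤ C)
    (hz : z ∈ s) (hw : w ∈ s) : ‖f w - f z - deriv f z * (w - z)‖ ≤ C * ‖w - z‖ ^ 2 := by
  have hC0 : 0 ≤ C := (norm_nonneg _).trans (hC z hz)
  have hseg : segment ℝ z w ⊆ s := hconv.segment_subset hz hw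
  have hderiv : ∀ u ∈ segment ℝ z w, HasDerivWithinAt (fun u ↦ f u - deriv f z * u)
      (deriv f u - deriv f z) (segment ℝ z w) u := fun u hu ↦ by
    have hfu := (hf.differentiableAt (hopen.mem_nhds (hseg hu))).hasDerivAt
    simpa using (hfu.fun_sub ((hasDerivAt_id u).const_mul (deriv f z))).hasDerivWithinAt
  have hbound : ∀ u ∈ segment ℝ z w, ‖deriv f u - deriv f z‖ ≤ C * ‖w - z‖ := fun u hu ↦
    calc ‖deriv f u - deriv f z‖ ≤ C * ‖u - z‖ :=
          hconv.norm_image_sub_le_of_norm_deriv_le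
            (fun v hv ↦ (hf.deriv hopen).differentiableAt (hopen.mem_nhds hv)) hC hz (hseg hu)
      _ ≤ C * ‖w - z‖ := by
          gcongr
          exact norm_sub_le_of_mem_segment hu
  calc ‖f w - f z - deriv f z * (w - z)‖
      = ‖(f w - deriv f z * w) - (f z - deriv f z * z)‖ := by ring_nf
    _ ≤ C * ‖w - z‖ * ‖w - z‖ :=
        (convex_segment z w).norm_image_sub_le_of_norm_hasDerivWithin_le hderiv hbound
          (left_mem_segment ℝ z w) (right_mem_segment ℝ z w)
    _ = C * ‖w - z‖ ^ 2 := by ring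

/-- The action `∫ (q'² / 2 - g q)` of the flight which leaves the lower plate `q₁` at time `X τ` and
reaches the upper plate `q₂` at time `X σ`, multiplied by `2 c`. -/
noncomputable def generatingFunction (c g : ℝ) (q₁ q₂ X : ℂ → ℂ) (p : ℂ × ℂ) : ℂ :=
  2 * c * ((q₂ p.2 - q₁ p.1) ^ 2 * (X p.2 - X p.1)⁻¹ / 2
    - g / 2 * (q₁ p.1 + q₂ p.2) * (X p.2 - X p.1) - g ^ 2 * (X p.2 - X p.1) ^ 3 / 24)

section Partials

variable {c g : ℝ} {q₁ q₂ X : ℂ → ℂ} {τ σ q' X' : ℂ}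

lemma partialFst_generatingFunction (hq : HasDerivAt q₁ q' τ) (hX : HasDerivAt X X' τ)
    (hne : X σ - X τ ≠ 0) :
    partialFst (generatingFunction c g q₁ q₂ X) (τ, σ) = 2 * c *
      (X' * (((q₂ σ - q₁ τ) / (X σ - X τ) + g / 2 * (X σ - X τ)) ^ 2 / 2 + g * q₁ τ)
        - ((q₂ σ - q₁ τ) / (X σ - X τ) + g / 2 * (X σ - X τ)) * q') := by
  have hD := hX.const_sub (X σ)
  refine HasDerivAt.deriv <| ((((((hq.const_sub (q₂ σ)).fun_pow 2).fun_mul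
    (hD.fun_inv hne)).div_const 2).fun_sub (((hq.add_const (q₂ σ)).const_mul (g / 2 : ℂ)).fun_mul
      hD)).fun_sub (((hD.fun_pow 3).const_mul (g ^ 2 : ℂ)).div_const 24)).const_mul
        (2 * c : ℂ) |>.congr_deriv ?_
  field_simp
  ring

lemma partialSnd_generatingFunction (hq : HasDerivAt q₂ q' σ) (hX : HasDerivAt X X' σ)
    (hne : X σ - X τ ≠ 0) :
    partialSnd (generatingFunction c g q₁ q₂ X) (τ, σ) = -(2 * c *
      (X' * (((q₂ σ - q₁ τ) / (X σ - X τ) - g / 2 * (X σ - X τ)) ^ 2 / 2 + g * q₂ σ)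
        - ((q₂ σ - q₁ τ) / (X σ - X τ) - g / 2 * (X σ - X τ)) * q')) := by
  have hD := hX.sub_const (X τ)
  refine HasDerivAt.deriv <| ((((((hq.sub_const (q₁ τ)).fun_pow 2).fun_mul
    (hD.fun_inv hne)).div_const 2).fun_sub (((hq.const_add (q₁ τ)).const_mul (g / 2 : ℂ)).fun_mul
      hD)).fun_sub (((hD.fun_pow 3).const_mul (g ^ 2 : ℂ)).div_const 24)).const_mul
        (2 * c : ℂ) |>.congr_deriv ?_
  field_simp
  ring

end Partials

/-- Holomorphic extensions, in a rescaled time, of the lower plate `q₁`, the upper plate `q₂` and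
the original time `X`. Time is rescaled by the squared distance of the plates, which makes the
generating function asymptotic to `1 / (σ - τ)` on the diagonal. -/
structure PlateModel (r c T : ℝ) (q₁ q₂ X : ℂ → ℂ) : Prop where
  lower : StripPeriodic r q₁
  upper : StripPeriodic r q₂
  time : StripPeriodic r fun z ↦ X z - T * z
  deriv_time : ∀ z ∈ strip r, deriv X z = c * (q₂ z - q₁ z) ^ 2

namespace PlateModel

variable {r s c T g m : ℝ} {q₁ q₂ X : ℂ → ℂ} {z w : ℂ}

lemma mono (S : PlateModel r c T q₁ q₂ X) (h : s ≤ r) : PlateModel s c T q₁ q₂ X where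
  lower := S.lower.mono h
  upper := S.upper.mono h
  time := S.time.mono h
  deriv_time z hz := S.deriv_time z (strip_mono h hz)

lemma differentiableAt_time (S : PlateModel r c T q₁ q₂ X) (hz : z ∈ strip r) :
    DifferentiableAt ℂ X z := by
  have hlin : DifferentiableAt ℂ (fun z : ℂ ↦ (T : ℂ) * z) z := by fun_prop
  simpa using (S.time.differentiableAt hz).fun_add hlin

lemma differentiableOn_time (S : PlateModel r c T q₁ q₂ X) : DifferentiableOn ℂ X (strip r) :=
  fun _ hz ↦ (S.differentiableAt_time hz).differentiableWithinAt

lemma stripPeriodic_deriv_time (S : PlateModel r c T q₁ q₂ X) : StripPeriodic r (deriv X) :=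
  ((StripPeriodic.const r c).mul ((S.upper.sub S.lower).mul (S.upper.sub S.lower))).congr
    fun z hz ↦ by rw [S.deriv_time z hz, pow_two]

lemma time_add_one (S : PlateModel r c T q₁ q₂ X) (hz : z ∈ strip r) : X (z + 1) = X z + T := by
  linear_combination S.time.map_add_one z hz

lemma time_conj (S : PlateModel r c T q₁ q₂ X) (hz : z ∈ strip r) : X (conj z) = conj (X z) := by
  simpa using S.time.map_conj z hz

lemma twoPointFunction_generatingFunction {d : ℝ} (S : PlateModel r c T q₁ q₂ X)
    (hne : ∀ p ∈ twoPointDomain r d, X p.2 - X p.1 ≠ 0) :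
    TwoPointFunction r d (generatingFunction c g q₁ q₂ X) where
  analyticAt p hp := by
    have hX := S.differentiableOn_time.analyticOnNhd (isOpen_strip r)
    have h₁ := S.lower.differentiableOn.analyticOnNhd (isOpen_strip r)
    have h₂ := S.upper.differentiableOn.analyticOnNhd (isOpen_strip r)
    have hD : AnalyticAt ℂ (fun p : ℂ × ℂ ↦ X p.2 - X p.1) p :=
      ((hX _ hp.2.1).comp analyticAt_snd).sub ((hX _ hp.1).comp analyticAt_fst)
    have hq₁ : AnalyticAt ℂ (fun p : ℂ × ℂ ↦ q₁ p.1) p := (h₁ _ hp.1).comp analyticAt_fst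
    have hq₂ : AnalyticAt ℂ (fun p : ℂ × ℂ ↦ q₂ p.2) p := (h₂ _ hp.2.1).comp analyticAt_snd
    exact analyticAt_const.mul (((((hq₂.sub hq₁).pow 2).mul (hD.inv (hne p hp))).div_const.sub
      ((analyticAt_const.mul (hq₁.add hq₂)).mul hD)).sub
        (analyticAt_const.mul (hD.pow 3)).div_const)
  map_add_one p hp := by
    simp only [generatingFunction, S.lower.map_add_one _ hp.1, S.upper.map_add_one _ hp.2.1,
      S.time_add_one hp.1, S.time_add_one (z := p.2) hp.2.1, add_sub_add_right_eq_sub]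
  map_conj p hp := by
    simp only [generatingFunction, S.lower.map_conj _ hp.1, S.upper.map_conj _ hp.2.1,
      S.time_conj hp.1, S.time_conj (z := p.2) hp.2.1, map_mul, map_sub, map_add, map_pow, map_inv₀,
      map_div₀, conj_ofReal, map_ofNat]

end PlateModel

/-- A plate model with the uniform estimates that control its generating function: `C` bounds the
plates, the velocity of the upper one and the first two derivatives of the time `X`, whose rate is
at least `m`. -/
structure BoundedPlateModel (r c T C m : ℝ) (q₁ q₂ X : ℂ → ℂ) : Prop extends
    PlateModel r c T q₁ q₂ X where
  norm_lower_le : ∀ z ∈ strip r, ‖q₁ z‖ ≤ C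
  norm_upper_le : ∀ z ∈ strip r, ‖q₂ z‖ ≤ C
  norm_deriv_upper_le : ∀ z ∈ strip r, ‖deriv q₂ z‖ ≤ C
  norm_deriv_time_le : ∀ z ∈ strip r, ‖deriv X z‖ ≤ C
  norm_deriv_deriv_time_le : ∀ z ∈ strip r, ‖deriv (deriv X) z‖ ≤ C
  le_norm_deriv_time : ∀ z ∈ strip r, m ≤ ‖deriv X z‖

lemma StripPeriodic.exists_le_norm {r m : ℝ} {f : ℂ → ℂ} (hf : StripPeriodic r f) (hr : 0 < r)
    (hm : 0 < m) (h : ∀ t : ℝ, 2 * m ≤ ‖f t‖) :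
    ∃ s > 0, s ≤ 1 ∧ s < r ∧ ∀ z ∈ strip s, m ≤ ‖f z‖ := by
  obtain ⟨C, hC⟩ := hf.deriv.exists_norm_le (half_lt_self hr)
  have hC0 : 0 ≤ C := (norm_nonneg _).trans (hC _ (ofReal_mem_strip (half_pos hr) 0))
  have hs : 0 < min 1 (min (r / 2) (m / (C + 1))) := by positivity
  have hsr : min 1 (min (r / 2) (m / (C + 1))) ≤ r / 2 := (min_le_right _ _).trans (min_le_left _ _)
  refine ⟨_, hs, min_le_left _ _, by linarith, fun z hz ↦ ?_⟩
  have hdist : ‖(z.re : ℂ) - z‖ ≤ m / (C + 1) := by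
    rw [← dist_eq_norm, dist_comm]
    exact (mem_ball_re_of_mem_strip hz).le.trans ((min_le_right _ _).trans (min_le_right _ _))
  have hvar : ‖f z.re - f z‖ ≤ m :=
    calc ‖f z.re - f z‖ ≤ C * ‖(z.re : ℂ) - z‖ :=
          (convex_strip _).norm_image_sub_le_of_norm_deriv_le
            (fun w hw ↦ hf.differentiableAt (strip_mono (half_le_self hr.le) hw)) hC
            (strip_mono hsr hz) (ofReal_mem_strip (half_pos hr) _)
      _ ≤ (C + 1) * (m / (C + 1)) := by gcongr; linarith
      _ = m := by field_simp
  linarith [h z.re, norm_sub_norm_le (f z.re) (f z)]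

lemma PlateModel.exists_boundedPlateModel {r c T m : ℝ} {q₁ q₂ X : ℂ → ℂ}
    (S : PlateModel r c T q₁ q₂ X) (hr : 0 < r) (hm : 0 < m) (h : ∀ t : ℝ, 2 * m ≤ ‖deriv X t‖) :
    ∃ R > 0, R ≤ 1 ∧ ∃ C, BoundedPlateModel R c T C m q₁ q₂ X := by
  obtain ⟨R, hR, hR1, hRr, hlow⟩ := S.stripPeriodic_deriv_time.exists_le_norm hr hm h
  obtain ⟨C₁, hC₁⟩ := S.lower.exists_norm_le hRr
  obtain ⟨C₂, hC₂⟩ := S.upper.exists_norm_le hRr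
  obtain ⟨C₃, hC₃⟩ := S.upper.deriv.exists_norm_le hRr
  obtain ⟨C₄, hC₄⟩ := S.stripPeriodic_deriv_time.exists_norm_le hRr
  obtain ⟨C₅, hC₅⟩ := S.stripPeriodic_deriv_time.deriv.exists_norm_le hRr
  refine ⟨R, hR, hR1, max C₁ (max C₂ (max C₃ (max C₄ C₅))), S.mono hRr.le, fun z hz ↦ ?_,
    fun z hz ↦ ?_, fun z hz ↦ ?_, fun z hz ↦ ?_, fun z hz ↦ ?_, hlow⟩
  · simp [hC₁ z hz]
  · simp [hC₂ z hz]
  · simp [hC₃ z hz]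
  · simp [hC₄ z hz]
  · simp [hC₅ z hz]

lemma generatingFunction_sub_one_div {c g : ℝ} {q₁ q₂ X : ℂ → ℂ} {p : ℂ × ℂ}
    (hX : deriv X p.1 = c * (q₂ p.1 - q₁ p.1) ^ 2) (hne : X p.2 - X p.1 ≠ 0)
    (hp : p.2 - p.1 ≠ 0) :
    generatingFunction c g q₁ q₂ X p - 1 / (p.2 - p.1) =
      (c * ((q₂ p.2 - q₂ p.1) * (q₂ p.2 + q₂ p.1 - 2 * q₁ p.1)) * (p.2 - p.1)
        - (X p.2 - X p.1 - deriv X p.1 * (p.2 - p.1))) / ((X p.2 - X p.1) * (p.2 - p.1))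
      - 2 * c * (g / 2 * (q₁ p.1 + q₂ p.2) * (X p.2 - X p.1)
        + g ^ 2 * (X p.2 - X p.1) ^ 3 / 24) := by
  rw [hX, generatingFunction]
  field_simp
  ring

namespace BoundedPlateModel

variable {r c T C m d : ℝ} {q₁ q₂ X : ℂ → ℂ} {p : ℂ × ℂ}

lemma norm_sub_sub_deriv_mul_le (S : BoundedPlateModel r c T C m q₁ q₂ X)
    (hp : p ∈ twoPointDomain r d) :
    ‖X p.2 - X p.1 - deriv X p.1 * (p.2 - p.1)‖ ≤ C * ‖p.2 - p.1‖ ^ 2 :=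
  FermiUlam.norm_sub_sub_deriv_mul_le (convex_strip r) (isOpen_strip r) S.differentiableOn_time
    S.norm_deriv_deriv_time_le hp.1 hp.2.1

lemma mul_norm_sub_le (S : BoundedPlateModel r c T C m q₁ q₂ X) (hd : C * d ≤ m / 2)
    (hp : p ∈ twoPointDomain r d) : m / 2 * ‖p.2 - p.1‖ ≤ ‖X p.2 - X p.1‖ := by
  have hC : 0 ≤ C := (norm_nonneg _).trans (S.norm_lower_le _ hp.1)
  have hlin : m * ‖p.2 - p.1‖ ≤ ‖deriv X p.1 * (p.2 - p.1)‖ := by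
    rw [norm_mul]
    gcongr
    exact S.le_norm_deriv_time _ hp.1
  have hquad : C * ‖p.2 - p.1‖ ^ 2 ≤ m / 2 * ‖p.2 - p.1‖ :=
    calc C * ‖p.2 - p.1‖ ^ 2 = C * ‖p.2 - p.1‖ * ‖p.2 - p.1‖ := by ring
      _ ≤ C * d * ‖p.2 - p.1‖ := by gcongr; exact hp.2.2.2.le
      _ ≤ m / 2 * ‖p.2 - p.1‖ := by gcongr
  linarith [norm_sub_norm_le (deriv X p.1 * (p.2 - p.1)) (X p.2 - X p.1),
    norm_sub_rev (deriv X p.1 * (p.2 - p.1)) (X p.2 - X p.1), S.norm_sub_sub_deriv_mul_le hp]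

lemma norm_sub_pos (S : BoundedPlateModel r c T C m q₁ q₂ X) (hm : 0 < m) (hd : C * d ≤ m / 2)
    (hp : p ∈ twoPointDomain r d) : 0 < ‖X p.2 - X p.1‖ :=
  lt_of_lt_of_le (mul_pos (half_pos hm) (norm_pos_iff.2 (sub_ne_zero_of_mem_twoPointDomain hp)))
    (S.mul_norm_sub_le hd hp)

lemma norm_time_sub_le (S : BoundedPlateModel r c T C m q₁ q₂ X) (hd : d ≤ 1)
    (hp : p ∈ twoPointDomain r d) : ‖X p.2 - X p.1‖ ≤ C := by
  have hC : 0 ≤ C := (norm_nonneg _).trans (S.norm_lower_le _ hp.1)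
  calc ‖X p.2 - X p.1‖ ≤ C * ‖p.2 - p.1‖ :=
        (convex_strip r).norm_image_sub_le_of_norm_deriv_le
          (fun z hz ↦ S.differentiableAt_time hz) S.norm_deriv_time_le hp.1 hp.2.1
    _ ≤ C := mul_le_of_le_one_right hC (hp.2.2.2.le.trans hd)

lemma norm_kinetic_error_le (S : BoundedPlateModel r c T C m q₁ q₂ X)
    (hp : p ∈ twoPointDomain r d) :
    ‖c * ((q₂ p.2 - q₂ p.1) * (q₂ p.2 + q₂ p.1 - 2 * q₁ p.1)) * (p.2 - p.1)
      - (X p.2 - X p.1 - deriv X p.1 * (p.2 - p.1))‖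
      ≤ (4 * |c| * C ^ 2 + C) * ‖p.2 - p.1‖ ^ 2 := by
  have hC : 0 ≤ C := (norm_nonneg _).trans (S.norm_lower_le _ hp.1)
  have hupper : ‖q₂ p.2 - q₂ p.1‖ ≤ C * ‖p.2 - p.1‖ :=
    (convex_strip r).norm_image_sub_le_of_norm_deriv_le
      (fun z hz ↦ S.upper.differentiableAt hz) S.norm_deriv_upper_le hp.1 hp.2.1
  have hsum : ‖q₂ p.2 + q₂ p.1 - 2 * q₁ p.1‖ ≤ 4 * C := by
    have h₂ := norm_add_le (q₂ p.2) (q₂ p.1)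
    have h₁ := norm_sub_le (q₂ p.2 + q₂ p.1) (2 * q₁ p.1)
    rw [norm_mul, norm_ofNat] at h₁
    linarith [S.norm_lower_le _ hp.1, S.norm_upper_le _ hp.1, S.norm_upper_le _ hp.2.1]
  calc _ ≤ |c| * ((C * ‖p.2 - p.1‖) * (4 * C)) * ‖p.2 - p.1‖ + C * ‖p.2 - p.1‖ ^ 2 := by
        refine (norm_sub_le _ _).trans (add_le_add ?_ (S.norm_sub_sub_deriv_mul_le hp))
        rw [norm_mul, norm_mul, norm_mul, norm_real, Real.norm_eq_abs]
        gcongr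
    _ = (4 * |c| * C ^ 2 + C) * ‖p.2 - p.1‖ ^ 2 := by ring

lemma norm_potential_le (S : BoundedPlateModel r c T C m q₁ q₂ X) (g : ℝ) (hd : d ≤ 1)
    (hp : p ∈ twoPointDomain r d) :
    ‖2 * c * (g / 2 * (q₁ p.1 + q₂ p.2) * (X p.2 - X p.1) + g ^ 2 * (X p.2 - X p.1) ^ 3 / 24)‖
      ≤ 2 * |c| * (|g| * C ^ 2 + |g| ^ 2 * C ^ 3 / 24) := by
  have hC : 0 ≤ C := (norm_nonneg _).trans (S.norm_lower_le _ hp.1)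
  have hX := S.norm_time_sub_le hd hp
  have hsum : ‖q₁ p.1 + q₂ p.2‖ ≤ 2 * C := by
    linarith [norm_add_le (q₁ p.1) (q₂ p.2), S.norm_lower_le _ hp.1, S.norm_upper_le _ hp.2.1]
  calc _ ≤ 2 * |c| * (|g| / 2 * (2 * C) * C + |g| ^ 2 * C ^ 3 / 24) := by
        rw [norm_mul, norm_mul, norm_ofNat, norm_real, Real.norm_eq_abs]
        gcongr
        refine (norm_add_le _ _).trans (add_le_add ?_ ?_)
        · rw [norm_mul, norm_mul, norm_div, norm_ofNat, norm_real, Real.norm_eq_abs]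
          gcongr
        · rw [norm_div, norm_mul, norm_pow, norm_pow, norm_ofNat, norm_real, Real.norm_eq_abs]
          gcongr
    _ = 2 * |c| * (|g| * C ^ 2 + |g| ^ 2 * C ^ 3 / 24) := by ring

lemma norm_generatingFunction_sub_one_div_le (S : BoundedPlateModel r c T C m q₁ q₂ X) (g : ℝ)
    (hm : 0 < m) (hd : d ≤ 1) (hdm : C * d ≤ m / 2) (hp : p ∈ twoPointDomain r d) :
    ‖generatingFunction c g q₁ q₂ X p - 1 / (p.2 - p.1)‖ ≤
      (4 * |c| * C ^ 2 + C) / (m / 2) + 2 * |c| * (|g| * C ^ 2 + |g| ^ 2 * C ^ 3 / 24) := by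
  have hC : 0 ≤ C := (norm_nonneg _).trans (S.norm_lower_le _ hp.1)
  have hX := S.norm_sub_pos hm hdm hp
  have hne := sub_ne_zero_of_mem_twoPointDomain hp
  rw [generatingFunction_sub_one_div (S.deriv_time _ hp.1) (norm_pos_iff.1 hX) hne]
  refine (norm_sub_le _ _).trans (add_le_add ?_ (S.norm_potential_le g hd hp))
  rw [norm_div, norm_mul, div_le_iff₀ (mul_pos hX (norm_pos_iff.2 hne))]
  calc _ ≤ (4 * |c| * C ^ 2 + C) * ‖p.2 - p.1‖ ^ 2 := S.norm_kinetic_error_le hp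
    _ = (4 * |c| * C ^ 2 + C) / (m / 2) * (m / 2 * ‖p.2 - p.1‖ * ‖p.2 - p.1‖) := by field_simp
    _ ≤ (4 * |c| * C ^ 2 + C) / (m / 2) * (‖X p.2 - X p.1‖ * ‖p.2 - p.1‖) := by
        gcongr
        exact S.mul_norm_sub_le hdm hp

end BoundedPlateModel

theorem PlateModel.exists_twistGenerator {r c T m : ℝ} {q₁ q₂ X : ℂ → ℂ}
    (S : PlateModel r c T q₁ q₂ X) (g : ℝ) (hr : 0 < r) (hm : 0 < m)
    (h : ∀ t : ℝ, m ≤ ‖deriv X t‖) :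
    ∃ R > 0, R ≤ 1 ∧ ∃ d > 0, ∃ M, 0 ≤ M ∧
      TwistGenerator R d M (generatingFunction c g q₁ q₂ X) := by
  obtain ⟨R, hR, hR1, C, hS⟩ := S.exists_boundedPlateModel hr (half_pos hm)
    (fun t ↦ by linarith [h t])
  have hC : 0 ≤ C := (norm_nonneg _).trans (hS.norm_lower_le _ (ofReal_mem_strip hR 0))
  have hd : 0 < min 1 (m / 2 / 2 / (C + 1)) := by positivity
  have hdm : C * min 1 (m / 2 / 2 / (C + 1)) ≤ m / 2 / 2 :=
    calc _ ≤ (C + 1) * (m / 2 / 2 / (C + 1)) := by gcongr; exacts [by linarith, min_le_right _ _]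
      _ = m / 2 / 2 := by field_simp
  obtain ⟨d, M, hd, hM, K⟩ := FermiUlam.exists_twistGenerator hR hd
    (hS.twoPointFunction_generatingFunction (g := g) fun p hp ↦
      norm_pos_iff.1 (hS.norm_sub_pos (half_pos hm) hdm hp))
    fun p hp ↦ hS.norm_generatingFunction_sub_one_div_le g (half_pos hm) (min_le_left _ _) hdm hp
  exact ⟨R / 4, by positivity, by linarith, d, hd, M, hM, K⟩

/-! ### Invariant curves in physical time -/

namespace IsRealLift

variable {x : ℝ → ℝ} {θ θ' : ℝ}

lemma le_sub (hx : IsRealLift x) (h : θ ≤ θ') : 49 / 50 * (θ' - θ) ≤ x θ' - x θ := by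
  linarith [(abs_le.1 (hx.abs_sub_sub_le θ θ' h)).1]

lemma sub_le (hx : IsRealLift x) (h : θ ≤ θ') : x θ' - x θ ≤ 51 / 50 * (θ' - θ) := by
  linarith [(abs_le.1 (hx.abs_sub_sub_le θ θ' h)).2]

lemma strictMono (hx : IsRealLift x) : StrictMono x :=
  fun θ θ' h ↦ by linarith [hx.le_sub h.le]

lemma continuous (hx : IsRealLift x) : Continuous x := by
  refine (LipschitzWith.of_le_add_mul' (51 / 50) fun θ θ' ↦ ?_).continuous
  rw [Real.dist_eq]
  rcases le_total θ θ' with h | h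
  · linarith [hx.strictMono.monotone h, abs_nonneg (θ - θ')]
  · linarith [hx.sub_le h, le_abs_self (θ - θ')]

lemma surjective (hx : IsRealLift x) : Function.Surjective x :=
  surjective_of_map_add one_pos hx.continuous hx.map_add_one

end IsRealLift

namespace IsInvariantCurve

variable {h : ℂ × ℂ → ℂ} {ω : ℝ} {x y : ℝ → ℝ}

lemma le_snd_sub_fst (hxy : IsInvariantCurve h ω x y) (θ : ℝ) :
    49 / 100 * ω ≤ y θ - x θ := by
  linarith [(abs_le.1 (hxy.abs_snd_sub_fst_sub_le θ)).1]

lemma snd_lt_fst_add (hxy : IsInvariantCurve h ω x y) (hω : 0 < ω) (θ : ℝ) :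
    y θ < x (θ + ω) := by
  linarith [(abs_le.1 (hxy.abs_snd_sub_fst_sub_le θ)).2,
    hxy.lift_fst.le_sub (le_add_of_nonneg_right hω.le : θ ≤ θ + ω)]

end IsInvariantCurve

lemma exists_abs_le_of_periodic {f : ℝ → ℝ} {T : ℝ} (hT : T ≠ 0) (hf : Continuous f)
    (hper : Function.Periodic f T) : ∃ B, ∀ t, |f t| ≤ B := by
  obtain ⟨B, hB⟩ := (hper.isBounded_of_continuous hT hf).exists_norm_le
  exact ⟨B, fun t ↦ hB _ ⟨t, rfl⟩⟩

lemma exists_pos_le_of_periodic {f : ℝ → ℝ} {T : ℝ} (hT : T ≠ 0) (hf : Continuous f)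
    (hper : Function.Periodic f T) (hpos : ∀ t, 0 < f t) : ∃ m > 0, ∀ t, m ≤ f t := by
  obtain ⟨_, ⟨t₀, rfl⟩, hmin⟩ :=
    (hper.compact_of_continuous hT hf).exists_isLeast (Set.range_nonempty f)
  exact ⟨f t₀, hpos t₀, fun t ↦ hmin ⟨t, rfl⟩⟩

/-- The velocity at the lower plate of the ball whose free flight joins the lower plate at time `t`
and the upper plate at time `s`. The flight goes upwards if `t < s` and downwards if `s < t`. -/
noncomputable def lowerVelocity (g : ℝ) (f₁ f₂ : ℝ → ℝ) (t s : ℝ) : ℝ :=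
  (f₂ s - f₁ t) / (s - t) + g / 2 * (s - t)

/-- The velocity at the upper plate of the ball whose free flight joins the lower plate at time `t`
and the upper plate at time `s`, in either direction. -/
noncomputable def upperVelocity (g : ℝ) (f₁ f₂ : ℝ → ℝ) (t s : ℝ) : ℝ :=
  (f₂ s - f₁ t) / (s - t) - g / 2 * (s - t)

/-- An invariant curve of the Fermi–Ulam model: a monotone family of bouncing motions which hit the
lower plate at the times `x θ`, `x (θ + ω)`, … and the upper plate at the times `y θ`, `y (θ + ω)`,
…. Each collision preserves the speed relative to the plate. -/
structure IsBouncingCurve (g : ℝ) (f₁ f₂ : ℝ → ℝ) (ω : ℝ) (x y : ℝ → ℝ) : Prop where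
  strictMono_lower : StrictMono x
  strictMono_upper : StrictMono y
  surjective_lower : Function.Surjective x
  surjective_upper : Function.Surjective y
  lower_lt_upper : ∀ θ, x θ < y θ
  upper_lt_lower_add : ∀ θ, y θ < x (θ + ω)
  lower_sq_eq : ∀ θ, (lowerVelocity g f₁ f₂ (x θ) (y θ) - deriv f₁ (x θ)) ^ 2 =
    (lowerVelocity g f₁ f₂ (x θ) (y (θ - ω)) - deriv f₁ (x θ)) ^ 2
  upper_sq_eq : ∀ θ, (upperVelocity g f₁ f₂ (x θ) (y θ) - deriv f₂ (y θ)) ^ 2 =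
    (upperVelocity g f₁ f₂ (x (θ + ω)) (y θ) - deriv f₂ (y θ)) ^ 2

/-- The functions `q₁`, `q₂`, `Z` extend the lower plate, the upper plate and the original time from
the real axis of rescaled time. -/
structure IsComplexification (f₁ f₂ X : ℝ → ℝ) (q₁ q₂ Z : ℂ → ℂ) : Prop where
  lower_ofReal : ∀ θ : ℝ, q₁ θ = f₁ (X θ)
  upper_ofReal : ∀ θ : ℝ, q₂ θ = f₂ (X θ)
  time_ofReal : ∀ θ : ℝ, Z θ = X θ

lemma IsTimeChange.exists_deriv_bounds {s X : ℝ → ℝ} {T c : ℝ} (hX : IsTimeChange s T c X)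
    (hT : T ≠ 0) (hc : 0 < c) (hs : Continuous s) (hper : Function.Periodic s T)
    (hpos : ∀ t, 0 < s t) :
    ∃ m > 0, ∃ M > 0, (∀ θ, m ≤ deriv X θ) ∧ ∀ θ, deriv X θ ≤ M := by
  obtain ⟨m, hm, hle⟩ := exists_pos_le_of_periodic hT hs hper hpos
  obtain ⟨M, hM⟩ := exists_abs_le_of_periodic hT hs hper
  have hM0 : 0 < M := (hpos 0).trans_le ((le_abs_self _).trans (hM 0))
  refine ⟨c * m, by positivity, c * M, by positivity, fun θ ↦ ?_, fun θ ↦ ?_⟩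
  · rw [(hX.hasDerivAt θ).deriv]
    exact mul_le_mul_of_nonneg_left (hle _) hc.le
  · rw [(hX.hasDerivAt θ).deriv]
    exact mul_le_mul_of_nonneg_left ((le_abs_self _).trans (hM _)) hc.le

section Extension

variable {g r c T : ℝ} {f₁ f₂ X : ℝ → ℝ} {q₁ q₂ Z : ℂ → ℂ}

lemma IsTimeChange.exists_plateModel (hX : IsTimeChange (fun t ↦ (f₂ t - f₁ t) ^ 2) T c X)
    (hA₁ : ∀ t, AnalyticAt ℝ f₁ t) (hA₂ : ∀ t, AnalyticAt ℝ f₂ t)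
    (hper₁ : Function.Periodic f₁ T) (hper₂ : Function.Periodic f₂ T) :
    ∃ r > 0, ∃ q₁ q₂ Z, PlateModel r c T q₁ q₂ Z ∧ IsComplexification f₁ f₂ X q₁ q₂ Z := by
  obtain ⟨r₁, hr₁, q₁, hq₁, hqf₁⟩ := exists_stripPeriodic_of_periodic (f := fun θ ↦ f₁ (X θ))
    (fun θ ↦ (hA₁ _).comp (hX.analyticAt θ)) fun θ ↦ by simp only [hX.map_add_one, hper₁ (X θ)]
  obtain ⟨r₂, hr₂, q₂, hq₂, hqf₂⟩ := exists_stripPeriodic_of_periodic (f := fun θ ↦ f₂ (X θ))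
    (fun θ ↦ (hA₂ _).comp (hX.analyticAt θ)) fun θ ↦ by simp only [hX.map_add_one, hper₂ (X θ)]
  obtain ⟨r₃, hr₃, U, hU, hUX⟩ := exists_stripPeriodic_of_periodic (f := fun θ ↦ X θ - T * θ)
    (fun θ ↦ (hX.analyticAt θ).sub (analyticAt_const.mul analyticAt_id))
    fun θ ↦ by simp only [hX.map_add_one]; ring
  have hr : 0 < min r₁ (min r₂ r₃) := by positivity
  replace hq₁ := hq₁.mono (min_le_left r₁ (min r₂ r₃))
  replace hq₂ := hq₂.mono ((min_le_right r₁ _).trans (min_le_left r₂ r₃))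
  replace hU := hU.mono ((min_le_right r₁ _).trans (min_le_right r₂ r₃))
  have hZX (θ : ℝ) : U θ + T * θ = X θ := by rw [hUX]; push_cast; ring
  have hZ : DifferentiableOn ℂ (fun z ↦ U z + T * z) (strip (min r₁ (min r₂ r₃))) :=
    hU.differentiableOn.add (by fun_prop)
  refine ⟨_, hr, q₁, q₂, fun z ↦ U z + T * z,
    ⟨hq₁, hq₂, by simpa only [add_sub_cancel_right] using hU, fun z hz ↦ ?_⟩, hqf₁, hqf₂, hZX⟩
  refine eq_on_strip_of_eq_on_real (g := fun z ↦ c * (q₂ z - q₁ z) ^ 2) hr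
    (hZ.deriv (isOpen_strip _))
    (((hq₂.differentiableOn.sub hq₁.differentiableOn).pow 2).const_mul _) (fun θ ↦ ?_) hz
  rw [deriv_eq_of_eq_on_real (hZ.differentiableAt (strip_mem_nhds (ofReal_mem_strip hr θ))) hZX
    (hX.hasDerivAt θ), hqf₁, hqf₂]
  push_cast
  rfl

namespace PlateModel

variable {τ σ : ℝ}

lemma hasDerivAt_time (S : PlateModel r c T q₁ q₂ Z) (E : IsComplexification f₁ f₂ X q₁ q₂ Z)
    (hr : 0 < r) (θ : ℝ) :
    HasDerivAt Z ((c * (f₂ (X θ) - f₁ (X θ)) ^ 2 : ℝ) : ℂ) θ := by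
  refine (S.differentiableAt_time (ofReal_mem_strip hr θ)).hasDerivAt.congr_deriv ?_
  rw [S.deriv_time _ (ofReal_mem_strip hr θ), E.lower_ofReal, E.upper_ofReal]
  push_cast
  rfl

lemma partialFst_generatingFunction_ofReal (S : PlateModel r c T q₁ q₂ Z)
    (E : IsComplexification f₁ f₂ X q₁ q₂ Z)
    (hX : IsTimeChange (fun t ↦ (f₂ t - f₁ t) ^ 2) T c X) (hr : 0 < r)
    (hf₁ : Differentiable ℝ f₁) (hne : X σ ≠ X τ) :
    partialFst (generatingFunction c g q₁ q₂ Z) (τ, σ) =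
      ((c ^ 2 * (f₂ (X τ) - f₁ (X τ)) ^ 2 *
        ((lowerVelocity g f₁ f₂ (X τ) (X σ) - deriv f₁ (X τ)) ^ 2
          + (2 * g * f₁ (X τ) - deriv f₁ (X τ) ^ 2)) : ℝ) : ℂ) := by
  have hq := (S.lower.differentiableAt (ofReal_mem_strip hr τ)).hasDerivAt
  rw [deriv_eq_of_eq_on_real (S.lower.differentiableAt (ofReal_mem_strip hr τ)) E.lower_ofReal
    ((hf₁ (X τ)).hasDerivAt.comp τ (hX.hasDerivAt τ))] at hq
  rw [partialFst_generatingFunction hq (S.hasDerivAt_time E hr τ)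
    (by rw [E.time_ofReal, E.time_ofReal]; exact_mod_cast sub_ne_zero.2 hne),
    E.time_ofReal, E.time_ofReal, E.lower_ofReal, E.upper_ofReal, lowerVelocity]
  push_cast
  ring

lemma partialSnd_generatingFunction_ofReal (S : PlateModel r c T q₁ q₂ Z)
    (E : IsComplexification f₁ f₂ X q₁ q₂ Z)
    (hX : IsTimeChange (fun t ↦ (f₂ t - f₁ t) ^ 2) T c X) (hr : 0 < r)
    (hf₂ : Differentiable ℝ f₂) (hne : X σ ≠ X τ) :
    partialSnd (generatingFunction c g q₁ q₂ Z) (τ, σ) =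
      ((-(c ^ 2 * (f₂ (X σ) - f₁ (X σ)) ^ 2) *
        ((upperVelocity g f₁ f₂ (X τ) (X σ) - deriv f₂ (X σ)) ^ 2
          + (2 * g * f₂ (X σ) - deriv f₂ (X σ) ^ 2)) : ℝ) : ℂ) := by
  have hq := (S.upper.differentiableAt (ofReal_mem_strip hr σ)).hasDerivAt
  rw [deriv_eq_of_eq_on_real (S.upper.differentiableAt (ofReal_mem_strip hr σ)) E.upper_ofReal
    ((hf₂ (X σ)).hasDerivAt.comp σ (hX.hasDerivAt σ))] at hq
  rw [partialSnd_generatingFunction hq (S.hasDerivAt_time E hr σ)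
    (by rw [E.time_ofReal, E.time_ofReal]; exact_mod_cast sub_ne_zero.2 hne),
    E.time_ofReal, E.time_ofReal, E.lower_ofReal, E.upper_ofReal, upperVelocity]
  push_cast
  ring

end PlateModel

lemma IsInvariantCurve.isBouncingCurve {ω : ℝ} {x y : ℝ → ℝ}
    (hxy : IsInvariantCurve (generatingFunction c g q₁ q₂ Z) ω x y) (hω : 0 < ω)
    (S : PlateModel r c T q₁ q₂ Z) (E : IsComplexification f₁ f₂ X q₁ q₂ Z)
    (hX : IsTimeChange (fun t ↦ (f₂ t - f₁ t) ^ 2) T c X) (hr : 0 < r) (hc : 0 < c) (hT : 0 < T)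
    (hf₁ : Differentiable ℝ f₁) (hf₂ : Differentiable ℝ f₂) (hlt : ∀ t, f₁ t < f₂ t) :
    IsBouncingCurve g f₁ f₂ ω (X ∘ x) (X ∘ y) := by
  have hgap (t : ℝ) : 0 < (f₂ t - f₁ t) ^ 2 := pow_pos (sub_pos.2 (hlt t)) 2
  have hmono : StrictMono X := hX.strictMono hc hgap
  have hfast (θ : ℝ) : x θ < y θ := by linarith [hxy.le_snd_sub_fst θ]
  have hslow (θ : ℝ) : y (θ - ω) < x θ := by simpa using hxy.snd_lt_fst_add hω (θ - ω)
  have hfac (t : ℝ) : c ^ 2 * (f₂ t - f₁ t) ^ 2 ≠ 0 := (mul_pos (pow_pos hc 2) (hgap t)).ne'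
  refine ⟨hmono.comp hxy.lift_fst.strictMono, hmono.comp hxy.lift_snd.strictMono,
    (hX.surjective hT).comp hxy.lift_fst.surjective,
    (hX.surjective hT).comp hxy.lift_snd.surjective, fun θ ↦ hmono (hfast θ),
    fun θ ↦ hmono (hxy.snd_lt_fst_add hω θ), fun θ ↦ ?_, fun θ ↦ ?_⟩
  · have heq := hxy.partialFst_eq θ
    rw [S.partialFst_generatingFunction_ofReal E hX hr hf₁ (hmono (hfast θ)).ne',
      S.partialFst_generatingFunction_ofReal E hX hr hf₁ (hmono (hslow θ)).ne] at heq
    exact add_right_cancel (mul_left_cancel₀ (hfac _) (ofReal_injective heq))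
  · have heq := hxy.partialSnd_eq θ
    rw [S.partialSnd_generatingFunction_ofReal E hX hr hf₂ (hmono (hfast θ)).ne',
      S.partialSnd_generatingFunction_ofReal E hX hr hf₂
        (hmono (hxy.snd_lt_fst_add hω θ)).ne] at heq
    exact add_right_cancel (mul_left_cancel₀ (neg_ne_zero.2 (hfac _)) (ofReal_injective heq))

theorem exists_isBouncingCurve {η : ℝ} (g : ℝ) (hT : 0 < T) (hA₁ : ∀ t, AnalyticAt ℝ f₁ t)
    (hA₂ : ∀ t, AnalyticAt ℝ f₂ t) (hper₁ : Function.Periodic f₁ T)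
    (hper₂ : Function.Periodic f₂ T) (hlt : ∀ t, f₁ t < f₂ t) (hη : 0 < η) :
    ∃ ω x y, IsBouncingCurve g f₁ f₂ ω x y ∧ (∃ ε > 0, ∀ θ, ε ≤ y θ - x θ) ∧
      ∀ θ, x (θ + ω) ≤ x θ + η := by
  have hA (t : ℝ) : AnalyticAt ℝ (fun t ↦ (f₂ t - f₁ t) ^ 2) t := ((hA₂ t).sub (hA₁ t)).pow 2
  have hper : Function.Periodic (fun t ↦ (f₂ t - f₁ t) ^ 2) T := fun t ↦ by
    simp only [hper₁ t, hper₂ t]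
  have hpos (t : ℝ) : 0 < (f₂ t - f₁ t) ^ 2 := pow_pos (sub_pos.2 (hlt t)) 2
  obtain ⟨c, hc, X, hX⟩ := exists_isTimeChange hT hA hper hpos
  obtain ⟨r, hr, q₁, q₂, Z, S, E⟩ := hX.exists_plateModel hA₁ hA₂ hper₁ hper₂
  have hcont : Continuous fun t ↦ (f₂ t - f₁ t) ^ 2 :=
    continuous_iff_continuousAt.2 fun t ↦ (hA t).continuousAt
  obtain ⟨m, hm, M, hM, hlow, hupp⟩ := hX.exists_deriv_bounds hT.ne' hc hcont hper hpos
  have hX' : Differentiable ℝ X := fun θ ↦ (hX.hasDerivAt θ).differentiableAt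
  obtain ⟨R, hR, hR1, d, hd, N, hN, K⟩ := S.exists_twistGenerator g hr hm fun θ ↦ by
    rw [(S.hasDerivAt_time E hr θ).deriv, norm_real, ← (hX.hasDerivAt θ).deriv]
    exact (hlow θ).trans (le_abs_self _)
  obtain ⟨ω, x, y, hω, hωη, hxy⟩ := K.exists_isInvariantCurve hR hR1 hd hN
    (show 0 < η / (2 * M) by positivity)
  refine ⟨ω, X ∘ x, X ∘ y, hxy.isBouncingCurve hω S E hX hr hc hT
    (fun t ↦ (hA₁ t).differentiableAt) (fun t ↦ (hA₂ t).differentiableAt) hlt,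
    ⟨m * (49 / 100 * ω), by positivity, fun θ ↦ ?_⟩, fun θ ↦ ?_⟩
  · have hgap := hxy.le_snd_sub_fst θ
    calc m * (49 / 100 * ω) ≤ m * (y θ - x θ) := by gcongr
      _ ≤ X (y θ) - X (x θ) := mul_sub_le_image_sub_of_le_deriv hX' hlow (by linarith)
  · have hle : θ ≤ θ + ω := le_add_of_nonneg_right hω.le
    rw [lt_div_iff₀ (by positivity)] at hωη
    have hstep : X (x (θ + ω)) - X (x θ) ≤ η :=
      calc X (x (θ + ω)) - X (x θ) ≤ M * (x (θ + ω) - x θ) :=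
            image_sub_le_mul_sub_of_deriv_le hX' hupp (hxy.lift_fst.strictMono.monotone hle)
        _ ≤ M * (51 / 50 * (θ + ω - θ)) := by gcongr; exact hxy.lift_fst.sub_le hle
        _ = 51 / 100 * (ω * (2 * M)) := by ring
        _ ≤ η := by linarith
    exact sub_le_iff_le_add'.1 hstep

end Extension

/-! ### Fast curves are barriers -/

section FlightSpeed

variable {N N₁ N₂ δ δ₁ δ₂ κ B l d a b k : ℝ}

lemma div_add_mul_lt_div_add_mul (hlt : δ₁ < δ₂) (hsign : 0 < δ₁ * δ₂) (h₁ : |δ₁| ≤ d)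
    (h₂ : |δ₂| ≤ d) (hN : |N₂ - N₁| ≤ B * (δ₂ - δ₁)) (hl : l ≤ N₁)
    (hsmall : B * d + |κ| * d ^ 2 < l) : N₂ / δ₂ + κ * δ₂ < N₁ / δ₁ + κ * δ₁ := by
  have hδ : 0 < δ₂ - δ₁ := sub_pos.2 hlt
  have hne₁ : δ₁ ≠ 0 := left_ne_zero_of_mul hsign.ne'
  have hne₂ : δ₂ ≠ 0 := right_ne_zero_of_mul hsign.ne'
  have hd : 0 ≤ d := (abs_nonneg _).trans h₁
  have hplate : (N₂ - N₁) * δ₁ ≤ B * d * (δ₂ - δ₁) :=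
    calc (N₂ - N₁) * δ₁ ≤ |N₂ - N₁| * |δ₁| := (le_abs_self _).trans (abs_mul _ _).le
      _ ≤ B * (δ₂ - δ₁) * d := by gcongr; exact (abs_nonneg _).trans hN
      _ = B * d * (δ₂ - δ₁) := by ring
  have hfield : κ * (δ₁ * δ₂) ≤ |κ| * d ^ 2 :=
    calc κ * (δ₁ * δ₂) ≤ |κ| * (|δ₁| * |δ₂|) := by
          rw [← abs_mul, ← abs_mul]
          exact le_abs_self _
      _ ≤ |κ| * (d * d) := by gcongr
      _ = |κ| * d ^ 2 := by ring
  have hnum : (N₂ - N₁) * δ₁ - N₁ * (δ₂ - δ₁) + κ * (δ₁ * δ₂) * (δ₂ - δ₁) < 0 := by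
    have hprod := mul_lt_mul_of_pos_right (hsmall.trans_le hl) hδ
    linarith [mul_le_mul_of_nonneg_right hfield hδ.le]
  have hdiff : N₂ / δ₂ + κ * δ₂ - (N₁ / δ₁ + κ * δ₁) =
      ((N₂ - N₁) * δ₁ - N₁ * (δ₂ - δ₁) + κ * (δ₁ * δ₂) * (δ₂ - δ₁)) / (δ₁ * δ₂) := by
    field_simp
    ring
  linarith [div_neg_of_neg_of_pos hnum hsign]

lemma div_add_mul_mul_self_pos (hδ : δ ≠ 0) (h : |δ| ≤ d) (hl : l ≤ N)
    (hsmall : |κ| * d ^ 2 < l) : 0 < (N / δ + κ * δ) * δ := by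
  have hfield : |κ * δ ^ 2| ≤ |κ| * d ^ 2 := by
    rw [abs_mul, abs_pow]
    gcongr
  rw [add_mul, div_mul_cancel₀ _ hδ, mul_assoc, ← pow_two]
  linarith [neg_abs_le (κ * δ ^ 2)]

lemma add_eq_two_mul_of_sub_sq_eq (hab : a ≠ b) (h : (a - k) ^ 2 = (b - k) ^ 2) :
    a + b = 2 * k := by
  rcases sq_eq_sq_iff_eq_or_eq_neg.1 h with h | h
  · exact absurd (sub_left_inj.1 h) hab
  · linarith

end FlightSpeed

lemma upperVelocity_eq_add (g : ℝ) (f₁ f₂ : ℝ → ℝ) (t s : ℝ) :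
    upperVelocity g f₁ f₂ t s = (f₂ s - f₁ t) / (s - t) + -(g / 2) * (s - t) := by
  rw [upperVelocity]
  ring

/-- Uniform bounds on the plates and their velocities by `B` and on their distance from below by
`2 * l`, together with a duration `d` so short that the plates and the field displace the ball by
less than `l`. -/
structure PlateBounds (g : ℝ) (f₁ f₂ : ℝ → ℝ) (B l d : ℝ) : Prop where
  differentiable_lower : Differentiable ℝ f₁
  differentiable_upper : Differentiable ℝ f₂
  abs_lower_le : ∀ t, |f₁ t| ≤ B
  abs_upper_le : ∀ t, |f₂ t| ≤ B
  abs_deriv_lower_le : ∀ t, |deriv f₁ t| ≤ B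
  abs_deriv_upper_le : ∀ t, |deriv f₂ t| ≤ B
  two_mul_le_sub : ∀ t, 2 * l ≤ f₂ t - f₁ t
  duration_pos : 0 < d
  duration_small : B * d + |g / 2| * d ^ 2 < l

lemma periodic_deriv {f : ℝ → ℝ} {T : ℝ} (hper : Function.Periodic f T) :
    Function.Periodic (deriv f) T := fun t ↦ by
  rw [← deriv_comp_add_const f T t, funext hper]

lemma exists_plateBounds {T : ℝ} {f₁ f₂ : ℝ → ℝ} (g : ℝ) (hT : T ≠ 0)
    (hA₁ : ∀ t, AnalyticAt ℝ f₁ t) (hA₂ : ∀ t, AnalyticAt ℝ f₂ t)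
    (hper₁ : Function.Periodic f₁ T) (hper₂ : Function.Periodic f₂ T)
    (hlt : ∀ t, f₁ t < f₂ t) : ∃ B l d, PlateBounds g f₁ f₂ B l d := by
  have hbound {f : ℝ → ℝ} (hf : ∀ t, AnalyticAt ℝ f t) (hper : Function.Periodic f T) :
      ∃ B, ∀ t, |f t| ≤ B :=
    exists_abs_le_of_periodic hT (continuous_iff_continuousAt.2 fun t ↦ (hf t).continuousAt) hper
  obtain ⟨B₁, h₁⟩ := hbound hA₁ hper₁
  obtain ⟨B₂, h₂⟩ := hbound hA₂ hper₂
  obtain ⟨B₃, h₃⟩ := hbound (fun t ↦ (hA₁ t).deriv) (periodic_deriv hper₁)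
  obtain ⟨B₄, h₄⟩ := hbound (fun t ↦ (hA₂ t).deriv) (periodic_deriv hper₂)
  obtain ⟨m, hm, hgap⟩ := exists_pos_le_of_periodic (f := fun t ↦ f₂ t - f₁ t) hT
    (continuous_iff_continuousAt.2 fun t ↦ ((hA₂ t).sub (hA₁ t)).continuousAt)
    (fun t ↦ by simp only [hper₁ t, hper₂ t]) fun t ↦ sub_pos.2 (hlt t)
  set B := max (max B₁ B₂) (max B₃ B₄) with hB
  have hB0 : 0 ≤ B := ((abs_nonneg _).trans (h₁ 0)).trans (by simp [hB])
  set d := min 1 (m / 2 / (B + |g / 2| + 1))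
  have hd0 : 0 < d := by positivity
  have hsq : d ^ 2 ≤ d := pow_le_of_le_one hd0.le (min_le_left _ _) two_ne_zero
  refine ⟨B, m / 2, d, fun t ↦ (hA₁ t).differentiableAt, fun t ↦ (hA₂ t).differentiableAt,
    fun t ↦ by simp [hB, h₁ t], fun t ↦ by simp [hB, h₂ t], fun t ↦ by simp [hB, h₃ t],
    fun t ↦ by simp [hB, h₄ t], fun t ↦ by linarith [hgap t], hd0, ?_⟩
  calc B * d + |g / 2| * d ^ 2 ≤ B * d + |g / 2| * d := by gcongr
    _ < (B + |g / 2| + 1) * d := by linarith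
    _ ≤ (B + |g / 2| + 1) * (m / 2 / (B + |g / 2| + 1)) := by gcongr; exact min_le_right _ _
    _ = m / 2 := by field_simp

namespace PlateBounds

variable {g B l d t t₁ t₂ s s₁ s₂ H : ℝ} {f₁ f₂ : ℝ → ℝ}

lemma nonneg (P : PlateBounds g f₁ f₂ B l d) : 0 ≤ B := (abs_nonneg _).trans (P.abs_lower_le 0)

lemma field_small (P : PlateBounds g f₁ f₂ B l d) : |g / 2| * d ^ 2 < l := by
  linarith [P.duration_small, mul_nonneg P.nonneg P.duration_pos.le]

lemma pos (P : PlateBounds g f₁ f₂ B l d) : 0 < l :=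
  lt_of_le_of_lt (by positivity) P.field_small

lemma abs_lower_sub_le (P : PlateBounds g f₁ f₂ B l d) (t s : ℝ) :
    |f₁ t - f₁ s| ≤ B * |t - s| :=
  convex_univ.norm_image_sub_le_of_norm_deriv_le (fun u _ ↦ P.differentiable_lower u)
    (fun u _ ↦ P.abs_deriv_lower_le u) (Set.mem_univ s) (Set.mem_univ t)

lemma abs_upper_sub_le (P : PlateBounds g f₁ f₂ B l d) (t s : ℝ) :
    |f₂ t - f₂ s| ≤ B * |t - s| :=
  convex_univ.norm_image_sub_le_of_norm_deriv_le (fun u _ ↦ P.differentiable_upper u)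
    (fun u _ ↦ P.abs_deriv_upper_le u) (Set.mem_univ s) (Set.mem_univ t)

lemma sub_le (P : PlateBounds g f₁ f₂ B l d) (t s : ℝ) : f₂ s - f₁ t ≤ 2 * B := by
  linarith [(abs_le.1 (P.abs_upper_le s)).2, (abs_le.1 (P.abs_lower_le t)).1]

lemma lower_lt_upper (P : PlateBounds g f₁ f₂ B l d) (t : ℝ) : f₁ t < f₂ t := by
  linarith [P.two_mul_le_sub t, P.pos]

lemma le_sub (P : PlateBounds g f₁ f₂ B l d) (h : |s - t| ≤ d) : l ≤ f₂ s - f₁ t := by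
  have hmove : B * |s - t| ≤ B * d := mul_le_mul_of_nonneg_left h P.nonneg
  have hfield : 0 ≤ |g / 2| * d ^ 2 := by positivity
  linarith [(abs_le.1 (P.abs_upper_sub_le s t)).1, P.two_mul_le_sub t, P.duration_small]

lemma lowerVelocity_lt (P : PlateBounds g f₁ f₂ B l d) (hlt : s₁ < s₂)
    (hsign : 0 < (s₁ - t) * (s₂ - t)) (h₁ : |s₁ - t| ≤ d) (h₂ : |s₂ - t| ≤ d) :
    lowerVelocity g f₁ f₂ t s₂ < lowerVelocity g f₁ f₂ t s₁ := by
  refine div_add_mul_lt_div_add_mul (by linarith) hsign h₁ h₂ ?_ (P.le_sub h₁) P.duration_small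
  simpa [abs_of_pos (sub_pos.2 hlt)] using P.abs_upper_sub_le s₂ s₁

lemma upperVelocity_lt (P : PlateBounds g f₁ f₂ B l d) (hlt : t₁ < t₂)
    (hsign : 0 < (s - t₂) * (s - t₁)) (h₁ : |s - t₁| ≤ d) (h₂ : |s - t₂| ≤ d) :
    upperVelocity g f₁ f₂ t₁ s < upperVelocity g f₁ f₂ t₂ s := by
  rw [upperVelocity_eq_add, upperVelocity_eq_add]
  refine div_add_mul_lt_div_add_mul (by linarith) hsign h₂ h₁ ?_ (P.le_sub h₂)
    (by simpa only [abs_neg] using P.duration_small)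
  simpa [abs_of_pos (sub_pos.2 hlt)] using P.abs_lower_sub_le t₂ t₁

lemma strictAntiOn_lowerVelocity_Ioc (P : PlateBounds g f₁ f₂ B l d) (t : ℝ) :
    StrictAntiOn (lowerVelocity g f₁ f₂ t) (Set.Ioc t (t + d)) := fun s₁ h₁ s₂ h₂ hlt ↦ by
  have hp₁ := sub_pos.2 h₁.1
  have hp₂ := sub_pos.2 h₂.1
  exact P.lowerVelocity_lt hlt (mul_pos hp₁ hp₂) (by rw [abs_of_pos hp₁]; linarith [h₁.2])
    (by rw [abs_of_pos hp₂]; linarith [h₂.2])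

lemma strictAntiOn_lowerVelocity_Ico (P : PlateBounds g f₁ f₂ B l d) (t : ℝ) :
    StrictAntiOn (lowerVelocity g f₁ f₂ t) (Set.Ico (t - d) t) := fun s₁ h₁ s₂ h₂ hlt ↦ by
  have hn₁ := sub_neg.2 h₁.2
  have hn₂ := sub_neg.2 h₂.2
  exact P.lowerVelocity_lt hlt (mul_pos_of_neg_of_neg hn₁ hn₂)
    (by rw [abs_of_neg hn₁]; linarith [h₁.1]) (by rw [abs_of_neg hn₂]; linarith [h₂.1])

lemma strictMonoOn_upperVelocity_Ico (P : PlateBounds g f₁ f₂ B l d) (s : ℝ) :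
    StrictMonoOn (fun t ↦ upperVelocity g f₁ f₂ t s) (Set.Ico (s - d) s) := by
  intro t₁ h₁ t₂ h₂ hlt
  have hp₁ := sub_pos.2 h₁.2
  have hp₂ := sub_pos.2 h₂.2
  exact P.upperVelocity_lt hlt (mul_pos hp₂ hp₁) (by rw [abs_of_pos hp₁]; linarith [h₁.1])
    (by rw [abs_of_pos hp₂]; linarith [h₂.1])

lemma strictMonoOn_upperVelocity_Ioc (P : PlateBounds g f₁ f₂ B l d) (s : ℝ) :
    StrictMonoOn (fun t ↦ upperVelocity g f₁ f₂ t s) (Set.Ioc s (s + d)) := by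
  intro t₁ h₁ t₂ h₂ hlt
  have hn₁ := sub_neg.2 h₁.1
  have hn₂ := sub_neg.2 h₂.1
  exact P.upperVelocity_lt hlt (mul_pos_of_neg_of_neg hn₂ hn₁)
    (by rw [abs_of_neg hn₁]; linarith [h₁.2]) (by rw [abs_of_neg hn₂]; linarith [h₂.2])

lemma lowerVelocity_mul_sub_pos (P : PlateBounds g f₁ f₂ B l d) (hne : s ≠ t) (h : |s - t| ≤ d) :
    0 < lowerVelocity g f₁ f₂ t s * (s - t) :=
  div_add_mul_mul_self_pos (sub_ne_zero.2 hne) h (P.le_sub h) P.field_small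

lemma upperVelocity_mul_sub_pos (P : PlateBounds g f₁ f₂ B l d) (hne : s ≠ t) (h : |s - t| ≤ d) :
    0 < upperVelocity g f₁ f₂ t s * (s - t) := by
  rw [upperVelocity_eq_add]
  exact div_add_mul_mul_self_pos (sub_ne_zero.2 hne) h (P.le_sub h)
    (by simpa only [abs_neg] using P.field_small)

lemma le_lowerVelocity (P : PlateBounds g f₁ f₂ B l d) (hlt : t < s) (hd : s - t ≤ d)
    (hH : (H + |g / 2| * d) * (s - t) ≤ l) : H ≤ lowerVelocity g f₁ f₂ t s := by
  have hst : 0 < s - t := sub_pos.2 hlt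
  have hN := P.le_sub (abs_of_pos hst ▸ hd)
  have hfield : |g / 2 * (s - t)| ≤ |g / 2| * d := by
    rw [abs_mul, abs_of_pos hst]
    gcongr
  have hquot : H + |g / 2| * d ≤ (f₂ s - f₁ t) / (s - t) := (le_div_iff₀ hst).2 (hH.trans hN)
  rw [lowerVelocity]
  linarith [neg_abs_le (g / 2 * (s - t))]

end PlateBounds

namespace IsBouncingCurve

variable {g B l d ω t t' s v θ : ℝ} {f₁ f₂ x y : ℝ → ℝ}

section Flights

variable (K : IsBouncingCurve g f₁ f₂ ω x y) (hd : ∀ θ, x (θ + ω) ≤ x θ + d) (θ : ℝ)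
include K hd

lemma upper_mem_Ioc : y θ ∈ Set.Ioc (x θ) (x θ + d) :=
  ⟨K.lower_lt_upper θ, (K.upper_lt_lower_add θ).le.trans (hd θ)⟩

lemma lower_mem_Ico : x θ ∈ Set.Ico (y θ - d) (y θ) :=
  ⟨by linarith [(K.upper_mem_Ioc hd θ).2], K.lower_lt_upper θ⟩

lemma lower_add_mem_Ioc : x (θ + ω) ∈ Set.Ioc (y θ) (y θ + d) :=
  ⟨K.upper_lt_lower_add θ, by linarith [hd θ, K.lower_lt_upper θ]⟩

lemma upper_sub_mem_Ico : y (θ - ω) ∈ Set.Ico (x θ - d) (x θ) := by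
  have h := K.lower_add_mem_Ioc hd (θ - ω)
  rw [sub_add_cancel] at h
  exact ⟨by linarith [h.2], h.1⟩

end Flights

lemma lowerVelocity_add (K : IsBouncingCurve g f₁ f₂ ω x y) (P : PlateBounds g f₁ f₂ B l d)
    (hd : ∀ θ, x (θ + ω) ≤ x θ + d) (θ : ℝ) :
    lowerVelocity g f₁ f₂ (x θ) (y θ) + lowerVelocity g f₁ f₂ (x θ) (y (θ - ω)) =
      2 * deriv f₁ (x θ) := by
  have hup := K.upper_mem_Ioc hd θ
  have hdown := K.upper_sub_mem_Ico hd θ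
  have hpos := pos_of_mul_pos_left (P.lowerVelocity_mul_sub_pos hup.1.ne'
    (abs_le.2 ⟨by linarith [hup.1, hup.2], by linarith [hup.2]⟩)) (sub_pos.2 hup.1).le
  have hneg := neg_of_mul_pos_left (P.lowerVelocity_mul_sub_pos hdown.2.ne
    (abs_le.2 ⟨by linarith [hdown.1], by linarith [hup.1, hup.2, hdown.2]⟩)) (sub_neg.2 hdown.2).le
  exact add_eq_two_mul_of_sub_sq_eq (hneg.trans hpos).ne' (K.lower_sq_eq θ)

lemma upperVelocity_add (K : IsBouncingCurve g f₁ f₂ ω x y) (P : PlateBounds g f₁ f₂ B l d)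
    (hd : ∀ θ, x (θ + ω) ≤ x θ + d) (θ : ℝ) :
    upperVelocity g f₁ f₂ (x θ) (y θ) + upperVelocity g f₁ f₂ (x (θ + ω)) (y θ) =
      2 * deriv f₂ (y θ) := by
  have hup := K.lower_mem_Ico hd θ
  have hdown := K.lower_add_mem_Ioc hd θ
  have hpos := pos_of_mul_pos_left (P.upperVelocity_mul_sub_pos hup.2.ne'
    (abs_le.2 ⟨by linarith [hup.1, hup.2], by linarith [hup.1]⟩)) (sub_pos.2 hup.2).le
  have hneg := neg_of_mul_pos_left (P.upperVelocity_mul_sub_pos hdown.1.ne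
    (abs_le.2 ⟨by linarith [hdown.2], by linarith [hup.1, hup.2, hdown.1]⟩)) (sub_neg.2 hdown.1).le
  exact add_eq_two_mul_of_sub_sq_eq (hneg.trans hpos).ne' (K.upper_sq_eq θ)

lemma upper_lt_of_lowerVelocity_lt (K : IsBouncingCurve g f₁ f₂ ω x y)
    (P : PlateBounds g f₁ f₂ B l d) (hd : ∀ θ, x (θ + ω) ≤ x θ + d)
    (hs : s ∈ Set.Ioc (x θ) (x θ + d))
    (hv : lowerVelocity g f₁ f₂ (x θ) s < lowerVelocity g f₁ f₂ (x θ) (y θ)) : y θ < s :=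
  ((P.strictAntiOn_lowerVelocity_Ioc _).lt_iff_gt hs (K.upper_mem_Ioc hd θ)).1 hv

lemma lower_add_lt_of_lt_lower (K : IsBouncingCurve g f₁ f₂ ω x y)
    (P : PlateBounds g f₁ f₂ B l d) (hd : ∀ θ, x (θ + ω) ≤ x θ + d)
    (ht : t ∈ Set.Ico (y θ - d) (y θ)) (ht' : t' ∈ Set.Ioc (y θ) (y θ + d)) (hlt : t < x θ)
    (hadd : upperVelocity g f₁ f₂ t (y θ) + upperVelocity g f₁ f₂ t' (y θ) = 2 * deriv f₂ (y θ)) :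
    x (θ + ω) < t' := by
  have hup := P.strictMonoOn_upperVelocity_Ico _ ht (K.lower_mem_Ico hd θ) hlt
  beta_reduce at hup
  refine ((P.strictMonoOn_upperVelocity_Ioc _).lt_iff_lt (K.lower_add_mem_Ioc hd θ) ht').1 ?_
  linarith [K.upperVelocity_add P hd θ]

lemma lt_lowerVelocity_of_lt_upper_sub (K : IsBouncingCurve g f₁ f₂ ω x y)
    (P : PlateBounds g f₁ f₂ B l d) (hd : ∀ θ, x (θ + ω) ≤ x θ + d)
    (hs : s ∈ Set.Ico (x θ - d) (x θ)) (hlt : s < y (θ - ω))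
    (hadd : lowerVelocity g f₁ f₂ (x θ) s + v = 2 * deriv f₁ (x θ)) :
    v < lowerVelocity g f₁ f₂ (x θ) (y θ) := by
  have hdown := P.strictAntiOn_lowerVelocity_Ico _ hs (K.upper_sub_mem_Ico hd θ) hlt
  linarith [K.lowerVelocity_add P hd θ]

lemma exists_lowerVelocity_le (K : IsBouncingCurve g f₁ f₂ ω x y) (P : PlateBounds g f₁ f₂ B l d)
    (hd : ∀ θ, x (θ + ω) ≤ x θ + d) (hε : ∃ ε > 0, ∀ θ, ε ≤ y θ - x θ) :
    ∃ C, ∀ θ, lowerVelocity g f₁ f₂ (x θ) (y θ) ≤ C := by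
  obtain ⟨ε, hε, hle⟩ := hε
  refine ⟨2 * B / ε + |g / 2| * d, fun θ ↦ add_le_add ?_ ?_⟩
  · exact div_le_div₀ (mul_nonneg zero_le_two P.nonneg) (P.sub_le _ _) hε (hle θ)
  · have hpos : 0 ≤ y θ - x θ := (sub_pos.2 (K.lower_lt_upper θ)).le
    have hshort : y θ - x θ ≤ d := by linarith [(K.upper_mem_Ioc hd θ).2]
    gcongr
    exact le_abs_self _

end IsBouncingCurve

end FermiUlam

namespace IsFUTrajectory

open FermiUlam

variable {g B l d ω H : ℝ} {f₁ f₂ x y : ℝ → ℝ} {t v tt vv : ℕ → ℝ}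

lemma lower_lt_upper (h : IsFUTrajectory g f₁ f₂ t v tt vv) (n : ℕ) : t n < tt n :=
  (h n).2.2.1

lemma upper_lt_lower_succ (h : IsFUTrajectory g f₁ f₂ t v tt vv) (n : ℕ) : tt n < t (n + 1) :=
  (h n).2.2.2.1

lemma lowerVelocity_eq (h : IsFUTrajectory g f₁ f₂ t v tt vv) (n : ℕ) :
    lowerVelocity g f₁ f₂ (t n) (tt n) = v n := by
  obtain ⟨-, -, hlt, -, hflight, -⟩ := h n
  have hne : tt n - t n ≠ 0 := (sub_pos.2 hlt).ne'
  rw [lowerVelocity, hflight]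
  field_simp
  ring

lemma upperVelocity_eq (h : IsFUTrajectory g f₁ f₂ t v tt vv) (n : ℕ) :
    upperVelocity g f₁ f₂ (t (n + 1)) (tt n) = vv n := by
  obtain ⟨-, -, -, hlt, -, -, -, hflight, -⟩ := h n
  have hne : tt n - t (n + 1) ≠ 0 := (sub_neg.2 hlt).ne
  rw [upperVelocity, hflight]
  field_simp
  ring

lemma upperVelocity_add (h : IsFUTrajectory g f₁ f₂ t v tt vv) (n : ℕ) :
    upperVelocity g f₁ f₂ (t n) (tt n) + upperVelocity g f₁ f₂ (t (n + 1)) (tt n) =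
      2 * deriv f₂ (tt n) := by
  have hv := h.lowerVelocity_eq n
  obtain ⟨-, -, -, -, -, -, hreflect, -⟩ := h n
  rw [h.upperVelocity_eq, upperVelocity]
  rw [lowerVelocity] at hv
  linarith

lemma lowerVelocity_add (h : IsFUTrajectory g f₁ f₂ t v tt vv) (n : ℕ) :
    lowerVelocity g f₁ f₂ (t (n + 1)) (tt n) + v (n + 1) = 2 * deriv f₁ (t (n + 1)) := by
  have hvv := h.upperVelocity_eq n
  obtain ⟨-, -, -, -, -, -, hreflect, -, -, hsucc⟩ := h n
  rw [upperVelocity] at hvv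
  rw [lowerVelocity]
  linarith

lemma field_mul_sub_le (h : IsFUTrajectory g f₁ f₂ t v tt vv) (P : PlateBounds g f₁ f₂ B l d)
    (n : ℕ) : g * (t (n + 1) - 2 * tt n + t n) ≤ |g| + 4 * B := by
  obtain ⟨hv, hvv, hlt, hlt', hup, -, -, hdown, -⟩ := h n
  have ha : 0 < tt n - t n := sub_pos.2 hlt
  have hb : 0 < t (n + 1) - tt n := sub_pos.2 hlt'
  rcases le_total 0 g with hg | hg
  · have hsq : g * (t (n + 1) - tt n) ≤ g * (1 + (t (n + 1) - tt n) ^ 2) :=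
      mul_le_mul_of_nonneg_left (by nlinarith [sq_nonneg (t (n + 1) - tt n - 1)]) hg
    rw [abs_of_nonneg hg]
    linarith [P.sub_le (t (n + 1)) (tt n), P.nonneg, mul_pos (neg_pos.2 hvv) hb,
      mul_nonneg hg ha.le]
  · have hsq : -g * (tt n - t n) ≤ -g * (1 + (tt n - t n) ^ 2) :=
      mul_le_mul_of_nonneg_left (by nlinarith [sq_nonneg (tt n - t n - 1)]) (neg_nonneg.2 hg)
    rw [abs_of_nonpos hg]
    linarith [P.sub_le (t n) (tt n), P.nonneg, mul_pos hv ha, mul_nonneg (neg_nonneg.2 hg) hb.le]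

lemma succ_le (h : IsFUTrajectory g f₁ f₂ t v tt vv) (P : PlateBounds g f₁ f₂ B l d) (n : ℕ) :
    v (n + 1) ≤ v n + (|g| + 8 * B) := by
  have hfield := h.field_mul_sub_le P n
  obtain ⟨-, -, -, -, -, -, -, -, -, hsucc⟩ := h n
  linarith [(abs_le.1 (P.abs_deriv_lower_le (t (n + 1)))).2,
    (abs_le.1 (P.abs_deriv_upper_le (tt n))).1]

lemma upper_le_lower_add (h : IsFUTrajectory g f₁ f₂ t v tt vv) (P : PlateBounds g f₁ f₂ B l d)
    {n : ℕ} (hv : 2 * B / d + |g| * d ≤ v n) : tt n ≤ t n + d := by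
  obtain ⟨-, -, -, -, -, hfirst, -⟩ := h n
  have hd := P.duration_pos
  have hf := P.differentiable_upper.continuous
  have hcont : ContinuousOn (fun s ↦ v n * (s - t n) - g / 2 * (s - t n) ^ 2 - (f₂ s - f₁ (t n)))
      (Set.Icc (t n) (t n + d)) := by fun_prop
  have hreach : 2 * B ≤ v n * d - g / 2 * d ^ 2 := by
    have hmul := mul_le_mul_of_nonneg_right hv hd.le
    rw [add_mul, div_mul_cancel₀ _ hd.ne'] at hmul
    have hg : g / 2 * d ^ 2 ≤ |g| * d * d := by nlinarith [le_abs_self g, abs_nonneg g, sq_nonneg d]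
    linarith
  obtain ⟨s, hs, hzero⟩ := intermediate_value_Ioc (by linarith) hcont
    (show (0 : ℝ) ∈ Set.Ioc _ _ from ⟨by simpa using P.lower_lt_upper (t n),
      by simpa using (P.sub_le (t n) (t n + d)).trans hreach⟩)
  exact (hfirst s hs.1 (sub_eq_zero.1 hzero).symm).trans hs.2

lemma lower_succ_le_upper_add (h : IsFUTrajectory g f₁ f₂ t v tt vv)
    (P : PlateBounds g f₁ f₂ B l d) {n : ℕ} (hvv : 2 * B / d + |g| * d ≤ -vv n) :
    t (n + 1) ≤ tt n + d := by
  obtain ⟨-, -, -, -, -, -, -, -, hfirst, -⟩ := h n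
  have hd := P.duration_pos
  have hf := P.differentiable_lower.continuous
  have hcont : ContinuousOn
      (fun s ↦ -vv n * (s - tt n) + g / 2 * (s - tt n) ^ 2 - (f₂ (tt n) - f₁ s))
      (Set.Icc (tt n) (tt n + d)) := by fun_prop
  have hreach : 2 * B ≤ -vv n * d + g / 2 * d ^ 2 := by
    have hmul := mul_le_mul_of_nonneg_right hvv hd.le
    rw [add_mul, div_mul_cancel₀ _ hd.ne'] at hmul
    have hg : -(g / 2 * d ^ 2) ≤ |g| * d * d := by
      nlinarith [neg_abs_le g, abs_nonneg g, sq_nonneg d]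
    linarith
  obtain ⟨s, hs, hzero⟩ := intermediate_value_Ioc (by linarith) hcont
    (show (0 : ℝ) ∈ Set.Ioc _ _ from ⟨by simpa using P.lower_lt_upper (tt n),
      by simpa using (P.sub_le (tt n + d) (tt n)).trans hreach⟩)
  exact (hfirst s hs.1 (sub_eq_zero.1 hzero).symm).trans hs.2

lemma short_flights (h : IsFUTrajectory g f₁ f₂ t v tt vv) (P : PlateBounds g f₁ f₂ B l d)
    {n : ℕ} (hv : 2 * B / d + 2 * |g| * d + 2 * B ≤ v n) :
    tt n ≤ t n + d ∧ t (n + 1) ≤ tt n + d := by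
  have hd := P.duration_pos
  have hgd : 0 ≤ |g| * d := by positivity
  have hup := h.upper_le_lower_add P (by linarith [P.nonneg] : 2 * B / d + |g| * d ≤ v n)
  refine ⟨hup, h.lower_succ_le_upper_add P ?_⟩
  obtain ⟨-, -, hlt, -, -, -, hreflect, -⟩ := h n
  have hfield : g * (tt n - t n) ≤ |g| * d :=
    calc g * (tt n - t n) ≤ |g| * (tt n - t n) :=
          mul_le_mul_of_nonneg_right (le_abs_self g) (sub_pos.2 hlt).le
      _ ≤ |g| * d := by gcongr; linarith
  linarith [(abs_le.1 (P.abs_deriv_upper_le (tt n))).2]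

lemma succ_lt_lowerVelocity (h : IsFUTrajectory g f₁ f₂ t v tt vv)
    (P : PlateBounds g f₁ f₂ B l d) (K : IsBouncingCurve g f₁ f₂ ω x y)
    (hd : ∀ θ, x (θ + ω) ≤ x θ + d) {n : ℕ} (hup : tt n ≤ t n + d) (hdown : t (n + 1) ≤ tt n + d)
    (hv : ∀ θ, x θ = t n → v n < lowerVelocity g f₁ f₂ (x θ) (y θ)) {ψ : ℝ}
    (hψ : x ψ = t (n + 1)) : v (n + 1) < lowerVelocity g f₁ f₂ (x ψ) (y ψ) := by
  have hlt := h.lower_lt_upper n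
  have hlt' := h.upper_lt_lower_succ n
  obtain ⟨θ, hθ⟩ := K.surjective_lower (t n)
  obtain ⟨φ, hφ⟩ := K.surjective_upper (tt n)
  have hlate : y θ < y φ := by
    rw [hφ]
    refine K.upper_lt_of_lowerVelocity_lt P hd (by rw [hθ]; exact ⟨hlt, hup⟩) ?_
    rw [hθ, h.lowerVelocity_eq, ← hθ]
    exact hv θ hθ
  have hθφ : t n < x φ := hθ ▸ K.strictMono_lower (K.strictMono_upper.lt_iff_lt.1 hlate)
  have hlate' : x (φ + ω) < x ψ := by
    rw [hψ]
    refine K.lower_add_lt_of_lt_lower P hd ?_ ?_ hθφ ?_ <;> rw [hφ]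
    exacts [⟨by linarith, hlt⟩, ⟨hlt', hdown⟩, h.upperVelocity_add n]
  have hφψ : tt n < y (ψ - ω) := by
    have hlt := K.strictMono_lower.lt_iff_lt.1 hlate'
    exact hφ ▸ K.strictMono_upper (by linarith)
  refine K.lt_lowerVelocity_of_lt_upper_sub P hd ?_ hφψ ?_ <;> rw [hψ]
  exacts [⟨by linarith, hlt'⟩, h.lowerVelocity_add n]

lemma lt_lowerVelocity (h : IsFUTrajectory g f₁ f₂ t v tt vv)
    (P : PlateBounds g f₁ f₂ B l d) (K : IsBouncingCurve g f₁ f₂ ω x y)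
    (hd : ∀ θ, x (θ + ω) ≤ x θ + d)
    (hH : ∀ θ, H ≤ lowerVelocity g f₁ f₂ (x θ) (y θ)) (hv : v 0 < H)
    (hstep : 2 * B / d + 2 * |g| * d + 2 * B + (|g| + 8 * B) ≤ H) (n : ℕ) :
    ∀ θ, x θ = t n → v n < lowerVelocity g f₁ f₂ (x θ) (y θ) := by
  induction n with
  | zero => exact fun θ _ ↦ hv.trans_le (hH θ)
  | succ n ih =>
    intro ψ hψ
    rcases lt_or_ge (v n) (2 * B / d + 2 * |g| * d + 2 * B) with hslow | hfast
    · linarith [h.succ_le P n, hH ψ]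
    · obtain ⟨hup, hdown⟩ := h.short_flights P hfast
      exact h.succ_lt_lowerVelocity P K hd hup hdown ih hψ

end IsFUTrajectory

open FermiUlam in
theorem fermi_ulam_external_field_bounded_velocity_general
    (g T : ℝ) (hT : 0 < T) (f₁ f₂ : ℝ → ℝ)
    (hA₁ : ∀ x : ℝ, AnalyticAt ℝ f₁ x) (hA₂ : ∀ x : ℝ, AnalyticAt ℝ f₂ x)
    (hper₁ : Function.Periodic f₁ T) (hper₂ : Function.Periodic f₂ T)
    (hlt : ∀ s : ℝ, f₁ s < f₂ s)
    (t v tt vv : ℕ → ℝ) (htraj : IsFUTrajectory g f₁ f₂ t v tt vv) :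
    ∃ C : ℝ, ∀ n : ℕ, v n ≤ C := by
  obtain ⟨B, l, d, P⟩ := exists_plateBounds g hT.ne' hA₁ hA₂ hper₁ hper₂ hlt
  obtain ⟨H, hH⟩ := exists_gt (max |v 0| (2 * B / d + 2 * |g| * d + 2 * B + (|g| + 8 * B)))
  obtain ⟨hHv, hHstep⟩ := max_lt_iff.1 hH
  have hpos : 0 < H + |g / 2| * d := by
    linarith [abs_nonneg (v 0), mul_nonneg (abs_nonneg (g / 2)) P.duration_pos.le]
  obtain ⟨ω, x, y, K, hε, hη⟩ := exists_isBouncingCurve g hT hA₁ hA₂ hper₁ hper₂ hlt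
    (lt_min P.duration_pos (div_pos P.pos hpos))
  have hd (θ : ℝ) : x (θ + ω) ≤ x θ + d := (hη θ).trans (by gcongr; exact min_le_left _ _)
  have hfast (θ : ℝ) : H ≤ lowerVelocity g f₁ f₂ (x θ) (y θ) := by
    have hflight := K.upper_mem_Ioc hη θ
    refine P.le_lowerVelocity hflight.1 (by linarith [(K.upper_mem_Ioc hd θ).2]) ?_
    rw [mul_comm, ← le_div_iff₀ hpos]
    linarith [hflight.2, min_le_right d (l / (H + |g / 2| * d))]
  obtain ⟨C, hC⟩ := K.exists_lowerVelocity_le P hd hε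
  refine ⟨C, fun n ↦ ?_⟩
  obtain ⟨θ, hθ⟩ := K.surjective_lower (t n)
  exact (htraj.lt_lowerVelocity P K hd hfast ((le_abs_self _).trans_lt hHv) hHstep.le n θ
    hθ).le.trans (hC θ)

/-- Theorem 2,1: in the Fermi–Ulam model in an external field with analytic,
`T`-periodic plate motions which never touch, every trajectory has bounded
velocity. -/
theorem fermi_ulam_external_field_bounded_velocity
    (g T : ℝ) (hg : 0 ≤ g) (hT : 0 < T) (f₁ f₂ : ℝ → ℝ)
    (hA₁ : ∀ x : ℝ, AnalyticAt ℝ f₁ x) (hA₂ : ∀ x : ℝ, AnalyticAt ℝ f₂ x)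
    (hper₁ : Function.Periodic f₁ T) (hper₂ : Function.Periodic f₂ T)
    (hlt : ∀ s : ℝ, f₁ s < f₂ s)
    (t v tt vv : ℕ → ℝ) (htraj : IsFUTrajectory g f₁ f₂ t v tt vv) :
    ∃ C : ℝ, ∀ n : ℕ, v n ≤ C :=
  fermi_ulam_external_field_bounded_velocity_general g T hT f₁ f₂ hA₁ hA₂ hper₁ hper₂ hlt
    t v tt vv htraj
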